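/- In the antithetic Milstein setting, let X^f(t) and X^a(t) denote the piecewise linear interpolants of the fine and antithetic paths on the fine grid of spacing Δt/2, let X^c(t) denote the piecewise linear interpolant of the coarse path on the coarse grid of spacing Δt, and let X̄(t) = (X^f(t) + X^a(t))/2. Then for every real p ≥ 2 there exists a constant K_p, depending only on p, T, f and g, such that for every N ≥ 1 (with Δt = T/N): sup_{0 ≤ t ≤ T} E[ ‖X^f(t) − X^a(t)‖^p ] ≤ K_p · Δt^{p/2} and sup_{0 ≤ t ≤ T} E[ ‖X̄(t) − X^c(t)‖^p ] ≤ K_p · Δt^p. -/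

import Mathlib

open MeasureTheory ProbabilityTheory

/-- `h_{ijk}(x) = ½ ∑_l g_{lj}(x) ∂g_{ik}/∂x_l (x)`. -/
noncomputable def milsteinH {d m : ℕ} (g : (Fin d → ℝ) → Fin d → Fin m → ℝ)
    (x : Fin d → ℝ) (i : Fin d) (j k : Fin m) : ℝ :=
  1 / 2 * ∑ l : Fin d, g x l j * fderiv ℝ (fun y => g y i k) x (Pi.single l 1)

/-- One step of the Milstein scheme with the Lévy areas omitted:
`x_i ↦ x_i + f_i(x) dt + ∑_j g_{ij}(x) dw_j + ∑_{j,k} h_{ijk}(x)(dw_j dw_k − δ_{jk} dt)`. -/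
noncomputable def milsteinStep {d m : ℕ} (f : (Fin d → ℝ) → Fin d → ℝ)
    (g : (Fin d → ℝ) → Fin d → Fin m → ℝ) (dt : ℝ)
    (x : Fin d → ℝ) (dw : Fin m → ℝ) : Fin d → ℝ :=
  fun i => x i + f x i * dt + (∑ j : Fin m, g x i j * dw j)
    + ∑ j : Fin m, ∑ k : Fin m,
        milsteinH g x i j k * (dw j * dw k - if j = k then dt else 0)

/-- Piecewise linear interpolant of a discrete path `X : ℕ → ℝ^d` on the uniform grid of
spacing `s`: on `[k s, (k+1) s]`, `X(t) = (1−λ) X_k + λ X_{k+1}` with `λ = (t − k s)/s`. -/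
noncomputable def plInterp {d : ℕ} (s : ℝ) (X : ℕ → Fin d → ℝ) (t : ℝ) : Fin d → ℝ :=
  X (⌊t / s⌋.toNat) + ((t - (⌊t / s⌋.toNat : ℝ) * s) / s) • (X (⌊t / s⌋.toNat + 1) - X (⌊t / s⌋.toNat))

/-! With `r = √Δt`, every error is measured in all `L^q` norms at once, uniformly over all
instances of the setting. Two half-steps of the fine scheme make up one coarse step, a Lévy-type
term and a local error: the Lévy-type term is antisymmetric in the two increments and is a
martingale difference of size `r ^ 2`, and the local error is the sum of a remainder of size
`r ^ 4` and a martingale difference of size `r ^ 3`. By a discrete Gronwall argument for even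
moments, errors `O(r ^ (k + 2))` and martingale differences `O(r ^ (k + 1))` accumulate to a global
error `O(r ^ k)`. With `k = 1`, both fine paths are within `O(r)` of the coarse one, hence of each
other. Averaging the two cancels the Lévy terms up to a martingale difference of size `r ^ 3`, and
replaces the coefficients along the two paths by their midpoints, which differ from the
coefficients at the average by the second order `O(r ^ 2)`; so the average is within `O(r ^ 2)` of
the coarse path. At half nodes, where the coarse path is interpolated, the half-steps average to
half of the coarse increment up to `O(r ^ 2)`. -/

namespace AntitheticMilstein

open scoped NNReal ENNReal

section BoundedInLp

variable {J : Type*} {Ω : J → Type*} [∀ j, MeasurableSpace (Ω j)]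
  {E F G : Type*} [NormedAddCommGroup E] [NormedSpace ℝ E] [NormedAddCommGroup F]
  [NormedSpace ℝ F] [NormedAddCommGroup G] [NormedSpace ℝ G]

/-- The families of random variables `Y j`, each on its own measure space, whose `L^q` norms
are at most a constant multiple of `ρ q j` for every finite `q`, the constant depending on `q` but
not on the index `j`. -/
noncomputable def boundedInLp (E : Type*) [NormedAddCommGroup E] [NormedSpace ℝ E]
    (μ : ∀ j, Measure (Ω j)) (ρ : ℝ≥0 → J → ℝ≥0∞) : Submodule ℝ (∀ j, Ω j → E) where
  carrier := {Y | (∀ j, AEStronglyMeasurable (Y j) (μ j)) ∧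
    ∀ q : ℝ≥0, ∃ K : ℝ≥0, ∀ j, eLpNorm (Y j) q (μ j) ≤ K * ρ q j}
  add_mem' := by
    rintro Y Z ⟨hY, hYK⟩ ⟨hZ, hZK⟩
    refine ⟨fun j => (hY j).add (hZ j), fun q => ?_⟩
    obtain ⟨K, hK⟩ := hYK q
    obtain ⟨L, hL⟩ := hZK q
    have hC : (ENNReal.LpAddConst q).toNNReal = ENNReal.LpAddConst q :=
      ENNReal.coe_toNNReal (ENNReal.LpAddConst_lt_top _).ne
    refine ⟨(ENNReal.LpAddConst q).toNNReal * (K + L), fun j => ?_⟩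
    calc eLpNorm (Y j + Z j) q (μ j)
        ≤ ENNReal.LpAddConst q * (eLpNorm (Y j) q (μ j) + eLpNorm (Z j) q (μ j)) :=
          eLpNorm_add_le' (hY j) (hZ j) q
      _ ≤ ENNReal.LpAddConst q * (K * ρ q j + L * ρ q j) := by gcongr <;> solve_by_elim
      _ = _ := by push_cast; rw [hC]; ring
  zero_mem' := ⟨fun _ => aestronglyMeasurable_zero, fun _ => ⟨0, fun _ => by simp⟩⟩
  smul_mem' := by
    rintro a Y ⟨hY, hYK⟩
    refine ⟨fun j => (hY j).const_smul a, fun q => ?_⟩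
    obtain ⟨K, hK⟩ := hYK q
    refine ⟨‖a‖₊ * K, fun j => ?_⟩
    rw [Pi.smul_apply, eLpNorm_const_smul, ENNReal.coe_mul, mul_assoc, ← enorm_eq_nnnorm]
    gcongr
    exact hK j

/-- The families of random variables which are `O(r ^ k)` in every `L^q`. -/
noncomputable abbrev lpBigO (E : Type*) [NormedAddCommGroup E] [NormedSpace ℝ E]
    (μ : ∀ j, Measure (Ω j)) (r : J → ℝ≥0) (k : ℕ) : Submodule ℝ (∀ j, Ω j → E) :=
  boundedInLp E μ fun _ j => (r j : ℝ≥0∞) ^ k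

variable {μ : ∀ j, Measure (Ω j)} {ρ ρ' : ℝ≥0 → J → ℝ≥0∞} {Y : ∀ j, Ω j → E} {Z : ∀ j, Ω j → F}
  {r : J → ℝ≥0} {R : ℝ≥0} {k l : ℕ}

theorem boundedInLp_mono (h : ∀ q, ∃ K : ℝ≥0, ∀ j, ρ q j ≤ K * ρ' q j) :
    boundedInLp E μ ρ ≤ boundedInLp E μ ρ' := by
  rintro Y ⟨hY, hYK⟩
  refine ⟨hY, fun q => ?_⟩
  obtain ⟨K, hK⟩ := hYK q
  obtain ⟨L, hL⟩ := h q
  refine ⟨K * L, fun j => (hK j).trans ?_⟩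
  rw [ENNReal.coe_mul, mul_assoc]
  gcongr
  exact hL j

theorem lpBigO_anti (hr : ∀ j, r j ≤ R) (hkl : k ≤ l) : lpBigO E μ r l ≤ lpBigO E μ r k := by
  refine boundedInLp_mono fun _ => ⟨R ^ (l - k), fun j => ?_⟩
  norm_cast
  calc r j ^ l = r j ^ (l - k) * r j ^ k := by rw [← pow_add, Nat.sub_add_cancel hkl]
    _ ≤ R ^ (l - k) * r j ^ k := by gcongr; exact hr j

theorem mem_boundedInLp_of_norm_le (hZ : Z ∈ boundedInLp F μ ρ)
    (hY : ∀ j, AEStronglyMeasurable (Y j) (μ j)) (C : ℝ≥0)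
    (h : ∀ j ω, ‖Y j ω‖ ≤ C * ‖Z j ω‖) : Y ∈ boundedInLp E μ ρ := by
  refine ⟨hY, fun q => ?_⟩
  obtain ⟨K, hK⟩ := hZ.2 q
  refine ⟨C * K, fun j => ?_⟩
  calc eLpNorm (Y j) q (μ j) ≤ C * eLpNorm (Z j) q (μ j) :=
        eLpNorm_le_nnreal_smul_eLpNorm_of_ae_le_mul (.of_forall (h j)) q
    _ ≤ C * (K * ρ q j) := by gcongr; exact hK j
    _ = _ := by push_cast; ring

theorem norm_mem_boundedInLp (hY : Y ∈ boundedInLp E μ ρ) :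
    (fun j ω => ‖Y j ω‖) ∈ boundedInLp ℝ μ ρ :=
  mem_boundedInLp_of_norm_le hY (fun j => (hY.1 j).norm) 1 fun j ω => by simp

theorem const_mem_lpBigO_zero [∀ j, IsProbabilityMeasure (μ j)] (c : E) :
    (fun _ _ => c) ∈ lpBigO E μ r 0 :=
  ⟨fun _ => aestronglyMeasurable_const, fun q => ⟨‖c‖₊, fun j => by
    simpa [enorm_eq_nnnorm] using eLpNorm_le_of_ae_bound (p := q) (μ := μ j) (f := fun _ => c)
      (C := ‖c‖) (.of_forall fun _ => le_rfl)⟩⟩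

theorem pow_smul_mem_boundedInLp (l : ℕ) (hY : Y ∈ boundedInLp E μ ρ) :
    (fun j ω => (r j : ℝ) ^ l • Y j ω) ∈ boundedInLp E μ fun q j => (r j : ℝ≥0∞) ^ l * ρ q j := by
  refine ⟨fun j => (hY.1 j).const_smul _, fun q => ?_⟩
  obtain ⟨K, hK⟩ := hY.2 q
  refine ⟨K, fun j => ?_⟩
  have h : ‖(r j : ℝ) ^ l‖ₑ = (r j : ℝ≥0∞) ^ l := by simp
  change eLpNorm ((r j : ℝ) ^ l • Y j) q (μ j) ≤ _
  rw [eLpNorm_const_smul, h, mul_left_comm]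
  gcongr
  exact hK j

theorem pow_smul_mem_lpBigO (l : ℕ) (hY : Y ∈ lpBigO E μ r k) :
    (fun j ω => (r j : ℝ) ^ l • Y j ω) ∈ lpBigO E μ r (l + k) := by
  simpa only [lpBigO, pow_add] using pow_smul_mem_boundedInLp (r := r) l hY

theorem bilin_mem_lpBigO (B : E →L[ℝ] F →L[ℝ] G) (hY : Y ∈ lpBigO E μ r k)
    (hZ : Z ∈ lpBigO F μ r l) : (fun j ω => B (Y j ω) (Z j ω)) ∈ lpBigO G μ r (k + l) := by
  refine ⟨fun j => B.aestronglyMeasurable_comp₂ (hY.1 j) (hZ.1 j), fun q => ?_⟩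
  obtain ⟨K, hK⟩ := hY.2 (2 * q)
  obtain ⟨L, hL⟩ := hZ.2 (2 * q)
  have hq : ENNReal.HolderTriple (2 * q : ℝ≥0) (2 * q : ℝ≥0) q := ⟨by
    rw [ENNReal.coe_mul, ENNReal.mul_inv (by simp) (by simp), ← two_mul, ← mul_assoc]
    simp [ENNReal.mul_inv_cancel]⟩
  refine ⟨‖B‖₊ * (K * L), fun j => ?_⟩
  calc eLpNorm (fun ω => B (Y j ω) (Z j ω)) q (μ j)
      ≤ ‖B‖₊ * eLpNorm (Y j) (2 * q : ℝ≥0) (μ j) * eLpNorm (Z j) (2 * q : ℝ≥0) (μ j) :=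
        eLpNorm_le_eLpNorm_mul_eLpNorm_of_nnnorm (hY.1 j) (hZ.1 j) (fun y z => B y z) _
          (.of_forall fun ω => B.le_opNorm₂ _ _)
    _ ≤ ‖B‖₊ * (K * r j ^ k) * (L * r j ^ l) := by gcongr; exacts [hK j, hL j]
    _ = _ := by push_cast; ring

theorem smul_mem_lpBigO {ξ : ∀ j, Ω j → ℝ} (hξ : ξ ∈ lpBigO ℝ μ r k) (hY : Y ∈ lpBigO E μ r l) :
    (fun j ω => ξ j ω • Y j ω) ∈ lpBigO E μ r (k + l) :=
  bilin_mem_lpBigO (.lsmul ℝ ℝ) hξ hY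

theorem clm_apply_mem_lpBigO {A : ∀ j, Ω j → E →L[ℝ] F} (hA : A ∈ lpBigO (E →L[ℝ] F) μ r k)
    (hY : Y ∈ lpBigO E μ r l) : (fun j ω => A j ω (Y j ω)) ∈ lpBigO F μ r (k + l) :=
  bilin_mem_lpBigO (.id ℝ (E →L[ℝ] F)) hA hY

theorem comp_mem_boundedInLp {I : Type*} (e : I → J) (hY : Y ∈ boundedInLp E μ ρ) :
    (fun i => Y (e i)) ∈ boundedInLp E (fun i => μ (e i)) fun q i => ρ q (e i) :=
  ⟨fun i => hY.1 (e i), fun q => (hY.2 q).imp fun _ hK i => hK (e i)⟩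

theorem memLp_of_mem_boundedInLp (hY : Y ∈ boundedInLp E μ ρ) (hρ : ∀ q j, ρ q j ≠ ∞) (q : ℝ≥0)
    (j : J) : MemLp (Y j) q (μ j) := by
  obtain ⟨K, hK⟩ := hY.2 q
  exact ⟨hY.1 j, (hK j).trans_lt (ENNReal.mul_lt_top (by simp) (hρ q j).lt_top)⟩

theorem memLp_of_mem_lpBigO (hY : Y ∈ lpBigO E μ r k) (q : ℝ≥0) (j : J) : MemLp (Y j) q (μ j) :=
  memLp_of_mem_boundedInLp hY (fun _ _ => by simp) q j

theorem eLpNorm_smul_of_indepFun [MeasurableSpace E] [BorelSpace E] {Ω : Type*}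
    {mΩ : MeasurableSpace Ω} {μ : Measure Ω} {ξ : Ω → ℝ} {Y : Ω → E}
    (hξ : AEStronglyMeasurable ξ μ) (hY : AEStronglyMeasurable Y μ)
    (h : ξ ⟂ᵢ[μ] Y) (q : ℝ≥0) :
    eLpNorm (fun ω => ξ ω • Y ω) q μ = eLpNorm ξ q μ * eLpNorm Y q μ := by
  rcases eq_or_ne q 0 with rfl | hq
  · simp
  have hq' : (q : ℝ≥0∞) ≠ 0 := by simpa
  have hpow : Measurable fun x : ℝ≥0∞ => x ^ (q : ℝ≥0∞).toReal := by fun_prop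
  rw [eLpNorm_eq_lintegral_rpow_enorm_toReal hq' (by simp),
    eLpNorm_eq_lintegral_rpow_enorm_toReal hq' (by simp),
    eLpNorm_eq_lintegral_rpow_enorm_toReal hq' (by simp),
    ← ENNReal.mul_rpow_of_nonneg _ _ (by positivity),
    ← lintegral_mul_eq_lintegral_mul_lintegral_of_indepFun'' (hξ.enorm.pow_const _)
      (hY.enorm.pow_const _) (h.comp (hpow.comp measurable_enorm) (hpow.comp measurable_enorm))]
  simp only [enorm_smul, ENNReal.mul_rpow_of_nonneg _ _ ENNReal.toReal_nonneg]

theorem smul_mem_boundedInLp_of_indepFun [MeasurableSpace E] [BorelSpace E] {ξ : ∀ j, Ω j → ℝ}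
    (hξ : ξ ∈ lpBigO ℝ μ r l) (hY : Y ∈ boundedInLp E μ ρ) (h : ∀ j, ξ j ⟂ᵢ[μ j] Y j) :
    (fun j ω => ξ j ω • Y j ω) ∈ boundedInLp E μ fun q j => (r j : ℝ≥0∞) ^ l * ρ q j := by
  refine ⟨fun j => (hξ.1 j).smul (hY.1 j), fun q => ?_⟩
  obtain ⟨K, hK⟩ := hξ.2 q
  obtain ⟨L, hL⟩ := hY.2 q
  refine ⟨K * L, fun j => ?_⟩
  rw [eLpNorm_smul_of_indepFun (hξ.1 j) (hY.1 j) (h j), ENNReal.coe_mul, mul_mul_mul_comm]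
  gcongr
  exacts [hK j, hL j]

end BoundedInLp

section Centered

variable {J : Type*} {Ω : J → Type*}

/-- The families of integrable random variables whose conditional expectations given `𝓕 j`
vanish. -/
noncomputable def centered (E : Type*) [NormedAddCommGroup E] [NormedSpace ℝ E] [CompleteSpace E]
    (𝓕 : ∀ j, MeasurableSpace (Ω j)) [∀ j, MeasurableSpace (Ω j)] (μ : ∀ j, Measure (Ω j)) :
    Submodule ℝ (∀ j, Ω j → E) where
  carrier := {Y | ∀ j, Integrable (Y j) (μ j) ∧ (μ j)[Y j | 𝓕 j] =ᵐ[μ j] 0}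
  add_mem' hY hZ j := ⟨(hY j).1.add (hZ j).1, by
    filter_upwards [condExp_add (hY j).1 (hZ j).1 (𝓕 j), (hY j).2, (hZ j).2] with ω h hy hz
    simp [h, hy, hz]⟩
  zero_mem' j := ⟨integrable_zero _ _ _, by rw [Pi.zero_apply, condExp_zero]⟩
  smul_mem' a Y hY j := ⟨(hY j).1.smul a, by
    filter_upwards [condExp_smul a (Y j) (𝓕 j), (hY j).2] with ω h hy
    simp [h, hy]⟩

/-- Martingale differences: the `𝓕`-centred families which are `O(r ^ k)` in every `L^q`. -/
noncomputable abbrev martDiff (E : Type*) [NormedAddCommGroup E] [NormedSpace ℝ E]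
    [CompleteSpace E] (𝓕 : ∀ j, MeasurableSpace (Ω j)) [∀ j, MeasurableSpace (Ω j)]
    (μ : ∀ j, Measure (Ω j)) (r : J → ℝ≥0) (k : ℕ) : Submodule ℝ (∀ j, Ω j → E) :=
  lpBigO E μ r k ⊓ centered E 𝓕 μ

end Centered

section CenteredLemmas

variable {J : Type*} {Ω : J → Type*} {𝓕 𝓐 𝓖 : ∀ j, MeasurableSpace (Ω j)}
  [mΩ : ∀ j, MeasurableSpace (Ω j)] {μ : ∀ j, Measure (Ω j)}
  {E F : Type*} [NormedAddCommGroup E] [NormedSpace ℝ E] [CompleteSpace E]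
  [NormedAddCommGroup F] [NormedSpace ℝ F] [CompleteSpace F]
  {Y : ∀ j, Ω j → E} {ξ : ∀ j, Ω j → ℝ} {r : J → ℝ≥0} {R : ℝ≥0} {k l : ℕ}

theorem centered_anti (h : ∀ j, 𝓕 j ≤ 𝓐 j) (hA : ∀ j, 𝓐 j ≤ mΩ j)
    [∀ j, IsFiniteMeasure (μ j)] : centered E 𝓐 μ ≤ centered E 𝓕 μ := by
  refine fun Y hY j => ⟨(hY j).1, ?_⟩
  calc (μ j)[Y j | 𝓕 j] =ᵐ[μ j] (μ j)[(μ j)[Y j | 𝓐 j] | 𝓕 j] :=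
        (condExp_condExp_of_le (h j) (hA j)).symm
    _ =ᵐ[μ j] (μ j)[0 | 𝓕 j] := condExp_congr_ae (hY j).2
    _ = 0 := condExp_zero

theorem clm_comp_mem_centered (L : E →L[ℝ] F) (hY : Y ∈ centered E 𝓕 μ) :
    (fun j ω => L (Y j ω)) ∈ centered F 𝓕 μ := by
  refine fun j => ⟨L.integrable_comp (hY j).1, ?_⟩
  filter_upwards [L.comp_condExp_comm (m := 𝓕 j) (hY j).1, (hY j).2] with ω h h0
  simpa [h0, Function.comp_def] using h.symm

theorem fun_smul_mem_centered (c : J → ℝ) (hY : Y ∈ centered E 𝓕 μ) :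
    (fun j ω => c j • Y j ω) ∈ centered E 𝓕 μ := by
  refine fun j => ⟨(hY j).1.smul (c j), ?_⟩
  filter_upwards [condExp_smul (c j) (Y j) (𝓕 j), (hY j).2] with ω h h0
  simpa [h0, Pi.smul_def] using h

theorem smul_mem_centered (hξ : ξ ∈ centered ℝ 𝓕 μ)
    (hY : ∀ j, StronglyMeasurable[𝓕 j] (Y j))
    (h : ∀ j, Integrable (fun ω => ξ j ω • Y j ω) (μ j)) :
    (fun j ω => ξ j ω • Y j ω) ∈ centered E 𝓕 μ := by
  refine fun j => ⟨h j, ?_⟩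
  filter_upwards [condExp_smul_of_aestronglyMeasurable_right (hξ j).1 (h j)
    (hY j).aestronglyMeasurable, (hξ j).2] with ω hω h0
  simpa [h0, Pi.smul_def'] using hω

theorem smul_mem_martDiff (hξ : ξ ∈ martDiff ℝ 𝓕 μ r k) (hY : Y ∈ lpBigO E μ r l)
    (hYm : ∀ j, StronglyMeasurable[𝓕 j] (Y j)) :
    (fun j ω => ξ j ω • Y j ω) ∈ martDiff E 𝓕 μ r (k + l) := by
  have h := smul_mem_lpBigO hξ.1 hY
  exact ⟨h, smul_mem_centered hξ.2 hYm fun j =>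
    memLp_one_iff_integrable.1 (by simpa using memLp_of_mem_lpBigO h 1 j)⟩

theorem mem_centered_of_indep [∀ j, IsFiniteMeasure (μ j)] (hG : ∀ j, 𝓖 j ≤ mΩ j)
    (hF : ∀ j, 𝓕 j ≤ mΩ j) (h : ∀ j, Indep (𝓖 j) (𝓕 j) (μ j))
    (hY : ∀ j, StronglyMeasurable[𝓖 j] (Y j)) (hYi : ∀ j, Integrable (Y j) (μ j))
    (h0 : ∀ j, ∫ ω, Y j ω ∂μ j = 0) : Y ∈ centered E 𝓕 μ := by
  refine fun j => ⟨hYi j, ?_⟩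
  filter_upwards [condExp_indep_eq (hG j) (hF j) (hY j) (h j)] with ω hω
  rw [hω, h0 j, Pi.zero_apply]

theorem integral_eq_zero_of_mem_centered [∀ j, IsFiniteMeasure (μ j)] (hF : ∀ j, 𝓕 j ≤ mΩ j)
    (hY : Y ∈ centered E 𝓕 μ) (j : J) : ∫ ω, Y j ω ∂μ j = 0 := by
  rw [← integral_condExp (hF j), integral_congr_ae (hY j).2]
  simp

end CenteredLemmas

section Moments

variable {Ω E : Type*} [MeasurableSpace Ω] {μ : Measure Ω} [NormedAddCommGroup E]

theorem integral_norm_rpow_eq_lpNorm_rpow {f : Ω → E} (hf : AEStronglyMeasurable f μ) {q : ℝ≥0}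
    (hq : q ≠ 0) : ∫ ω, ‖f ω‖ ^ (q : ℝ) ∂μ = lpNorm f q μ ^ (q : ℝ) := by
  rw [lpNorm_nnreal_eq_integral_norm_rpow hq hf,
    Real.rpow_inv_rpow (integral_nonneg fun ω => by positivity) (by simpa)]

theorem integral_norm_pow_eq_lpNorm_pow {f : Ω → E} (hf : AEStronglyMeasurable f μ) {n : ℕ}
    (hn : n ≠ 0) : ∫ ω, ‖f ω‖ ^ n ∂μ = lpNorm f (n : ℝ≥0) μ ^ n := by
  simpa using integral_norm_rpow_eq_lpNorm_rpow hf (q := n) (by simpa)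

theorem lpNorm_le_of_eLpNorm_le {f : Ω → E} {q : ℝ≥0∞} {A : ℝ} (hA : 0 ≤ A)
    (h : eLpNorm f q μ ≤ ENNReal.ofReal A) : lpNorm f q μ ≤ A := by
  by_cases hf : AEStronglyMeasurable f μ
  · rw [← toReal_eLpNorm hf]
    exact ENNReal.toReal_le_of_le_ofReal hA h
  · rwa [lpNorm_of_not_aestronglyMeasurable hf]

theorem integral_norm_rpow_le_of_mem_lpBigO {J : Type*} {Ω : J → Type*}
    [∀ j, MeasurableSpace (Ω j)] {μ : ∀ j, Measure (Ω j)} [NormedSpace ℝ E] {Y : ∀ j, Ω j → E}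
    {r : J → ℝ≥0} {k : ℕ} (hY : Y ∈ lpBigO E μ r k) {q : ℝ≥0} (hq : q ≠ 0) :
    ∃ K : ℝ≥0, ∀ j, ∫ ω, ‖Y j ω‖ ^ (q : ℝ) ∂μ j ≤ K * ((r j : ℝ) ^ k) ^ (q : ℝ) := by
  obtain ⟨K, hK⟩ := hY.2 q
  refine ⟨K ^ (q : ℝ), fun j => ?_⟩
  rw [integral_norm_rpow_eq_lpNorm_rpow (hY.1 j) hq, NNReal.coe_rpow,
    ← Real.mul_rpow (by positivity) (by positivity)]
  gcongr
  · exact lpNorm_nonneg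
  refine lpNorm_le_of_eLpNorm_le (by positivity) ((hK j).trans_eq ?_)
  rw [ENNReal.ofReal_mul (by positivity), ENNReal.ofReal_pow (by positivity)]
  simp

theorem mem_lpBigO_of_integral_pow_le {J : Type*} {Ω : J → Type*} [∀ j, MeasurableSpace (Ω j)]
    {μ : ∀ j, Measure (Ω j)} [∀ j, IsProbabilityMeasure (μ j)] [NormedSpace ℝ E]
    {Y : ∀ j, Ω j → E} {r : J → ℝ≥0} {k : ℕ} (hY : ∀ j, ∀ q : ℝ≥0, MemLp (Y j) q (μ j))
    (h : ∀ n : ℕ, ∃ K : ℝ≥0, ∀ j,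
      ∫ ω, ‖Y j ω‖ ^ (2 * n + 2) ∂μ j ≤ K * ((r j : ℝ) ^ k) ^ (2 * n + 2)) :
    Y ∈ lpBigO E μ r k := by
  refine ⟨fun j => (hY j 0).1, fun q => ?_⟩
  set n := ⌈q⌉₊
  obtain ⟨K, hK⟩ := h n
  have hqn : (q : ℝ≥0∞) ≤ ((2 * n + 2 : ℕ) : ℝ≥0) := by
    have := Nat.le_ceil q
    norm_cast
    refine this.trans ?_
    exact_mod_cast (by omega : n ≤ 2 * n + 2)
  refine ⟨1 + K, fun j => (eLpNorm_le_eLpNorm_of_exponent_le hqn (hY j 0).1).trans ?_⟩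
  rw [← ofReal_lpNorm (hY j _)]
  refine ENNReal.ofReal_le_of_le_toReal ?_
  have hK1 : (K : ℝ) ≤ (1 + K) ^ (2 * n + 2) :=
    le_trans (by simp) (le_self_pow₀ (le_add_of_nonneg_right K.2) (by omega))
  refine le_of_pow_le_pow_left₀ (n := 2 * n + 2) (by omega) (by positivity) ?_
  rw [← integral_norm_pow_eq_lpNorm_pow (hY j 0).1 (by omega)]
  calc ∫ ω, ‖Y j ω‖ ^ (2 * n + 2) ∂μ j ≤ K * ((r j : ℝ) ^ k) ^ (2 * n + 2) := hK j
    _ ≤ (1 + K) ^ (2 * n + 2) * ((r j : ℝ) ^ k) ^ (2 * n + 2) := by gcongr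
    _ = _ := by rw [← mul_pow]; rfl

end Moments

section Gronwall

theorem abs_add_pow_sub_le (x a : ℝ) (n : ℕ) :
    |(x + a) ^ (n + 2) - x ^ (n + 2) - (n + 2) * x ^ (n + 1) * a|
      ≤ (n + 2) ^ 2 * a ^ 2 * (|x| + |a|) ^ n := by
  induction n with
  | zero =>
    rw [show (x + a) ^ (0 + 2) - x ^ (0 + 2) - ((0 : ℕ) + 2) * x ^ (0 + 1) * a = a ^ 2 by
      push_cast; ring, abs_of_nonneg (sq_nonneg a)]
    norm_num
    nlinarith [sq_nonneg a]
  | succ n ih =>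
    have hstep : (x + a) ^ (n + 1 + 2) - x ^ (n + 1 + 2) - ((n + 1 : ℕ) + 2) * x ^ (n + 1 + 1) * a
        = (x + a) * ((x + a) ^ (n + 2) - x ^ (n + 2) - (n + 2) * x ^ (n + 1) * a)
          + (n + 2) * a ^ 2 * x ^ (n + 1) := by push_cast; ring
    have hx : |x| ≤ |x| + |a| := le_add_of_nonneg_right (abs_nonneg a)
    rw [hstep]
    calc _ ≤ |x + a| * |(x + a) ^ (n + 2) - x ^ (n + 2) - (n + 2) * x ^ (n + 1) * a|
          + (n + 2) * a ^ 2 * |x| ^ (n + 1) := by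
          refine (abs_add_le _ _).trans_eq ?_
          rw [abs_mul, abs_mul, abs_mul, abs_pow x, abs_of_nonneg (sq_nonneg a),
            abs_of_nonneg (by positivity : (0 : ℝ) ≤ n + 2)]
      _ ≤ (|x| + |a|) * ((n + 2) ^ 2 * a ^ 2 * (|x| + |a|) ^ n)
          + (n + 2) * a ^ 2 * (|x| + |a|) ^ (n + 1) := by gcongr; exact abs_add_le x a
      _ = ((n + 2) ^ 2 + (n + 2)) * (a ^ 2 * (|x| + |a|) ^ (n + 1)) := by ring
      _ ≤ ((n + 1 : ℕ) + 2) ^ 2 * (a ^ 2 * (|x| + |a|) ^ (n + 1)) := by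
          gcongr
          push_cast
          nlinarith
      _ = _ := by ring

theorem add_add_pow_le {a b c : ℝ} (ha : 0 ≤ a) (hb : 0 ≤ b) (hc : 0 ≤ c) (n : ℕ) :
    (a + b + c) ^ n ≤ 4 ^ n * (a ^ n + b ^ n + c ^ n) := by
  have htwo : (2 : ℝ) ^ (n - 1) ≤ 2 ^ n := pow_le_pow_right₀ one_le_two (Nat.sub_le n 1)
  calc (a + b + c) ^ n ≤ 2 ^ (n - 1) * ((a + b) ^ n + c ^ n) := add_pow_le (by positivity) hc n
    _ ≤ 2 ^ n * (2 ^ n * (a ^ n + b ^ n) + 2 ^ n * c ^ n) := by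
        gcongr
        · exact (add_pow_le ha hb n).trans (by gcongr)
        · exact le_mul_of_one_le_left (by positivity) (one_le_pow₀ one_le_two)
    _ = 4 ^ n * (a ^ n + b ^ n + c ^ n) := by
        rw [show (4 : ℝ) ^ n = 2 ^ n * 2 ^ n by rw [← mul_pow]; norm_num]
        ring

theorem exists_add_pow_le (n : ℕ) (R : ℝ≥0) : ∃ C : ℝ≥0, ∀ r : ℝ≥0, r ≤ R → ∀ x u v : ℝ,
    (x + (r ^ 2 * u + r * v)) ^ (n + 2) ≤ x ^ (n + 2) + (n + 2) * x ^ (n + 1) * (r * v)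
      + C * r ^ 2 * (|x| + |u| + |v|) ^ (n + 2) := by
  set B : ℝ≥0 := 1 + R * (R + 1) with hB
  refine ⟨(n + 2) + (n + 2) ^ 2 * (R + 1) ^ 2 * B ^ n, fun r hr x u v => ?_⟩
  have hr' : (r : ℝ) ≤ R := hr
  generalize hs : |x| + |u| + |v| = s
  have hx : |x| ≤ s := by linarith [abs_nonneg u, abs_nonneg v]
  have hu : |u| ≤ s := by linarith [abs_nonneg x, abs_nonneg v]
  have hs0 : 0 ≤ s := (abs_nonneg x).trans hx
  have hxu : x ^ (n + 1) * u ≤ s ^ (n + 1) * s :=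
    calc x ^ (n + 1) * u ≤ |x| ^ (n + 1) * |u| := by
          rw [← abs_pow, ← abs_mul]
          exact le_abs_self _
      _ ≤ s ^ (n + 1) * s := by gcongr
  have hdrift : (n + 2) * x ^ (n + 1) * (r ^ 2 * u) ≤ (n + 2) * r ^ 2 * s ^ (n + 2) :=
    calc (n + 2) * x ^ (n + 1) * (r ^ 2 * u) = (n + 2) * r ^ 2 * (x ^ (n + 1) * u) := by ring
      _ ≤ (n + 2) * r ^ 2 * (s ^ (n + 1) * s) := by gcongr
      _ = (n + 2) * r ^ 2 * s ^ (n + 2) := by ring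
  have hb : |r * u + v| ≤ (R + 1) * s :=
    calc |r * u + v| ≤ r * |u| + |v| := by simpa [abs_mul] using abs_add_le (r * u) v
      _ ≤ R * s + s := by gcongr; linarith [abs_nonneg x, abs_nonneg u]
      _ = (R + 1) * s := by ring
  have hBs : s + R * ((R + 1) * s) = B * s := by rw [hB]; push_cast; ring
  have hquad : (n + 2) ^ 2 * (r * (r * u + v)) ^ 2 * (|x| + |r * (r * u + v)|) ^ n
      ≤ (n + 2) ^ 2 * (R + 1) ^ 2 * B ^ n * r ^ 2 * s ^ (n + 2) := by
    rw [← sq_abs (r * (r * u + v)), abs_mul, NNReal.abs_eq]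
    calc _ ≤ (n + 2) ^ 2 * (r * ((R + 1) * s)) ^ 2 * (s + R * ((R + 1) * s)) ^ n := by gcongr
      _ = _ := by rw [hBs, mul_pow]; ring
  have hexp := (abs_le.1 (abs_add_pow_sub_le x (r * (r * u + v)) n)).2
  push_cast
  rw [show (r : ℝ) ^ 2 * u + r * v = r * (r * u + v) by ring]
  linarith

theorem exists_integral_add_pow_le (n : ℕ) (R : ℝ≥0) : ∃ C : ℝ≥0, ∀ r : ℝ≥0, r ≤ R →
    ∀ {Ω : Type*} [MeasurableSpace Ω] {μ : Measure Ω} {x u v : Ω → ℝ},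
      MemLp x (n + 2 : ℕ) μ → MemLp u (n + 2 : ℕ) μ → MemLp v (n + 2 : ℕ) μ →
      Integrable (fun ω => x ω ^ (n + 1) * v ω) μ → ∫ ω, x ω ^ (n + 1) * v ω ∂μ = 0 →
      ∫ ω, (x ω + (r ^ 2 * u ω + r * v ω)) ^ (n + 2) ∂μ ≤ ∫ ω, x ω ^ (n + 2) ∂μ
        + C * r ^ 2 * (∫ ω, |x ω| ^ (n + 2) ∂μ + ∫ ω, |u ω| ^ (n + 2) ∂μ
          + ∫ ω, |v ω| ^ (n + 2) ∂μ) := by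
  obtain ⟨C, hC⟩ := exists_add_pow_le n R
  refine ⟨C * 4 ^ (n + 2), fun r hr Ω _ μ x u v hx hu hv hxv hxv0 => ?_⟩
  have hpow {y : Ω → ℝ} (hy : MemLp y (n + 2 : ℕ) μ) :
      Integrable (fun ω => |y ω| ^ (n + 2)) μ := by
    simpa using hy.integrable_norm_pow (by omega)
  have hpow' {y : Ω → ℝ} (hy : MemLp y (n + 2 : ℕ) μ) : Integrable (fun ω => y ω ^ (n + 2)) μ :=
    (hpow hy).mono' (hy.1.pow _) (.of_forall fun ω => by simp)
  calc ∫ ω, (x ω + (r ^ 2 * u ω + r * v ω)) ^ (n + 2) ∂μ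
      ≤ ∫ ω, (x ω ^ (n + 2) + (n + 2) * r * (x ω ^ (n + 1) * v ω)
          + C * 4 ^ (n + 2) * r ^ 2
            * (|x ω| ^ (n + 2) + |u ω| ^ (n + 2) + |v ω| ^ (n + 2))) ∂μ := by
        refine integral_mono (hpow' (hx.add ((hu.const_mul _).add (hv.const_mul _))))
          (((hpow' hx).add (hxv.const_mul _)).add
            ((((hpow hx).add (hpow hu)).add (hpow hv)).const_mul _)) fun ω => ?_
        refine (hC r hr _ _ _).trans ?_
        have h := mul_le_mul_of_nonneg_left (add_add_pow_le (abs_nonneg (x ω)) (abs_nonneg (u ω))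
          (abs_nonneg (v ω)) (n + 2)) (by positivity : 0 ≤ (C * r ^ 2 : ℝ))
        linarith
    _ = _ := by
        rw [integral_add, integral_add, integral_const_mul, integral_const_mul, hxv0,
          integral_add, integral_add]
        · push_cast; ring
        all_goals fun_prop (disch := assumption)

theorem integrable_pow_mul {Ω : Type*} [MeasurableSpace Ω] {μ : Measure Ω} {x v : Ω → ℝ} {n : ℕ}
    (hx : MemLp x (n + 1 : ℕ) μ) (hv : MemLp v (n + 1 : ℕ) μ) :
    Integrable (fun ω => x ω ^ n * v ω) μ := by
  refine ((hx.norm.add hv.norm).integrable_norm_pow n.succ_ne_zero).mono' ((hx.1.pow n).mul hv.1)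
    (.of_forall fun ω => ?_)
  have hx0 := norm_nonneg (x ω)
  have hv0 := norm_nonneg (v ω)
  rw [norm_mul, norm_pow, Pi.add_apply, Real.norm_of_nonneg (add_nonneg hx0 hv0), pow_succ]
  gcongr <;> linarith

section IncrementScale

variable {J : Type*} {Ω : J → Type*}

/-- The scale `r ^ l * (‖x‖_q + r ^ k)`: an increment of a process with current value `x` is
measured against it in Gronwall's inequality, the deterministic term accounting for the
inhomogeneity. -/
noncomputable def incrementScale {F : Type*} [NormedAddCommGroup F]
    [∀ j, MeasurableSpace (Ω j)] (μ : ∀ j, Measure (Ω j)) (x : ∀ j, Ω j → F) (r : J → ℝ≥0)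
    (k l : ℕ) : ℝ≥0 → J → ℝ≥0∞ :=
  fun q j => (r j : ℝ≥0∞) ^ l * (eLpNorm (x j) q (μ j) + (r j : ℝ≥0∞) ^ k)

/-- The increments to which Gronwall's inequality applies: a part of relative size `r ^ 2` plus an
`𝓕`-centred part of relative size `r`. -/
noncomputable abbrev gronwallIncrement {F : Type*} [NormedAddCommGroup F] (E : Type*)
    [NormedAddCommGroup E] [NormedSpace ℝ E] [CompleteSpace E]
    (𝓕 : ∀ j, MeasurableSpace (Ω j)) [∀ j, MeasurableSpace (Ω j)]
    (μ : ∀ j, Measure (Ω j)) (x : ∀ j, Ω j → F) (r : J → ℝ≥0) (k : ℕ) :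
    Submodule ℝ (∀ j, Ω j → E) :=
  boundedInLp E μ (incrementScale μ x r k 2)
    ⊔ boundedInLp E μ (incrementScale μ x r k 1) ⊓ centered E 𝓕 μ

end IncrementScale

variable {J : Type*} {Ω : J → Type*} {𝓕 : ∀ j, MeasurableSpace (Ω j)}
  {N : J → ℕ} {𝓢 : ∀ s : Σ j, Fin (N j), MeasurableSpace (Ω s.1)}
  [mΩ : ∀ j, MeasurableSpace (Ω j)] {μ : ∀ j, Measure (Ω j)}
  {E F ι : Type*} [NormedAddCommGroup E] [NormedSpace ℝ E] [NormedAddCommGroup F]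
  [Fintype ι] {r : J → ℝ≥0} {T R : ℝ≥0} {k l : ℕ}

theorem inv_pow_smul_mem_incrementScale_zero {x : ∀ j, Ω j → F} {y : ∀ j, Ω j → E}
    (hr : ∀ j, 0 < r j) (hy : y ∈ boundedInLp E μ (incrementScale μ x r k l)) :
    (fun j ω => ((r j : ℝ)⁻¹) ^ l • y j ω) ∈ boundedInLp E μ (incrementScale μ x r k 0) := by
  refine boundedInLp_mono (fun _ => ⟨1, fun j => ?_⟩)
    (pow_smul_mem_boundedInLp (r := fun j => (r j)⁻¹) l hy)
  have h : ((r j)⁻¹ : ℝ≥0∞) ^ l * (r j : ℝ≥0∞) ^ l = 1 := by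
    rw [← mul_pow, ENNReal.inv_mul_cancel (by simpa using (hr j).ne') (by simp), one_pow]
  simp [incrementScale, ENNReal.coe_inv (hr j).ne', ← mul_assoc, h]

theorem incrementScale_ne_top {x : ∀ j, Ω j → F} (hx : ∀ j, ∀ q : ℝ≥0, MemLp (x j) q (μ j))
    (q : ℝ≥0) (j : J) : incrementScale μ x r k l q j ≠ ∞ :=
  ENNReal.mul_ne_top (by simp) (ENNReal.add_ne_top.2 ⟨(hx j q).eLpNorm_ne_top, by simp⟩)

theorem integral_norm_pow_le_of_mem_incrementScale {x : ∀ j, Ω j → F} {y : ∀ j, Ω j → E}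
    (hx : ∀ j, ∀ q : ℝ≥0, MemLp (x j) q (μ j))
    (hy : y ∈ boundedInLp E μ (incrementScale μ x r k 0)) {n : ℕ} (hn : n ≠ 0) :
    ∃ K : ℝ≥0, ∀ j, ∫ ω, ‖y j ω‖ ^ n ∂μ j ≤ K * (∫ ω, ‖x j ω‖ ^ n ∂μ j + ((r j : ℝ) ^ k) ^ n) := by
  obtain ⟨K, hK⟩ := hy.2 n
  refine ⟨K ^ n * 2 ^ (n - 1), fun j => ?_⟩
  have hle : lpNorm (y j) (n : ℝ≥0) (μ j) ≤ K * (lpNorm (x j) (n : ℝ≥0) (μ j) + (r j : ℝ) ^ k) := by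
    have h0 : 0 ≤ lpNorm (x j) (n : ℝ≥0) (μ j) := lpNorm_nonneg
    refine lpNorm_le_of_eLpNorm_le (by positivity) ((hK j).trans_eq ?_)
    rw [ENNReal.ofReal_mul (by positivity), ENNReal.ofReal_add h0 (by positivity),
      ofReal_lpNorm (hx j n), ENNReal.ofReal_pow (by positivity)]
    simp [incrementScale]
  rw [integral_norm_pow_eq_lpNorm_pow (hy.1 j) hn, integral_norm_pow_eq_lpNorm_pow (hx j 0).1 hn]
  calc _ ≤ (K * (lpNorm (x j) (n : ℝ≥0) (μ j) + (r j : ℝ) ^ k)) ^ n := by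
        gcongr
        exact lpNorm_nonneg
    _ ≤ K ^ n * (2 ^ (n - 1) * (lpNorm (x j) (n : ℝ≥0) (μ j) ^ n + ((r j : ℝ) ^ k) ^ n)) := by
        rw [mul_pow]
        gcongr
        exact add_pow_le lpNorm_nonneg (by positivity) n
    _ = _ := by push_cast; ring

theorem integral_pow_coord_le_integral_norm_pow {Ω : Type*} [MeasurableSpace Ω] {μ : Measure Ω}
    {y : Ω → ι → ℝ} {n : ℕ} (hn : n ≠ 0) (hy : MemLp y n μ) (i : ι) :
    ∫ ω, |y ω i| ^ n ∂μ ≤ ∫ ω, ‖y ω‖ ^ n ∂μ := by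
  refine integral_mono_of_nonneg (.of_forall fun ω => by positivity)
    (hy.integrable_norm_pow hn) (.of_forall fun ω => ?_)
  beta_reduce
  gcongr
  exact norm_le_pi_norm (y ω) i

theorem norm_pow_le_sum_abs_pow (y : ι → ℝ) {n : ℕ} (hn : n ≠ 0) :
    ‖y‖ ^ n ≤ ∑ i, |y i| ^ n := by
  rcases isEmpty_or_nonempty ι with _ | _
  · simp [Subsingleton.elim y 0, hn]
  obtain ⟨i, hi⟩ := Finite.exists_max fun i => |y i|
  calc ‖y‖ ^ n ≤ |y i| ^ n := by
        gcongr
        exact (pi_norm_le_iff_of_nonneg (abs_nonneg _)).2 hi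
    _ ≤ ∑ i, |y i| ^ n := Finset.single_le_sum (f := fun i => |y i| ^ n)
        (fun _ _ => by positivity) (Finset.mem_univ i)

theorem integral_norm_pow_le_sum {Ω : Type*} [MeasurableSpace Ω] {μ : Measure Ω}
    {y : Ω → ι → ℝ} {n : ℕ} (hn : n ≠ 0) (hy : MemLp y n μ) :
    ∫ ω, ‖y ω‖ ^ n ∂μ ≤ ∑ i, ∫ ω, |y ω i| ^ n ∂μ := by
  have hi (i : ι) : Integrable (fun ω => |y ω i| ^ n) μ := by
    simpa using (memLp_pi_iff.1 hy i).integrable_norm_pow hn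
  rw [← integral_finsetSum _ fun i _ => hi i]
  exact integral_mono (hy.integrable_norm_pow hn) (integrable_finsetSum _ fun i _ => hi i)
    fun ω => norm_pow_le_sum_abs_pow (y ω) hn

theorem integral_pow_mul_coord_eq_zero [∀ j, IsFiniteMeasure (μ j)] (h𝓕 : ∀ j, 𝓕 j ≤ mΩ j)
    {x v : ∀ j, Ω j → ι → ℝ} {n : ℕ} (hx : ∀ j, StronglyMeasurable[𝓕 j] (x j))
    (hxp : ∀ j, MemLp (x j) (n + 1 : ℕ) (μ j)) (hvp : ∀ j, MemLp (v j) (n + 1 : ℕ) (μ j))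
    (hv : v ∈ centered (ι → ℝ) 𝓕 μ) (i : ι) (j : J) :
    ∫ ω, x j ω i ^ n * v j ω i ∂μ j = 0 := by
  have hvi := clm_comp_mem_centered (ContinuousLinearMap.proj (R := ℝ) (φ := fun _ : ι => ℝ) i) hv
  have h := smul_mem_centered (Y := fun j ω => x j ω i ^ n) hvi
    (fun j => (((continuous_apply i).comp_stronglyMeasurable (hx j)).pow n)) fun j => by
      simpa [mul_comm] using
        integrable_pow_mul (memLp_pi_iff.1 (hxp j) i) (memLp_pi_iff.1 (hvp j) i)
  simpa [mul_comm] using integral_eq_zero_of_mem_centered h𝓕 h j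

theorem integral_pow_coord_add_le [∀ j, IsProbabilityMeasure (μ j)]
    (hrR : ∀ j, r j ≤ R) (h𝓕 : ∀ j, 𝓕 j ≤ mΩ j) {x u v : ∀ j, Ω j → ι → ℝ}
    (hx : ∀ j, StronglyMeasurable[𝓕 j] (x j)) (hxp : ∀ j, ∀ q : ℝ≥0, MemLp (x j) q (μ j))
    (hu : u ∈ boundedInLp (ι → ℝ) μ (incrementScale μ x r k 0))
    (hv : v ∈ boundedInLp (ι → ℝ) μ (incrementScale μ x r k 0))
    (hvc : v ∈ centered (ι → ℝ) 𝓕 μ) (n : ℕ) :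
    ∃ C : ℝ≥0, ∀ j i, ∫ ω, |x j ω i + (r j ^ 2 * u j ω i + r j * v j ω i)| ^ (2 * n + 2) ∂μ j
      ≤ ∫ ω, |x j ω i| ^ (2 * n + 2) ∂μ j + C * r j ^ 2
        * (∑ i, ∫ ω, |x j ω i| ^ (2 * n + 2) ∂μ j + ((r j : ℝ) ^ k) ^ (2 * n + 2)) := by
  have hp : 2 * n + 2 ≠ 0 := by omega
  have hup := memLp_of_mem_boundedInLp hu fun q j => incrementScale_ne_top hxp q j
  have hvp := memLp_of_mem_boundedInLp hv fun q j => incrementScale_ne_top hxp q j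
  obtain ⟨Ku, hKu⟩ := integral_norm_pow_le_of_mem_incrementScale hxp hu hp
  obtain ⟨Kv, hKv⟩ := integral_norm_pow_le_of_mem_incrementScale hxp hv hp
  obtain ⟨C, hC⟩ := exists_integral_add_pow_le (2 * n) R
  refine ⟨C * (1 + Ku + Kv), fun j i => ?_⟩
  have memLp_coord {y : Ω j → ι → ℝ} (hy : ∀ q : ℝ≥0, MemLp y q (μ j)) (l : ℕ) :
      MemLp (fun ω => y ω i) l (μ j) := memLp_pi_iff.1 (mod_cast hy l) i
  have hmain := hC (r j) (hrR j) (memLp_coord (hxp j) _) (memLp_coord (hup · j) _)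
    (memLp_coord (hvp · j) _)
    (integrable_pow_mul (memLp_coord (hxp j) _) (memLp_coord (hvp · j) _))
    (integral_pow_mul_coord_eq_zero h𝓕 hx (fun j => mod_cast hxp j _)
      (fun j => mod_cast hvp _ j) hvc i j)
  have hle {y : Ω j → ι → ℝ} (hy : ∀ q : ℝ≥0, MemLp y q (μ j)) {K : ℝ≥0}
      (hK : ∫ ω, ‖y ω‖ ^ (2 * n + 2) ∂μ j
        ≤ K * (∫ ω, ‖x j ω‖ ^ (2 * n + 2) ∂μ j + ((r j : ℝ) ^ k) ^ (2 * n + 2))) :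
      ∫ ω, |y ω i| ^ (2 * n + 2) ∂μ j
        ≤ K * (∑ i, ∫ ω, |x j ω i| ^ (2 * n + 2) ∂μ j + ((r j : ℝ) ^ k) ^ (2 * n + 2)) := by
    refine (integral_pow_coord_le_integral_norm_pow hp (mod_cast hy _) i).trans (hK.trans ?_)
    gcongr
    exact integral_norm_pow_le_sum hp (mod_cast hxp j _)
  have hx_le := Finset.single_le_sum (f := fun i => ∫ ω, |x j ω i| ^ (2 * n + 2) ∂μ j)
    (fun i _ => integral_nonneg fun ω => by positivity) (Finset.mem_univ i)
  have even_p : Even (2 * n + 2) := ⟨n + 1, by ring⟩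
  simp only [← even_p.pow_abs (x _ _ _), ← even_p.pow_abs (_ + _)] at hmain
  refine hmain.trans (add_le_add_right ?_ _)
  have h0 : (0 : ℝ) ≤ ((r j : ℝ) ^ k) ^ (2 * n + 2) := by positivity
  calc _ ≤ C * (r j : ℝ) ^ 2 * ((1 + Ku + Kv)
          * (∑ i, ∫ ω, |x j ω i| ^ (2 * n + 2) ∂μ j + ((r j : ℝ) ^ k) ^ (2 * n + 2))) := by
        gcongr
        linarith [hle (hup · j) (hKu j), hle (hvp · j) (hKv j)]
    _ = _ := by push_cast; ring

theorem sum_integral_pow_le_of_increment [∀ j, IsProbabilityMeasure (μ j)]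
    (hr : ∀ j, 0 < r j) (hrR : ∀ j, r j ≤ R) (h𝓕 : ∀ j, 𝓕 j ≤ mΩ j)
    {x y : ∀ j, Ω j → ι → ℝ} (hx : ∀ j, StronglyMeasurable[𝓕 j] (x j))
    (hxp : ∀ j, ∀ q : ℝ≥0, MemLp (x j) q (μ j))
    (hxy : y - x ∈ gronwallIncrement (ι → ℝ) 𝓕 μ x r k) (n : ℕ) :
    ∃ C : ℝ≥0, ∀ j, ∑ i, ∫ ω, |y j ω i| ^ (2 * n + 2) ∂μ j + ((r j : ℝ) ^ k) ^ (2 * n + 2)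
      ≤ (1 + C * r j ^ 2)
        * (∑ i, ∫ ω, |x j ω i| ^ (2 * n + 2) ∂μ j + ((r j : ℝ) ^ k) ^ (2 * n + 2)) := by
  obtain ⟨u, hu, v, ⟨hv, hvc⟩, huv⟩ := Submodule.mem_sup.1 hxy
  have hvc' : (fun j ω => ((r j : ℝ)⁻¹) ^ 1 • v j ω) ∈ centered (ι → ℝ) 𝓕 μ :=
    fun_smul_mem_centered (fun j => (r j : ℝ)⁻¹ ^ 1) hvc
  obtain ⟨C, hC⟩ := integral_pow_coord_add_le hrR h𝓕 hx hxp
    (inv_pow_smul_mem_incrementScale_zero hr hu) (inv_pow_smul_mem_incrementScale_zero hr hv)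
    hvc' n
  refine ⟨Fintype.card ι * C, fun j => ?_⟩
  have hy (i : ι) (ω : Ω j) : y j ω i = x j ω i + ((r j : ℝ) ^ 2 * ((r j : ℝ)⁻¹ ^ 2 • u j ω) i
      + r j * ((r j : ℝ)⁻¹ ^ 1 • v j ω) i) := by
    have h0 : (r j : ℝ) ≠ 0 := mod_cast (hr j).ne'
    have h := congrFun (congrFun (congrFun huv j) ω) i
    simp only [Pi.add_apply, Pi.sub_apply] at h
    simp only [Pi.smul_apply, smul_eq_mul]
    field_simp
    linarith
  simp only [hy]
  refine (add_le_add_left (Finset.sum_le_sum fun i _ => hC j i) _).trans_eq ?_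
  simp only [Finset.sum_add_distrib, Finset.sum_const, Finset.card_univ, nsmul_eq_mul]
  push_cast
  ring

theorem le_exp_mul_of_le_one_add_mul {a : ℕ → ℝ} {c : ℝ} {N : ℕ} (hc : 0 ≤ c) (ha : 0 ≤ a 0)
    (h : ∀ n < N, a (n + 1) ≤ (1 + c) * a n) {n : ℕ} (hn : n ≤ N) :
    a n ≤ Real.exp (n * c) * a 0 := by
  induction n with
  | zero => simp
  | succ n ih =>
    calc a (n + 1) ≤ (1 + c) * (Real.exp (n * c) * a 0) := by
          refine (h n hn).trans ?_
          gcongr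
          exact ih (Nat.le_of_succ_le hn)
      _ ≤ Real.exp c * (Real.exp (n * c) * a 0) := by
          gcongr
          linarith [Real.add_one_le_exp c]
      _ = Real.exp ((n + 1 : ℕ) * c) * a 0 := by
          rw [← mul_assoc, ← Real.exp_add]
          push_cast
          ring_nf

theorem sum_integral_pow_le_of_mem_lpBigO {x : ∀ j, Ω j → ι → ℝ}
    (hx : x ∈ lpBigO (ι → ℝ) μ r k) {n : ℕ} (hn : n ≠ 0) :
    ∃ K : ℝ≥0, ∀ j, ∑ i, ∫ ω, |x j ω i| ^ n ∂μ j ≤ K * ((r j : ℝ) ^ k) ^ n := by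
  obtain ⟨K, hK⟩ := integral_norm_rpow_le_of_mem_lpBigO hx (q := n) (by exact_mod_cast hn)
  refine ⟨Fintype.card ι * K, fun j => ?_⟩
  calc ∑ i, ∫ ω, |x j ω i| ^ n ∂μ j ≤ ∑ _i : ι, K * ((r j : ℝ) ^ k) ^ n :=
        Finset.sum_le_sum fun i _ => (integral_pow_coord_le_integral_norm_pow hn
          (mod_cast memLp_of_mem_lpBigO hx n j) i).trans (by simpa using hK j)
    _ = _ := by simp [mul_assoc]

theorem memLp_of_increments {D : ∀ j, ℕ → Ω j → E}
    (h0 : ∀ j, ∀ q : ℝ≥0, MemLp (D j 0) q (μ j))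
    (hinc : (fun (s : Σ j, Fin (N j)) ω => D s.1 (s.2 + 1) ω - D s.1 s.2 ω) ∈
      boundedInLp E (fun s => μ s.1)
          (incrementScale (fun s => μ s.1) (fun s => D s.1 s.2) (fun s => r s.1) k 2)
        ⊔ boundedInLp E (fun s => μ s.1)
          (incrementScale (fun s => μ s.1) (fun s => D s.1 s.2) (fun s => r s.1) k 1))
    (j : J) {n : ℕ} (hn : n ≤ N j) (q : ℝ≥0) : MemLp (D j n) q (μ j) := by
  obtain ⟨u, ⟨hu, huK⟩, v, ⟨hv, hvK⟩, huv⟩ := Submodule.mem_sup.1 hinc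
  induction n with
  | zero => exact h0 j q
  | succ n ih =>
    have ihn := ih (Nat.le_of_succ_le hn)
    have hscale (l : ℕ) : (r j : ℝ≥0∞) ^ l * (eLpNorm (D j n) q (μ j) + (r j : ℝ≥0∞) ^ k) < ∞ :=
      ENNReal.mul_lt_top (by simp) (ENNReal.add_lt_top.2 ⟨ihn.2, by simp⟩)
    obtain ⟨Ku, hKu⟩ := huK q
    obtain ⟨Kv, hKv⟩ := hvK q
    have hu' : MemLp (u ⟨j, n, hn⟩) q (μ j) :=
      ⟨hu ⟨j, n, hn⟩, (hKu ⟨j, n, hn⟩).trans_lt (ENNReal.mul_lt_top (by simp) (hscale 2))⟩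
    have hv' : MemLp (v ⟨j, n, hn⟩) q (μ j) :=
      ⟨hv ⟨j, n, hn⟩, (hKv ⟨j, n, hn⟩).trans_lt (ENNReal.mul_lt_top (by simp) (hscale 1))⟩
    have hD : D j (n + 1) = D j n + (u ⟨j, n, hn⟩ + v ⟨j, n, hn⟩) := by
      rw [← Pi.add_apply u v, huv]
      ext1 ω
      simp
    rw [hD]
    exact ihn.add (hu'.add hv')

theorem mem_lpBigO_of_increments [∀ j, IsProbabilityMeasure (μ j)]
    (hr : ∀ j, 0 < r j) (hrR : ∀ j, r j ≤ R) (hN : ∀ j, N j * r j ^ 2 ≤ T)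
    (h𝓢 : ∀ s, 𝓢 s ≤ mΩ s.1) {D : ∀ j, ℕ → Ω j → ι → ℝ}
    (hD : ∀ s, StronglyMeasurable[𝓢 s] (D s.1 s.2))
    (h0 : (fun j => D j 0) ∈ lpBigO (ι → ℝ) μ r k)
    (hinc : (fun s ω => D s.1 (s.2 + 1) ω - D s.1 s.2 ω) ∈ gronwallIncrement (ι → ℝ) 𝓢
      (fun s => μ s.1) (fun s => D s.1 s.2) (fun s => r s.1) k) :
    (fun s : Σ j, Fin (N j + 1) => D s.1 s.2) ∈
      lpBigO (ι → ℝ) (fun s => μ s.1) (fun s => r s.1) k := by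
  have hDp := memLp_of_increments (fun j q => memLp_of_mem_lpBigO h0 q j)
    (SetLike.le_def.1 (sup_le_sup_left inf_le_left _) hinc)
  have hDp' (s : Σ j, Fin (N j)) (q : ℝ≥0) : MemLp (D s.1 s.2) q (μ s.1) := hDp s.1 s.2.2.le q
  refine mem_lpBigO_of_integral_pow_le (fun s => hDp s.1 (Nat.lt_succ_iff.1 s.2.2)) fun n => ?_
  obtain ⟨C, hC⟩ := sum_integral_pow_le_of_increment (r := fun s => r s.1)
    (x := fun s => D s.1 s.2) (y := fun s => D s.1 (s.2 + 1)) (fun s => hr s.1) (fun s => hrR s.1)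
    h𝓢 hD hDp' hinc n
  obtain ⟨K, hK⟩ := sum_integral_pow_le_of_mem_lpBigO h0 (n := 2 * n + 2) (by omega)
  refine ⟨(Real.exp (T * C)).toNNReal * (K + 1), fun ⟨j, l⟩ => ?_⟩
  have hle := le_exp_mul_of_le_one_add_mul (N := N j)
    (a := fun l => ∑ i, ∫ ω, |D j l ω i| ^ (2 * n + 2) ∂μ j + ((r j : ℝ) ^ k) ^ (2 * n + 2))
    (c := C * r j ^ 2) (by positivity) (by positivity) (fun l hl => hC ⟨j, l, hl⟩)
    (Nat.lt_succ_iff.1 l.2)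
  calc ∫ ω, ‖D j l ω‖ ^ (2 * n + 2) ∂μ j
      ≤ ∑ i, ∫ ω, |D j l ω i| ^ (2 * n + 2) ∂μ j + ((r j : ℝ) ^ k) ^ (2 * n + 2) :=
        (integral_norm_pow_le_sum (by omega) (mod_cast hDp j (Nat.lt_succ_iff.1 l.2) _)).trans
          (le_add_of_nonneg_right (by positivity))
    _ ≤ Real.exp (l * (C * r j ^ 2)) * (∑ i, ∫ ω, |D j 0 ω i| ^ (2 * n + 2) ∂μ j
          + ((r j : ℝ) ^ k) ^ (2 * n + 2)) := hle
    _ ≤ Real.exp (T * C) * ((K + 1) * ((r j : ℝ) ^ k) ^ (2 * n + 2)) := by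
        have hl : (l : ℝ) * (C * (r j : ℝ) ^ 2) ≤ (T : ℝ) * C := by
          calc (l : ℝ) * (C * (r j : ℝ) ^ 2) = l * (r j : ℝ) ^ 2 * C := by ring
            _ ≤ N j * (r j : ℝ) ^ 2 * C := by
                gcongr
                exact Nat.lt_succ_iff.1 l.2
            _ ≤ (T : ℝ) * C := by
                gcongr
                exact_mod_cast hN j
        gcongr
        linarith [hK j]
    _ = _ := by
        rw [NNReal.coe_mul, Real.coe_toNNReal _ (Real.exp_nonneg _), NNReal.coe_add,
          NNReal.coe_one, mul_assoc]

end Gronwall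

section LinearGrowth

variable {E V : Type*} [NormedAddCommGroup E] [NormedAddCommGroup V] {φ : E → V}

/-- Continuous maps of at most linear growth. -/
structure LinearGrowth (φ : E → V) : Prop where
  continuous : Continuous φ
  exists_norm_le : ∃ C : ℝ≥0, ∀ x, ‖φ x‖ ≤ C * (1 + ‖x‖)

theorem linearGrowth_of_lipschitzWith {K : ℝ≥0} (hφ : LipschitzWith K φ) : LinearGrowth φ where
  continuous := hφ.continuous
  exists_norm_le := by
    refine ⟨‖φ 0‖₊ + K, fun x => ?_⟩
    have h : ‖φ x - φ 0‖ ≤ K * ‖x‖ := by simpa using hφ.norm_sub_le x 0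
    have h0 : 0 ≤ ‖φ 0‖ * ‖x‖ := by positivity
    push_cast
    nlinarith [norm_le_norm_sub_add (φ x) (φ 0), K.2]

end LinearGrowth

section Coefficients

variable {E V V' : Type*} [NormedAddCommGroup E] [NormedSpace ℝ E] [NormedAddCommGroup V]
  [NormedSpace ℝ V] [NormedAddCommGroup V'] [NormedSpace ℝ V'] {φ : E → V} {ψ : E → E}

/-- The regularity required of the coefficients of the scheme: Lipschitz maps with Lipschitz
derivative. -/
structure LipschitzC1 (φ : E → V) : Prop where
  differentiable : Differentiable ℝ φ
  lipschitz : ∃ K : ℝ≥0, LipschitzWith K φ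
  lipschitz_fderiv : ∃ K : ℝ≥0, LipschitzWith K (fderiv ℝ φ)

theorem lipschitzC1_of_contDiff {C : ℝ} (hφ : ContDiff ℝ 2 φ) (h1 : ∀ x, ‖fderiv ℝ φ x‖ ≤ C)
    (h2 : ∀ x, ‖iteratedFDeriv ℝ 2 φ x‖ ≤ C) : LipschitzC1 φ where
  differentiable := hφ.differentiable (by norm_num)
  lipschitz := ⟨C.toNNReal, lipschitzWith_of_nnnorm_fderiv_le (hφ.differentiable (by norm_num))
    fun x => NNReal.le_toNNReal_of_coe_le (h1 x)⟩
  lipschitz_fderiv := ⟨C.toNNReal, lipschitzWith_of_nnnorm_fderiv_le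
    ((hφ.fderiv_right (m := 1) (by norm_num)).differentiable (by norm_num)) fun x =>
      NNReal.le_toNNReal_of_coe_le <| by
        rw [coe_nnnorm, ← norm_iteratedFDeriv_one, norm_iteratedFDeriv_fderiv]
        exact h2 x⟩

namespace LipschitzC1

theorem clm_comp (hφ : LipschitzC1 φ) (L : V →L[ℝ] V') : LipschitzC1 fun x => L (φ x) where
  differentiable := L.differentiable.comp hφ.differentiable
  lipschitz := hφ.lipschitz.imp' (‖L‖₊ * ·) fun _ h => L.lipschitz.comp h
  lipschitz_fderiv := by
    obtain ⟨K, hK⟩ := hφ.lipschitz_fderiv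
    refine ⟨‖L‖₊ * K, .of_dist_le_mul fun x y => ?_⟩
    have h (x : E) : fderiv ℝ (fun x => L (φ x)) x = L.comp (fderiv ℝ φ x) :=
      (L.hasFDerivAt.comp x (hφ.differentiable x).hasFDerivAt).fderiv
    rw [h, h, dist_eq_norm, ← ContinuousLinearMap.comp_sub, NNReal.coe_mul, mul_assoc]
    exact (L.opNorm_comp_le _).trans <| by
      gcongr
      · rfl
      · exact dist_eq_norm (fderiv ℝ φ x) _ ▸ hK.dist_le_mul x y

theorem continuous (hφ : LipschitzC1 φ) : Continuous φ := hφ.differentiable.continuous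

theorem continuous_fderiv (hφ : LipschitzC1 φ) : Continuous (fderiv ℝ φ) :=
  let ⟨_, h⟩ := hφ.lipschitz_fderiv
  h.continuous

theorem exists_norm_sub_sub_fderiv_le (hφ : LipschitzC1 φ) :
    ∃ C : ℝ≥0, ∀ x y, ‖φ y - φ x - fderiv ℝ φ x (y - x)‖ ≤ C * ‖y - x‖ ^ 2 := by
  obtain ⟨C, hC⟩ := hφ.lipschitz_fderiv
  refine ⟨C, fun x y => ?_⟩
  have h := (convex_segment x y).norm_image_sub_le_of_norm_fderiv_le' (𝕜 := ℝ) (φ := fderiv ℝ φ x)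
    (C := C * ‖y - x‖) (fun z _ => hφ.differentiable z) (fun z hz => ?_)
    (left_mem_segment ℝ x y) (right_mem_segment ℝ x y)
  · exact h.trans_eq (by ring)
  · refine (hC.norm_sub_le z x).trans ?_
    gcongr
    exact norm_sub_le_of_mem_segment hz

theorem exists_norm_midpoint_sub_le (hφ : LipschitzC1 φ) :
    ∃ C : ℝ≥0, ∀ x y, ‖midpoint ℝ (φ x) (φ y) - φ (midpoint ℝ x y)‖ ≤ C * ‖y - x‖ ^ 2 := by
  obtain ⟨C, hC⟩ := hφ.exists_norm_sub_sub_fderiv_le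
  refine ⟨C, fun x y => ?_⟩
  set c := midpoint ℝ x y with hc
  have hxc : x - c = (2⁻¹ : ℝ) • (x - y) := by simp [hc, left_sub_midpoint]
  have hyc : y - c = (2⁻¹ : ℝ) • (y - x) := by simp [hc, right_sub_midpoint]
  have hsplit : midpoint ℝ (φ x) (φ y) - φ c = (2⁻¹ : ℝ) •
      ((φ x - φ c - fderiv ℝ φ c (x - c)) + (φ y - φ c - fderiv ℝ φ c (y - c))) := by
    rw [hxc, hyc, midpoint_eq_smul_add, ← neg_sub y x]
    simp only [map_smul, map_neg, smul_neg, invOf_eq_inv]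
    module
  have hx : ‖x - c‖ = 2⁻¹ * ‖y - x‖ := by rw [hxc, norm_smul, norm_sub_rev]; norm_num
  have hy : ‖y - c‖ = 2⁻¹ * ‖y - x‖ := by rw [hyc, norm_smul]; norm_num
  calc ‖midpoint ℝ (φ x) (φ y) - φ c‖
      ≤ 2⁻¹ * (C * ‖x - c‖ ^ 2 + C * ‖y - c‖ ^ 2) := by
        rw [hsplit, norm_smul, norm_inv, Real.norm_two]
        gcongr
        exact (norm_add_le _ _).trans (add_le_add (hC c x) (hC c y))
    _ = 4⁻¹ * (C * ‖y - x‖ ^ 2) := by rw [hx, hy]; ring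
    _ ≤ C * ‖y - x‖ ^ 2 := mul_le_of_le_one_left (by positivity) (by norm_num)

end LipschitzC1

theorem LipschitzC1.linearGrowth (hφ : LipschitzC1 φ) : LinearGrowth φ :=
  let ⟨_, h⟩ := hφ.lipschitz
  linearGrowth_of_lipschitzWith h

theorem LipschitzC1.linearGrowth_fderiv (hφ : LipschitzC1 φ) : LinearGrowth (fderiv ℝ φ) :=
  let ⟨_, h⟩ := hφ.lipschitz_fderiv
  linearGrowth_of_lipschitzWith h

variable {κ : Type*} {σ : κ → E → E}

/-- The coefficient `½ Dσ_k(x) σ_j(x)` of `w_j w_k - δ_{jk} Δt` in the Milstein scheme; its `i`-th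
coordinate is the `h_{ijk}` of the paper. -/
noncomputable def milsteinCoeff (σ : κ → E → E) (j k : κ) (x : E) : E :=
  (2⁻¹ : ℝ) • fderiv ℝ (σ k) x (σ j x)

theorem linearGrowth_milsteinCoeff (hσ : ∀ k, LipschitzC1 (σ k)) (j k : κ) :
    LinearGrowth (milsteinCoeff σ j k) where
  continuous := ((hσ k).continuous_fderiv.clm_apply (hσ j).continuous).const_smul _
  exists_norm_le := by
    obtain ⟨K, hK⟩ := (hσ k).lipschitz
    obtain ⟨C, hC⟩ := (hσ j).linearGrowth.exists_norm_le
    refine ⟨K * C, fun x => ?_⟩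
    calc ‖milsteinCoeff σ j k x‖ ≤ 1 * (K * (C * (1 + ‖x‖))) := by
          rw [milsteinCoeff, norm_smul]
          gcongr
          · norm_num
          · exact (ContinuousLinearMap.le_opNorm _ _).trans <| by
              gcongr
              exacts [norm_fderiv_le_of_lipschitz ℝ hK, hC x]
      _ = (K * C : ℝ≥0) * (1 + ‖x‖) := by push_cast; ring

end Coefficients

theorem fun_midpoint_mem {J : Type*} {Ω : J → Type*} {E : Type*} [NormedAddCommGroup E]
    [NormedSpace ℝ E] {S : Submodule ℝ (∀ j, Ω j → E)} {x y : ∀ j, Ω j → E} (hx : x ∈ S)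
    (hy : y ∈ S) : (fun j ω => midpoint ℝ (x j ω) (y j ω)) ∈ S := by
  simp only [midpoint_eq_smul_add]
  exact S.smul_mem _ (S.add_mem hx hy)

theorem fun_sum_mem {ι J : Type*} [Fintype ι] {Ω : J → Type*} {E : Type*} [NormedAddCommGroup E]
    [NormedSpace ℝ E] {S : Submodule ℝ (∀ j, Ω j → E)} {Y : ι → ∀ j, Ω j → E} (h : ∀ i, Y i ∈ S) :
    (fun j ω => ∑ i, Y i j ω) ∈ S := by
  convert S.sum_mem fun i (_ : i ∈ Finset.univ) => h i using 1
  ext j ω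
  simp

section CoefficientFamilies

variable {J : Type*} {Ω : J → Type*} [∀ j, MeasurableSpace (Ω j)]
  {μ : ∀ j, Measure (Ω j)} {r : J → ℝ≥0}
  {E V : Type*} [NormedAddCommGroup E] [NormedSpace ℝ E] [NormedAddCommGroup V]
  [NormedSpace ℝ V] {φ : E → V} {x y : ∀ j, Ω j → E} {k : ℕ}

theorem sub_mem_boundedInLp_of_lipschitzWith {ρ : ℝ≥0 → J → ℝ≥0∞} {K : ℝ≥0}
    (hφ : LipschitzWith K φ) (hx : ∀ j, AEStronglyMeasurable (x j) (μ j))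
    (hy : ∀ j, AEStronglyMeasurable (y j) (μ j)) (hxy : y - x ∈ boundedInLp E μ ρ) :
    (fun j ω => φ (y j ω) - φ (x j ω)) ∈ boundedInLp V μ ρ :=
  mem_boundedInLp_of_norm_le hxy (fun j => (hφ.continuous.comp_aestronglyMeasurable (hy j)).sub
    (hφ.continuous.comp_aestronglyMeasurable (hx j))) K fun j ω => hφ.norm_sub_le (y j ω) (x j ω)

theorem sq_norm_mem_lpBigO (hx : x ∈ lpBigO E μ r k) :
    (fun j ω => ‖x j ω‖ ^ 2) ∈ lpBigO ℝ μ r (k + k) := by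
  simpa [sq] using smul_mem_lpBigO (norm_mem_boundedInLp hx) (norm_mem_boundedInLp hx)

theorem LipschitzC1.sub_mem_lpBigO (hφ : LipschitzC1 φ) (hx : x ∈ lpBigO E μ r 0)
    (hy : y ∈ lpBigO E μ r 0) (hxy : y - x ∈ lpBigO E μ r k) :
    (fun j ω => φ (y j ω) - φ (x j ω)) ∈ lpBigO V μ r k :=
  let ⟨_, h⟩ := hφ.lipschitz
  sub_mem_boundedInLp_of_lipschitzWith h hx.1 hy.1 hxy

variable [∀ j, IsProbabilityMeasure (μ j)]

theorem LinearGrowth.comp_mem_incrementScale (hφ : LinearGrowth φ)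
    (hx : ∀ j, AEStronglyMeasurable (x j) (μ j)) :
    (fun j ω => φ (x j ω)) ∈ boundedInLp V μ (incrementScale μ x r 0 0) := by
  obtain ⟨C, hC⟩ := hφ.exists_norm_le
  have h1 : (fun _ _ => (1 : ℝ)) ∈ boundedInLp ℝ μ (incrementScale μ x r 0 0) :=
    boundedInLp_mono (fun q => ⟨1, fun j => by simp [incrementScale]⟩)
      (const_mem_lpBigO_zero (r := r) (1 : ℝ))
  have h2 : (fun j ω => ‖x j ω‖) ∈ boundedInLp ℝ μ (incrementScale μ x r 0 0) :=
    norm_mem_boundedInLp ⟨hx, fun q => ⟨1, fun j => by simp [incrementScale]⟩⟩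
  refine mem_boundedInLp_of_norm_le (add_mem h1 h2)
    (fun j => hφ.continuous.comp_aestronglyMeasurable (hx j)) C fun j ω => ?_
  simpa [abs_of_nonneg (add_nonneg zero_le_one (norm_nonneg (x j ω)))] using hC (x j ω)

theorem LinearGrowth.comp_mem_lpBigO_zero (hφ : LinearGrowth φ) (hx : x ∈ lpBigO E μ r 0) :
    (fun j ω => φ (x j ω)) ∈ lpBigO V μ r 0 := by
  have h := hφ.comp_mem_incrementScale (r := r) hx.1
  refine boundedInLp_mono (fun q => ?_) h
  obtain ⟨K, hK⟩ := hx.2 q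
  refine ⟨K + 1, fun j => ?_⟩
  simpa [incrementScale] using add_le_add_left (hK j) 1

theorem LipschitzC1.sub_sub_fderiv_mem_lpBigO (hφ : LipschitzC1 φ) (hx : x ∈ lpBigO E μ r 0)
    (hy : y ∈ lpBigO E μ r 0) (hxy : y - x ∈ lpBigO E μ r k) :
    (fun j ω => φ (y j ω) - φ (x j ω) - fderiv ℝ φ (x j ω) (y j ω - x j ω))
      ∈ lpBigO V μ r (k + k) := by
  obtain ⟨C, hC⟩ := hφ.exists_norm_sub_sub_fderiv_le
  have hDx := clm_apply_mem_lpBigO (hφ.linearGrowth_fderiv.comp_mem_lpBigO_zero hx) hxy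
  have hmeas (j : J) := (((hφ.linearGrowth.comp_mem_lpBigO_zero hy).1 j).sub
    ((hφ.linearGrowth.comp_mem_lpBigO_zero hx).1 j)).sub (hDx.1 j)
  refine mem_boundedInLp_of_norm_le (sq_norm_mem_lpBigO hxy) hmeas C fun j ω => ?_
  simpa using hC (x j ω) (y j ω)

theorem LipschitzC1.midpoint_sub_mem_lpBigO (hφ : LipschitzC1 φ) (hx : x ∈ lpBigO E μ r 0)
    (hy : y ∈ lpBigO E μ r 0) (hxy : y - x ∈ lpBigO E μ r k) :
    (fun j ω => midpoint ℝ (φ (x j ω)) (φ (y j ω)) - φ (midpoint ℝ (x j ω) (y j ω)))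
      ∈ lpBigO V μ r (k + k) := by
  obtain ⟨C, hC⟩ := hφ.exists_norm_midpoint_sub_le
  have hmeas := sub_mem
    (fun_midpoint_mem (hφ.linearGrowth.comp_mem_lpBigO_zero hx)
      (hφ.linearGrowth.comp_mem_lpBigO_zero hy))
    (hφ.linearGrowth.comp_mem_lpBigO_zero (fun_midpoint_mem hx hy))
  refine mem_boundedInLp_of_norm_le (sq_norm_mem_lpBigO hxy) hmeas.1 C fun j ω => ?_
  simpa using hC (x j ω) (y j ω)

theorem milsteinCoeff_sub_mem_lpBigO {κ : Type*} {σ : κ → E → E} (hσ : ∀ k, LipschitzC1 (σ k))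
    (hx : x ∈ lpBigO E μ r 0) (hy : y ∈ lpBigO E μ r 0) (hxy : y - x ∈ lpBigO E μ r k) (a b : κ) :
    (fun j ω => milsteinCoeff σ a b (y j ω) - milsteinCoeff σ a b (x j ω)) ∈ lpBigO E μ r k := by
  have hfderiv : (fun j ω => fderiv ℝ (σ b) (y j ω) - fderiv ℝ (σ b) (x j ω))
      ∈ lpBigO (E →L[ℝ] E) μ r k :=
    let ⟨_, h⟩ := (hσ b).lipschitz_fderiv
    sub_mem_boundedInLp_of_lipschitzWith h hx.1 hy.1 hxy
  have h1 := clm_apply_mem_lpBigO hfderiv ((hσ a).linearGrowth.comp_mem_lpBigO_zero hy)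
  have h2 := clm_apply_mem_lpBigO ((hσ b).linearGrowth_fderiv.comp_mem_lpBigO_zero hx)
    ((hσ a).sub_mem_lpBigO hx hy hxy)
  rw [zero_add] at h2
  convert (lpBigO E μ r k).smul_mem (2⁻¹ : ℝ) (add_mem h1 h2) using 3
  simp [milsteinCoeff, smul_sub]

theorem midpoint_milsteinCoeff_sub_mem_lpBigO {κ : Type*} {σ : κ → E → E}
    (hσ : ∀ k, LipschitzC1 (σ k)) (hx : x ∈ lpBigO E μ r 0) (hy : y ∈ lpBigO E μ r 0)
    (hxy : y - x ∈ lpBigO E μ r k) (a b : κ) :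
    (fun j ω => midpoint ℝ (milsteinCoeff σ a b (x j ω)) (milsteinCoeff σ a b (y j ω))
      - milsteinCoeff σ a b (midpoint ℝ (x j ω) (y j ω))) ∈ lpBigO E μ r k := by
  have hm := fun_midpoint_mem hx hy
  have hxm : x - (fun j ω => midpoint ℝ (x j ω) (y j ω)) ∈ lpBigO E μ r k := by
    convert Submodule.smul_mem _ (-⅟2 : ℝ) hxy using 1
    ext j ω
    simp [-invOf_eq_inv, ← smul_neg]
  have hym : y - (fun j ω => midpoint ℝ (x j ω) (y j ω)) ∈ lpBigO E μ r k := by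
    convert Submodule.smul_mem _ (⅟2 : ℝ) hxy using 1
    ext j ω
    simp [-invOf_eq_inv]
  convert fun_midpoint_mem (milsteinCoeff_sub_mem_lpBigO hσ hm hx hxm a b)
    (milsteinCoeff_sub_mem_lpBigO hσ hm hy hym a b) using 3 with j ω
  simp only [midpoint_eq_smul_add, invOf_eq_inv]
  module

end CoefficientFamilies

section Scheme

variable {κ E : Type*} [Fintype κ] [DecidableEq κ] [NormedAddCommGroup E] [NormedSpace ℝ E]

/-- The stochastic part of the increment of the Milstein scheme over a step of length `dt`. -/
noncomputable def noise (σ : κ → E → E) (dt : ℝ) (x : E) (w : κ → ℝ) : E :=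
  ∑ k, w k • σ k x
    + ∑ j, ∑ k, (w j * w k - if j = k then dt else 0) • milsteinCoeff σ j k x

/-- The Milstein scheme without Lévy areas for a drift `f` and a family of vector fields `σ k`, the
columns of the diffusion matrix; this is the coordinate-free form of `milsteinStep`. -/
noncomputable def schemeStep (f : E → E) (σ : κ → E → E) (dt : ℝ) (x : E) (w : κ → ℝ) : E :=
  x + (dt • f x + noise σ dt x w)

theorem noise_mem {J : Type*} {Ω : J → Type*} {S : Submodule ℝ (∀ j, Ω j → E)} {σ : κ → E → E}
    {dt : J → ℝ} {x : ∀ j, Ω j → E} {w : ∀ j, Ω j → κ → ℝ}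
    (hlin : ∀ k, (fun j ω => w j ω k • σ k (x j ω)) ∈ S)
    (hquad : ∀ a b, (fun j ω => (w j ω a * w j ω b - if a = b then dt j else 0)
      • milsteinCoeff σ a b (x j ω)) ∈ S) :
    (fun j ω => noise σ (dt j) (x j ω) (w j ω)) ∈ S :=
  add_mem (fun_sum_mem hlin) (fun_sum_mem fun a => fun_sum_mem (hquad a))

end Scheme

section BrownianIncrements

variable {J : Type*} {Ω : J → Type*} {κ : Type*} [DecidableEq κ]

/-- `w j` behaves like the increment of a `κ`-dimensional Brownian motion over a time `c * r j ^ 2`,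
given the past `𝓕 j`. -/
structure IsIncrement (𝓕 : ∀ j, MeasurableSpace (Ω j)) [∀ j, MeasurableSpace (Ω j)]
    (μ : ∀ j, Measure (Ω j)) (r : J → ℝ≥0) (c : ℝ) (w : ∀ j, Ω j → κ → ℝ) : Prop where
  indep : ∀ j, Indep (MeasurableSpace.comap (w j) inferInstance) (𝓕 j) (μ j)
  mem_martDiff : ∀ k, (fun j ω => w j ω k) ∈ martDiff ℝ 𝓕 μ r 1
  mul_sub_mem_martDiff : ∀ k l,
    (fun j ω => w j ω k * w j ω l - if k = l then c * r j ^ 2 else 0) ∈ martDiff ℝ 𝓕 μ r 2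

end BrownianIncrements

section OneStep

variable {J : Type*} {Ω : J → Type*} {𝓕 : ∀ j, MeasurableSpace (Ω j)}
  [mΩ : ∀ j, MeasurableSpace (Ω j)] {μ : ∀ j, Measure (Ω j)} {r : J → ℝ≥0} {R : ℝ≥0} {c : ℝ}
  {E F κ : Type*} [NormedAddCommGroup E] [NormedSpace ℝ E] [NormedAddCommGroup F]
  {k l : ℕ}

theorem incrementScale_anti {x : ∀ j, Ω j → F} (hr : ∀ j, r j ≤ R) {l l' : ℕ} (hl : l ≤ l') :
    boundedInLp E μ (incrementScale μ x r k l') ≤ boundedInLp E μ (incrementScale μ x r k l) := by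
  refine boundedInLp_mono fun q => ⟨R ^ (l' - l), fun j => ?_⟩
  rw [incrementScale, incrementScale, ← mul_assoc]
  gcongr
  norm_cast
  calc r j ^ l' = r j ^ (l' - l) * r j ^ l := by rw [← pow_add, Nat.sub_add_cancel hl]
    _ ≤ R ^ (l' - l) * r j ^ l := by gcongr; exact hr j

theorem pow_smul_mem_incrementScale {x : ∀ j, Ω j → F} {Y : ∀ j, Ω j → E}
    (hY : Y ∈ boundedInLp E μ (incrementScale μ x r k 0)) (l : ℕ) :
    (fun j ω => (r j : ℝ) ^ l • Y j ω) ∈ boundedInLp E μ (incrementScale μ x r k l) := by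
  convert pow_smul_mem_boundedInLp (r := r) l hY using 4
  simp [incrementScale]

theorem smul_mem_incrementScale_of_indep [MeasurableSpace E] [BorelSpace E] {x : ∀ j, Ω j → F}
    {Y : ∀ j, Ω j → E} {ξ : ∀ j, Ω j → ℝ} (hξ : ξ ∈ lpBigO ℝ μ r l)
    (h : ∀ j, Indep (MeasurableSpace.comap (ξ j) inferInstance) (𝓕 j) (μ j))
    (hYm : ∀ j, StronglyMeasurable[𝓕 j] (Y j))
    (hY : Y ∈ boundedInLp E μ (incrementScale μ x r k 0)) :
    (fun j ω => ξ j ω • Y j ω) ∈ boundedInLp E μ (incrementScale μ x r k l) := by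
  have hind (j : J) : ξ j ⟂ᵢ[μ j] Y j :=
    (IndepFun_iff_Indep _ _ _).2 (indep_of_indep_of_le_right (h j) (hYm j).measurable.comap_le)
  convert smul_mem_boundedInLp_of_indepFun hξ hY hind using 2
  ext q j
  simp [incrementScale]

theorem smul_mem_centered_of_indep [CompleteSpace E] [MeasurableSpace E] [BorelSpace E]
    {x : ∀ j, Ω j → F} {Y : ∀ j, Ω j → E} {ξ : ∀ j, Ω j → ℝ} (hξ : ξ ∈ martDiff ℝ 𝓕 μ r l)
    (h : ∀ j, Indep (MeasurableSpace.comap (ξ j) inferInstance) (𝓕 j) (μ j))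
    (hYm : ∀ j, StronglyMeasurable[𝓕 j] (Y j))
    (hY : Y ∈ boundedInLp E μ (incrementScale μ x r k 0))
    (hx : ∀ j, ∀ q : ℝ≥0, MemLp (x j) q (μ j)) :
    (fun j ω => ξ j ω • Y j ω) ∈ centered E 𝓕 μ :=
  smul_mem_centered hξ.2 hYm fun j => memLp_one_iff_integrable.1 <| by
    simpa using memLp_of_mem_boundedInLp (smul_mem_incrementScale_of_indep hξ.1 h hYm hY)
      (incrementScale_ne_top hx) 1 j

variable [DecidableEq κ] {w : ∀ j, Ω j → κ → ℝ}

theorem IsIncrement.indep_apply (hw : IsIncrement 𝓕 μ r c w) (k : κ) (j : J) :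
    Indep (MeasurableSpace.comap (fun ω => w j ω k) inferInstance) (𝓕 j) (μ j) :=
  indep_of_indep_of_le_left (hw.indep j)
    ((measurable_pi_apply k).comp (comap_measurable (w j))).comap_le

theorem IsIncrement.indep_mul_sub (hw : IsIncrement 𝓕 μ r c w) (a b : κ) (j : J) :
    Indep (MeasurableSpace.comap
      (fun ω => w j ω a * w j ω b - if a = b then c * r j ^ 2 else 0) inferInstance)
      (𝓕 j) (μ j) :=
  indep_of_indep_of_le_left (hw.indep j) <| Measurable.comap_le <|
    (show Measurable fun v : κ → ℝ => v a * v b - if a = b then c * (r j : ℝ) ^ 2 else 0 by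
      fun_prop).comp (comap_measurable _)

variable [Fintype κ] {σ : κ → E → E} {f : E → E} {x : ∀ j, Ω j → E}

variable [∀ j, IsProbabilityMeasure (μ j)]

theorem drift_mem_incrementScale (hf : LipschitzC1 f)
    (hx : ∀ j, AEStronglyMeasurable (x j) (μ j)) :
    (fun j ω => (c * (r j : ℝ) ^ 2) • f (x j ω))
      ∈ boundedInLp E μ (incrementScale μ x r 0 2) := by
  simp only [mul_smul]
  exact Submodule.smul_mem _ c
    (pow_smul_mem_incrementScale (hf.linearGrowth.comp_mem_incrementScale hx) 2)

variable [MeasurableSpace E] [BorelSpace E]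

theorem noise_mem_incrementScale (h𝓕 : ∀ j, 𝓕 j ≤ mΩ j) (hrR : ∀ j, r j ≤ R)
    (hw : IsIncrement 𝓕 μ r c w) (hσ : ∀ k, LipschitzC1 (σ k))
    (hx : ∀ j, StronglyMeasurable[𝓕 j] (x j)) :
    (fun j ω => noise σ (c * r j ^ 2) (x j ω) (w j ω))
      ∈ boundedInLp E μ (incrementScale μ x r 0 1) := by
  have hx' (j : J) : AEStronglyMeasurable (x j) (μ j) := ((hx j).mono (h𝓕 j)).aestronglyMeasurable
  refine noise_mem (fun k => ?_) (fun a b => incrementScale_anti hrR one_le_two ?_)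
  · exact smul_mem_incrementScale_of_indep (hw.mem_martDiff k).1 (hw.indep_apply k)
      (fun j => (hσ k).continuous.comp_stronglyMeasurable (hx j))
      ((hσ k).linearGrowth.comp_mem_incrementScale hx')
  · have hh := linearGrowth_milsteinCoeff hσ a b
    exact smul_mem_incrementScale_of_indep (hw.mul_sub_mem_martDiff a b).1 (hw.indep_mul_sub a b)
      (fun j => hh.continuous.comp_stronglyMeasurable (hx j)) (hh.comp_mem_incrementScale hx')

theorem noise_mem_centered [CompleteSpace E] (hw : IsIncrement 𝓕 μ r c w)
    (hσ : ∀ k, LipschitzC1 (σ k)) (hx : ∀ j, StronglyMeasurable[𝓕 j] (x j))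
    (hxp : ∀ j, ∀ q : ℝ≥0, MemLp (x j) q (μ j)) :
    (fun j ω => noise σ (c * r j ^ 2) (x j ω) (w j ω)) ∈ centered E 𝓕 μ := by
  refine noise_mem (fun k => ?_) (fun a b => ?_)
  · exact smul_mem_centered_of_indep (hw.mem_martDiff k) (hw.indep_apply k)
      (fun j => (hσ k).continuous.comp_stronglyMeasurable (hx j))
      ((hσ k).linearGrowth.comp_mem_incrementScale fun j => (hxp j 0).1) hxp
  · have hh := linearGrowth_milsteinCoeff hσ a b
    exact smul_mem_centered_of_indep (hw.mul_sub_mem_martDiff a b) (hw.indep_mul_sub a b)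
      (fun j => hh.continuous.comp_stronglyMeasurable (hx j))
      (hh.comp_mem_incrementScale fun j => (hxp j 0).1) hxp

end OneStep

section SchemeMoments

variable {J : Type*} {Ω : J → Type*} {N : J → ℕ}
  {𝓢 : ∀ s : Σ j, Fin (N j), MeasurableSpace (Ω s.1)}
  [mΩ : ∀ j, MeasurableSpace (Ω j)] {μ : ∀ j, Measure (Ω j)} [∀ j, IsProbabilityMeasure (μ j)]
  {r : J → ℝ≥0} {T R : ℝ≥0} {c : ℝ} {ι κ : Type*} [Fintype ι] [Fintype κ] [DecidableEq κ]
  {f : (ι → ℝ) → ι → ℝ} {σ : κ → (ι → ℝ) → ι → ℝ}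

theorem scheme_mem_lpBigO_zero (hr : ∀ j, 0 < r j) (hrR : ∀ j, r j ≤ R)
    (hN : ∀ j, N j * r j ^ 2 ≤ T) (h𝓢 : ∀ s, 𝓢 s ≤ mΩ s.1)
    {w : ∀ s : Σ j, Fin (N j), Ω s.1 → κ → ℝ}
    (hw : IsIncrement 𝓢 (fun s => μ s.1) (fun s => r s.1) c w)
    (hf : LipschitzC1 f) (hσ : ∀ k, LipschitzC1 (σ k)) {X : ∀ j, ℕ → Ω j → ι → ℝ}
    (hX : ∀ s, StronglyMeasurable[𝓢 s] (X s.1 s.2))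
    (h0 : (fun j => X j 0) ∈ lpBigO (ι → ℝ) μ r 0)
    (hstep : ∀ s ω, X s.1 (s.2 + 1) ω
      = schemeStep f σ (c * r s.1 ^ 2) (X s.1 s.2 ω) (w s ω)) :
    (fun s : Σ j, Fin (N j + 1) => X s.1 s.2) ∈
      lpBigO (ι → ℝ) (fun s => μ s.1) (fun s => r s.1) 0 := by
  have hinc : (fun (s : Σ j, Fin (N j)) ω => X s.1 (s.2 + 1) ω - X s.1 s.2 ω)
      = (fun s ω => (c * (r s.1 : ℝ) ^ 2) • f (X s.1 s.2 ω))
        + fun s ω => noise σ (c * r s.1 ^ 2) (X s.1 s.2 ω) (w s ω) := by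
    ext s ω
    simp [hstep, schemeStep]
  have hXm (s : Σ j, Fin (N j)) := ((hX s).mono (h𝓢 s)).aestronglyMeasurable (μ := μ s.1)
  have hdrift := drift_mem_incrementScale (r := fun s : Σ j, Fin (N j) => r s.1) (c := c) hf hXm
  have hnoise := noise_mem_incrementScale h𝓢 (fun s => hrR s.1) hw hσ hX
  have hXp := memLp_of_increments (fun j q => memLp_of_mem_lpBigO h0 q j)
    (hinc ▸ Submodule.add_mem_sup hdrift hnoise)
  refine mem_lpBigO_of_increments hr hrR hN h𝓢 hX h0 ?_
  rw [hinc]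
  exact Submodule.add_mem_sup hdrift
    ⟨hnoise, noise_mem_centered hw hσ hX fun s => hXp s.1 s.2.2.le⟩

end SchemeMoments

section LocalErrors

variable {J : Type*} {Ω : J → Type*}

/-- The one-step errors which accumulate to a global error `O(r ^ k)` over `O(r ^ (-2))` steps:
errors `O(r ^ (k + 2))`, and martingale differences `O(r ^ (k + 1))`. -/
noncomputable abbrev localError (E : Type*) [NormedAddCommGroup E] [NormedSpace ℝ E]
    [CompleteSpace E] (𝓕 : ∀ j, MeasurableSpace (Ω j)) [∀ j, MeasurableSpace (Ω j)]
    (μ : ∀ j, Measure (Ω j)) (r : J → ℝ≥0) (k : ℕ) : Submodule ℝ (∀ j, Ω j → E) :=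
  lpBigO E μ r (k + 2) ⊔ martDiff E 𝓕 μ r (k + 1)

end LocalErrors

section Stability

variable {J : Type*} {Ω : J → Type*} {𝓕 : ∀ j, MeasurableSpace (Ω j)}
  [mΩ : ∀ j, MeasurableSpace (Ω j)] {μ : ∀ j, Measure (Ω j)} {r : J → ℝ≥0} {R : ℝ≥0} {c : ℝ}
  {E F κ : Type*} [NormedAddCommGroup E] [NormedSpace ℝ E] [NormedAddCommGroup F] {k l : ℕ}

theorem lpBigO_le_incrementScale {x : ∀ j, Ω j → F} :
    lpBigO E μ r (k + l) ≤ boundedInLp E μ (incrementScale μ x r k l) := by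
  refine boundedInLp_mono fun q => ⟨1, fun j => ?_⟩
  rw [ENNReal.coe_one, one_mul, incrementScale, add_comm, pow_add]
  gcongr
  exact le_add_self

variable {x y : ∀ j, Ω j → E}

theorem LipschitzC1.sub_mem_incrementScale {ψ : E → E} (hψ : LipschitzC1 ψ)
    (hx : ∀ j, AEStronglyMeasurable (x j) (μ j)) (hy : ∀ j, AEStronglyMeasurable (y j) (μ j)) :
    (fun j ω => ψ (y j ω) - ψ (x j ω)) ∈ boundedInLp E μ (incrementScale μ (y - x) r k 0) :=
  let ⟨_, h⟩ := hψ.lipschitz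
  sub_mem_boundedInLp_of_lipschitzWith h hx hy
    ⟨fun j => (hy j).sub (hx j), fun q => ⟨1, fun j => by simp [incrementScale]⟩⟩

variable [CompleteSpace E]

theorem localError_le_gronwallIncrement {x : ∀ j, Ω j → F} :
    localError E 𝓕 μ r k ≤ gronwallIncrement E 𝓕 μ x r k :=
  sup_le_sup lpBigO_le_incrementScale (inf_le_inf_right _ lpBigO_le_incrementScale)

variable [Fintype κ] [DecidableEq κ] {w : ∀ j, Ω j → κ → ℝ} [MeasurableSpace E] [BorelSpace E]
  [∀ j, IsProbabilityMeasure (μ j)] {σ : κ → E → E} {f : E → E}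

theorem noise_sub_mem_gronwallIncrement (hw : IsIncrement 𝓕 μ r c w)
    (hσ : ∀ k, LipschitzC1 (σ k)) (hxm : ∀ j, StronglyMeasurable[𝓕 j] (x j))
    (hym : ∀ j, StronglyMeasurable[𝓕 j] (y j)) (hx : x ∈ lpBigO E μ r 0)
    (hy : y ∈ lpBigO E μ r 0) (hxy : y - x ∈ lpBigO E μ r k) :
    (fun j ω => noise σ (c * r j ^ 2) (y j ω) (w j ω) - noise σ (c * r j ^ 2) (x j ω) (w j ω))
      ∈ gronwallIncrement E 𝓕 μ (y - x) r (k + 1) := by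
  have hlin (a : κ) : (fun j ω => w j ω a • (σ a (y j ω) - σ a (x j ω))) ∈
      gronwallIncrement E 𝓕 μ (y - x) r (k + 1) := by
    have hm (j : J) := ((hσ a).continuous.comp_stronglyMeasurable (hym j)).sub
      ((hσ a).continuous.comp_stronglyMeasurable (hxm j))
    have hlip := (hσ a).sub_mem_incrementScale (r := r) (k := k + 1) hx.1 hy.1
    exact Submodule.mem_sup_right
      ⟨smul_mem_incrementScale_of_indep (hw.mem_martDiff a).1 (hw.indep_apply a) hm hlip,
        smul_mem_centered_of_indep (hw.mem_martDiff a) (hw.indep_apply a) hm hlip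
          fun j q => memLp_of_mem_lpBigO hxy q j⟩
  have hquad (a b : κ) : (fun j ω => (w j ω a * w j ω b - if a = b then c * r j ^ 2 else 0)
      • (milsteinCoeff σ a b (y j ω) - milsteinCoeff σ a b (x j ω))) ∈
      gronwallIncrement E 𝓕 μ (y - x) r (k + 1) := by
    have hc := (linearGrowth_milsteinCoeff hσ a b).continuous
    have h := smul_mem_martDiff (hw.mul_sub_mem_martDiff a b)
      (milsteinCoeff_sub_mem_lpBigO hσ hx hy hxy a b)
      fun j => (hc.comp_stronglyMeasurable (hym j)).sub (hc.comp_stronglyMeasurable (hxm j))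
    rw [show 2 + k = k + 1 + 1 by ring] at h
    exact localError_le_gronwallIncrement (Submodule.mem_sup_right h)
  convert add_mem (fun_sum_mem hlin) (fun_sum_mem fun a => fun_sum_mem (hquad a)) using 1
  ext j ω
  simp only [noise, Pi.add_apply, smul_sub, Finset.sum_sub_distrib]
  abel

theorem schemeStep_sub_sub_mem (hw : IsIncrement 𝓕 μ r c w) (hf : LipschitzC1 f)
    (hσ : ∀ k, LipschitzC1 (σ k)) (hxm : ∀ j, StronglyMeasurable[𝓕 j] (x j))
    (hym : ∀ j, StronglyMeasurable[𝓕 j] (y j)) (hx : x ∈ lpBigO E μ r 0)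
    (hy : y ∈ lpBigO E μ r 0) (hxy : y - x ∈ lpBigO E μ r k) :
    (fun j ω => schemeStep f σ (c * r j ^ 2) (y j ω) (w j ω)
        - schemeStep f σ (c * r j ^ 2) (x j ω) (w j ω) - (y j ω - x j ω))
      ∈ gronwallIncrement E 𝓕 μ (y - x) r (k + 1) := by
  have hdrift : (fun j ω => (c * (r j : ℝ) ^ 2) • (f (y j ω) - f (x j ω))) ∈
      gronwallIncrement E 𝓕 μ (y - x) r (k + 1) := by
    simp only [mul_smul]
    exact Submodule.mem_sup_left <| Submodule.smul_mem _ c <|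
      pow_smul_mem_incrementScale (hf.sub_mem_incrementScale hx.1 hy.1) 2
  convert add_mem hdrift (noise_sub_mem_gronwallIncrement hw hσ hxm hym hx hy hxy) using 1
  ext j ω
  simp only [schemeStep, Pi.add_apply, smul_sub]
  abel

end Stability

section GlobalErrors

variable {J : Type*} {Ω : J → Type*} {N : J → ℕ}
  {𝓢 : ∀ s : Σ j, Fin (N j), MeasurableSpace (Ω s.1)}
  [mΩ : ∀ j, MeasurableSpace (Ω j)] {μ : ∀ j, Measure (Ω j)} [∀ j, IsProbabilityMeasure (μ j)]
  {r : J → ℝ≥0} {T R : ℝ≥0} {c : ℝ} {k : ℕ} {ι κ : Type*} [Fintype ι] [Fintype κ] [DecidableEq κ]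
  {f : (ι → ℝ) → ι → ℝ} {σ : κ → (ι → ℝ) → ι → ℝ}

theorem sub_mem_lpBigO_succ_of_localError (hr : ∀ j, 0 < r j) (hrR : ∀ j, r j ≤ R)
    (hN : ∀ j, N j * r j ^ 2 ≤ T) (h𝓢 : ∀ s, 𝓢 s ≤ mΩ s.1)
    {w : ∀ s : Σ j, Fin (N j), Ω s.1 → κ → ℝ}
    (hw : IsIncrement 𝓢 (fun s => μ s.1) (fun s => r s.1) c w)
    (hf : LipschitzC1 f) (hσ : ∀ k, LipschitzC1 (σ k)) {X Y : ∀ j, ℕ → Ω j → ι → ℝ}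
    (hXm : ∀ s, StronglyMeasurable[𝓢 s] (X s.1 s.2))
    (hYm : ∀ s, StronglyMeasurable[𝓢 s] (Y s.1 s.2))
    (hX : (fun s : Σ j, Fin (N j) => X s.1 s.2) ∈
      lpBigO (ι → ℝ) (fun s => μ s.1) (fun s => r s.1) 0)
    (hY : (fun s : Σ j, Fin (N j) => Y s.1 s.2) ∈
      lpBigO (ι → ℝ) (fun s => μ s.1) (fun s => r s.1) 0)
    (hYX : (fun s : Σ j, Fin (N j) => Y s.1 s.2 - X s.1 s.2) ∈
      lpBigO (ι → ℝ) (fun s => μ s.1) (fun s => r s.1) k)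
    (h0 : ∀ j, Y j 0 = X j 0)
    (hXstep : ∀ s ω, X s.1 (s.2 + 1) ω = schemeStep f σ (c * r s.1 ^ 2) (X s.1 s.2 ω) (w s ω))
    (hYstep : (fun s ω => Y s.1 (s.2 + 1) ω - schemeStep f σ (c * r s.1 ^ 2) (Y s.1 s.2 ω) (w s ω))
      ∈ localError (ι → ℝ) 𝓢 (fun s => μ s.1) (fun s => r s.1) (k + 1)) :
    (fun s : Σ j, Fin (N j + 1) => Y s.1 s.2 - X s.1 s.2) ∈
      lpBigO (ι → ℝ) (fun s => μ s.1) (fun s => r s.1) (k + 1) := by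
  refine mem_lpBigO_of_increments (D := fun j n => Y j n - X j n) hr hrR hN h𝓢
    (fun s => (hYm s).sub (hXm s)) ?_ ?_
  · simp only [h0, sub_self]
    exact zero_mem _
  · refine (congrArg (· ∈ _) ?_).mp (add_mem (localError_le_gronwallIncrement hYstep)
      (schemeStep_sub_sub_mem hw hf hσ hXm hYm hX hY hYX))
    ext s ω i
    simp only [hXstep, Pi.add_apply, Pi.sub_apply]
    ring

end GlobalErrors

section IncrementPairs

variable {J : Type*} {Ω : J → Type*} {κ : Type*}

theorem stronglyMeasurable_sup_comap (𝓕 : ∀ j, MeasurableSpace (Ω j)) (w : ∀ j, Ω j → κ → ℝ)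
    (j : J) (a : κ) :
    StronglyMeasurable[𝓕 j ⊔ MeasurableSpace.comap (w j) inferInstance] fun ω => w j ω a := by
  have h : Measurable[MeasurableSpace.comap (w j) inferInstance] fun ω => w j ω a :=
    (measurable_pi_apply a).comp (comap_measurable (w j))
  exact (h.mono le_sup_right le_rfl).stronglyMeasurable

variable [DecidableEq κ]

/-- `w j` and `w' j` behave like two consecutive Brownian increments, over a time `c * r j ^ 2`
each, after the past `𝓕 j`. -/
structure IsIncrementPair (𝓕 : ∀ j, MeasurableSpace (Ω j)) [mΩ : ∀ j, MeasurableSpace (Ω j)]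
    (μ : ∀ j, Measure (Ω j)) (r : J → ℝ≥0) (c : ℝ) (w w' : ∀ j, Ω j → κ → ℝ) : Prop where
  le : ∀ j, 𝓕 j ≤ mΩ j
  measurable_left : ∀ j, Measurable (w j)
  left : IsIncrement 𝓕 μ r c w
  right : IsIncrement (fun j => 𝓕 j ⊔ MeasurableSpace.comap (w j) inferInstance) μ r c w'

end IncrementPairs

section Pairs

variable {J : Type*} {Ω : J → Type*} {𝓕 : ∀ j, MeasurableSpace (Ω j)}
  [mΩ : ∀ j, MeasurableSpace (Ω j)] {μ : ∀ j, Measure (Ω j)} [∀ j, IsProbabilityMeasure (μ j)]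
  {r : J → ℝ≥0} {c : ℝ} {k : ℕ} {E κ : Type*} [NormedAddCommGroup E] [NormedSpace ℝ E]
  [CompleteSpace E] [DecidableEq κ] {w w' : ∀ j, Ω j → κ → ℝ}

theorem IsIncrementPair.martDiff_le (h : IsIncrementPair 𝓕 μ r c w w') :
    martDiff E (fun j => 𝓕 j ⊔ MeasurableSpace.comap (w j) inferInstance) μ r k
      ≤ martDiff E 𝓕 μ r k :=
  inf_le_inf_left _ <| centered_anti (fun _ => le_sup_left) fun j =>
    sup_le (h.le j) (h.measurable_left j).comap_le

theorem IsIncrementPair.mul_mem_martDiff (h : IsIncrementPair 𝓕 μ r c w w') (a b : κ) :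
    (fun j ω => w j ω a * w' j ω b) ∈ martDiff ℝ 𝓕 μ r 2 := by
  simpa only [smul_eq_mul, mul_comm] using h.martDiff_le <| smul_mem_martDiff
    (h.right.mem_martDiff b) (h.left.mem_martDiff a).1 fun j =>
      stronglyMeasurable_sup_comap 𝓕 w j a

theorem IsIncrementPair.sub_mem_martDiff (h : IsIncrementPair 𝓕 μ r c w w') (a b : κ) :
    (fun j ω => w j ω a * w' j ω b - w' j ω a * w j ω b) ∈ martDiff ℝ 𝓕 μ r 2 := by
  convert sub_mem (h.mul_mem_martDiff a b) (h.mul_mem_martDiff b a) using 1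
  ext j ω
  simp [mul_comm]

theorem IsIncrementPair.add (h : IsIncrementPair 𝓕 μ r c w w')
    (hind : ∀ j, Indep (MeasurableSpace.comap ((w + w') j) inferInstance) (𝓕 j) (μ j)) :
    IsIncrement 𝓕 μ r (c + c) (w + w') where
  indep := hind
  mem_martDiff a := add_mem (h.left.mem_martDiff a) (h.martDiff_le (h.right.mem_martDiff a))
  mul_sub_mem_martDiff a b := by
    convert add_mem (add_mem (h.left.mul_sub_mem_martDiff a b)
      (h.martDiff_le (h.right.mul_sub_mem_martDiff a b)))
      (add_mem (h.mul_mem_martDiff a b) (h.mul_mem_martDiff b a)) using 1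
    ext j ω
    simp only [Pi.add_apply]
    split_ifs <;> ring

end Pairs

section OneStepExpansion

variable {J : Type*} {Ω : J → Type*} {𝓕 : ∀ j, MeasurableSpace (Ω j)}
  [mΩ : ∀ j, MeasurableSpace (Ω j)] {μ : ∀ j, Measure (Ω j)} {r : J → ℝ≥0} {R : ℝ≥0} {c : ℝ}
  {E V κ : Type*} [NormedAddCommGroup E] [NormedSpace ℝ E]
  [NormedAddCommGroup V] [NormedSpace ℝ V] [Fintype κ] [DecidableEq κ] {w : ∀ j, Ω j → κ → ℝ}
  {σ : κ → E → E} {f : E → E} {φ : E → V} {x : ∀ j, Ω j → E}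

theorem pow_two_mul_smul_mem_lpBigO {Y : ∀ j, Ω j → E} {k : ℕ} (hY : Y ∈ lpBigO E μ r k) :
    (fun j ω => (c * (r j : ℝ) ^ 2) • Y j ω) ∈ lpBigO E μ r (2 + k) := by
  simp only [mul_smul]
  exact Submodule.smul_mem _ c (pow_smul_mem_lpBigO 2 hY)

variable [∀ j, IsProbabilityMeasure (μ j)]

theorem schemeStep_sub_sub_sum_mem_lpBigO (hw : IsIncrement 𝓕 μ r c w) (hf : LipschitzC1 f)
    (hσ : ∀ k, LipschitzC1 (σ k)) (hx : x ∈ lpBigO E μ r 0) :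
    (fun j ω => schemeStep f σ (c * r j ^ 2) (x j ω) (w j ω) - x j ω - ∑ k, w j ω k • σ k (x j ω))
      ∈ lpBigO E μ r 2 := by
  convert add_mem (pow_two_mul_smul_mem_lpBigO (c := c) (hf.linearGrowth.comp_mem_lpBigO_zero hx))
    (fun_sum_mem fun a => fun_sum_mem fun b => smul_mem_lpBigO (hw.mul_sub_mem_martDiff a b).1
      ((linearGrowth_milsteinCoeff hσ a b).comp_mem_lpBigO_zero hx)) using 1
  ext j ω
  simp only [schemeStep, noise, Pi.add_apply]
  abel

theorem schemeStep_sub_mem_lpBigO (hrR : ∀ j, r j ≤ R) (hw : IsIncrement 𝓕 μ r c w)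
    (hf : LipschitzC1 f) (hσ : ∀ k, LipschitzC1 (σ k)) (hx : x ∈ lpBigO E μ r 0) :
    (fun j ω => schemeStep f σ (c * r j ^ 2) (x j ω) (w j ω)) - x ∈ lpBigO E μ r 1 := by
  convert add_mem (lpBigO_anti hrR one_le_two (schemeStep_sub_sub_sum_mem_lpBigO hw hf hσ hx))
    (fun_sum_mem fun k => smul_mem_lpBigO (hw.mem_martDiff k).1
      ((hσ k).linearGrowth.comp_mem_lpBigO_zero hx)) using 1
  ext j ω
  simp

theorem schemeStep_mem_lpBigO_zero (hrR : ∀ j, r j ≤ R) (hw : IsIncrement 𝓕 μ r c w)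
    (hf : LipschitzC1 f) (hσ : ∀ k, LipschitzC1 (σ k)) (hx : x ∈ lpBigO E μ r 0) :
    (fun j ω => schemeStep f σ (c * r j ^ 2) (x j ω) (w j ω)) ∈ lpBigO E μ r 0 := by
  simpa using add_mem
    (lpBigO_anti hrR zero_le_one (schemeStep_sub_mem_lpBigO hrR hw hf hσ hx)) hx

theorem LipschitzC1.comp_schemeStep_sub_sub_sum_mem_lpBigO (hφ : LipschitzC1 φ)
    (hrR : ∀ j, r j ≤ R) (hw : IsIncrement 𝓕 μ r c w) (hf : LipschitzC1 f)
    (hσ : ∀ k, LipschitzC1 (σ k)) (hx : x ∈ lpBigO E μ r 0) :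
    (fun j ω => φ (schemeStep f σ (c * r j ^ 2) (x j ω) (w j ω)) - φ (x j ω)
      - ∑ k, w j ω k • fderiv ℝ φ (x j ω) (σ k (x j ω))) ∈ lpBigO V μ r 2 := by
  have hTaylor := hφ.sub_sub_fderiv_mem_lpBigO hx (schemeStep_mem_lpBigO_zero hrR hw hf hσ hx)
    (schemeStep_sub_mem_lpBigO hrR hw hf hσ hx)
  have hlin := clm_apply_mem_lpBigO (hφ.linearGrowth_fderiv.comp_mem_lpBigO_zero hx)
    (schemeStep_sub_sub_sum_mem_lpBigO hw hf hσ hx)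
  rw [zero_add] at hlin
  convert add_mem hTaylor hlin using 1
  ext j ω
  simp [map_sub, map_sum]

end OneStepExpansion

section TwoHalfSteps

variable {κ E : Type*} [Fintype κ] [NormedAddCommGroup E] [NormedSpace ℝ E]

/-- The effect, to leading order, of the Lévy area of the path which runs through `w` and then
through `w'`; it changes sign when the two increments are swapped. -/
noncomputable def levyTerm (σ : κ → E → E) (x : E) (w w' : κ → ℝ) : E :=
  ∑ j, ∑ k, (w j * w' k - w' j * w k) • milsteinCoeff σ j k x

theorem levyTerm_swap (σ : κ → E → E) (x : E) (w w' : κ → ℝ) :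
    levyTerm σ x w' w = -levyTerm σ x w w' := by
  simp [levyTerm, ← Finset.sum_neg_distrib, ← neg_smul]

theorem sum_smul_sum_smul_fderiv (σ : κ → E → E) (x : E) (w w' : κ → ℝ) :
    ∑ k, w' k • ∑ j, w j • fderiv ℝ (σ k) x (σ j x)
      = (∑ j, ∑ k, (w j * w' k + w' j * w k) • milsteinCoeff σ j k x) + levyTerm σ x w w' := by
  simp only [levyTerm, milsteinCoeff, ← Finset.sum_add_distrib, Finset.smul_sum, smul_smul,
    ← add_smul]
  rw [Finset.sum_comm]
  refine Finset.sum_congr rfl fun j _ => Finset.sum_congr rfl fun k _ => ?_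
  congr 1
  ring

variable [DecidableEq κ]

theorem noise_add (σ : κ → E → E) (s t : ℝ) (x : E) (w w' : κ → ℝ) :
    noise σ (s + t) x (w + w') = noise σ s x w + noise σ t x w'
      + ∑ j, ∑ k, (w j * w' k + w' j * w k) • milsteinCoeff σ j k x := by
  have hquad (j k : κ) : (w + w') j * (w + w') k - (if j = k then s + t else 0)
      = (w j * w k - if j = k then s else 0) + (w' j * w' k - if j = k then t else 0)
        + (w j * w' k + w' j * w k) := by
    simp only [Pi.add_apply]
    split_ifs <;> ring
  rw [noise]
  simp only [hquad]
  simp only [noise, add_smul, Finset.sum_add_distrib, Pi.add_apply]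
  abel

theorem schemeStep_schemeStep_sub (f : E → E) (σ : κ → E → E) (s t : ℝ) (x : E) (w w' : κ → ℝ) :
    schemeStep f σ t (schemeStep f σ s x w) w' - schemeStep f σ (s + t) x (w + w')
        - levyTerm σ x w w'
      = t • (f (schemeStep f σ s x w) - f x)
        + ∑ k, w' k • (σ k (schemeStep f σ s x w) - σ k x
          - ∑ j, w j • fderiv ℝ (σ k) x (σ j x))
        + ∑ j, ∑ k, (w' j * w' k - if j = k then t else 0)
          • (milsteinCoeff σ j k (schemeStep f σ s x w) - milsteinCoeff σ j k x) := by
  rw [schemeStep.eq_def f σ (s + t), noise_add, add_smul]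
  simp only [smul_sub, Finset.sum_sub_distrib, sum_smul_sum_smul_fderiv, schemeStep, noise]
  abel

theorem stronglyMeasurable_schemeStep {Ω : Type*} {m : MeasurableSpace Ω} {f : E → E}
    {σ : κ → E → E} (hf : LipschitzC1 f) (hσ : ∀ k, LipschitzC1 (σ k)) (dt : ℝ) {x : Ω → E}
    {w : Ω → κ → ℝ} (hx : StronglyMeasurable x) (hw : Measurable w) :
    StronglyMeasurable fun ω => schemeStep f σ dt (x ω) (w ω) := by
  have hcont : Continuous fun p : E × (κ → ℝ) => schemeStep f σ dt p.1 p.2 := by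
    have := hf.continuous
    have := fun k => (hσ k).continuous
    have := fun j k => (linearGrowth_milsteinCoeff hσ j k).continuous
    unfold schemeStep noise
    fun_prop
  exact hcont.comp_stronglyMeasurable (hx.prodMk hw.stronglyMeasurable)

end TwoHalfSteps

section TwoHalfStepsLp

variable {J : Type*} {Ω : J → Type*} {𝓕 : ∀ j, MeasurableSpace (Ω j)}
  {𝓐 : ∀ j, MeasurableSpace (Ω j)} [mΩ : ∀ j, MeasurableSpace (Ω j)] {μ : ∀ j, Measure (Ω j)}
  {r : J → ℝ≥0} {R : ℝ≥0} {c : ℝ} {k : ℕ} {E κ : Type*} [NormedAddCommGroup E] [NormedSpace ℝ E]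
  [CompleteSpace E] [Fintype κ] [DecidableEq κ] {w w' : ∀ j, Ω j → κ → ℝ} {σ : κ → E → E}
  {f : E → E} {x y : ∀ j, Ω j → E}

theorem pow_two_mul_smul_mem_martDiff (hY : x ∈ martDiff E 𝓕 μ r k) :
    (fun j ω => (c * (r j : ℝ) ^ 2) • x j ω) ∈ martDiff E 𝓕 μ r (2 + k) :=
  ⟨pow_two_mul_smul_mem_lpBigO hY.1, fun_smul_mem_centered _ hY.2⟩

variable [∀ j, IsProbabilityMeasure (μ j)]

theorem levyTerm_mem_martDiff (h : IsIncrementPair 𝓕 μ r c w w') (hσ : ∀ k, LipschitzC1 (σ k))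
    (hxm : ∀ j, StronglyMeasurable[𝓕 j] (x j)) (hx : x ∈ lpBigO E μ r 0) :
    (fun j ω => levyTerm σ (x j ω) (w j ω) (w' j ω)) ∈ martDiff E 𝓕 μ r 2 := by
  simp only [levyTerm]
  refine fun_sum_mem fun a => fun_sum_mem fun b => ?_
  have hh := linearGrowth_milsteinCoeff hσ a b
  exact (smul_mem_martDiff (h.sub_mem_martDiff a b) (hh.comp_mem_lpBigO_zero hx)
    fun j => hh.continuous.comp_stronglyMeasurable (hxm j) :)

theorem levyTerm_sub_mem_martDiff (h : IsIncrementPair 𝓕 μ r c w w')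
    (hσ : ∀ k, LipschitzC1 (σ k)) (hxm : ∀ j, StronglyMeasurable[𝓕 j] (x j))
    (hym : ∀ j, StronglyMeasurable[𝓕 j] (y j)) (hx : x ∈ lpBigO E μ r 0)
    (hy : y ∈ lpBigO E μ r 0) (hxy : y - x ∈ lpBigO E μ r k) :
    (fun j ω => levyTerm σ (y j ω) (w j ω) (w' j ω) - levyTerm σ (x j ω) (w j ω) (w' j ω))
      ∈ martDiff E 𝓕 μ r (2 + k) := by
  simp only [levyTerm, ← Finset.sum_sub_distrib, ← smul_sub]
  refine fun_sum_mem fun a => fun_sum_mem fun b => ?_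
  have hc := (linearGrowth_milsteinCoeff hσ a b).continuous
  exact smul_mem_martDiff (h.sub_mem_martDiff a b) (milsteinCoeff_sub_mem_lpBigO hσ hx hy hxy a b)
    fun j => (hc.comp_stronglyMeasurable (hym j)).sub (hc.comp_stronglyMeasurable (hxm j))

theorem drift_schemeStep_sub_mem_localError (hrR : ∀ j, r j ≤ R) (hw : IsIncrement 𝓕 μ r c w)
    (hf : LipschitzC1 f) (hσ : ∀ k, LipschitzC1 (σ k)) (hxm : ∀ j, StronglyMeasurable[𝓕 j] (x j))
    (hx : x ∈ lpBigO E μ r 0) :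
    (fun j ω => (c * (r j : ℝ) ^ 2) •
      (f (schemeStep f σ (c * r j ^ 2) (x j ω) (w j ω)) - f (x j ω))) ∈ localError E 𝓕 μ r 2 := by
  have hlin : (fun j ω => ∑ k, w j ω k • fderiv ℝ f (x j ω) (σ k (x j ω))) ∈
      martDiff E 𝓕 μ r 1 := by
    refine fun_sum_mem fun k => ?_
    have hk := clm_apply_mem_lpBigO (hf.linearGrowth_fderiv.comp_mem_lpBigO_zero hx)
      ((hσ k).linearGrowth.comp_mem_lpBigO_zero hx)
    exact (smul_mem_martDiff (hw.mem_martDiff k) hk fun j =>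
      (hf.linearGrowth_fderiv.continuous.clm_apply
        (hσ k).continuous).comp_stronglyMeasurable (hxm j) :)
  convert Submodule.add_mem_sup
    (pow_two_mul_smul_mem_lpBigO (c := c)
      (hf.comp_schemeStep_sub_sub_sum_mem_lpBigO hrR hw hf hσ hx))
    (pow_two_mul_smul_mem_martDiff (c := c) hlin) using 1
  ext j ω
  simp [← smul_add]

theorem sum_smul_comp_schemeStep_sub_sub_mem_martDiff (hrR : ∀ j, r j ≤ R)
    (hw : IsIncrement 𝓕 μ r c w) (hw' : IsIncrement 𝓐 μ r c w')
    (hwm : ∀ j, Measurable[𝓐 j] (w j)) (hf : LipschitzC1 f) (hσ : ∀ k, LipschitzC1 (σ k))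
    (hxm : ∀ j, StronglyMeasurable[𝓐 j] (x j)) (hx : x ∈ lpBigO E μ r 0) :
    (fun j ω => ∑ k, w' j ω k • (σ k (schemeStep f σ (c * r j ^ 2) (x j ω) (w j ω)) - σ k (x j ω)
      - ∑ a, w j ω a • fderiv ℝ (σ k) (x j ω) (σ a (x j ω)))) ∈ martDiff E 𝓐 μ r 3 := by
  refine fun_sum_mem fun k => ?_
  have h := (hσ k).comp_schemeStep_sub_sub_sum_mem_lpBigO hrR hw hf hσ hx
  refine (smul_mem_martDiff (hw'.mem_martDiff k) h fun j => ?_ :)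
  have hy := stronglyMeasurable_schemeStep hf hσ (c * r j ^ 2) (hxm j) (hwm j)
  refine (((hσ k).continuous.comp_stronglyMeasurable hy).sub
    ((hσ k).continuous.comp_stronglyMeasurable (hxm j))).sub
    (Finset.stronglyMeasurable_fun_sum _ fun a _ => ?_)
  exact ((measurable_pi_apply a).comp (hwm j)).stronglyMeasurable.smul <|
    ((hσ k).linearGrowth_fderiv.continuous.clm_apply
      (hσ a).continuous).comp_stronglyMeasurable (hxm j)

theorem sum_smul_milsteinCoeff_schemeStep_sub_mem_martDiff (hrR : ∀ j, r j ≤ R)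
    (hw : IsIncrement 𝓕 μ r c w) (hw' : IsIncrement 𝓐 μ r c w')
    (hwm : ∀ j, Measurable[𝓐 j] (w j)) (hf : LipschitzC1 f) (hσ : ∀ k, LipschitzC1 (σ k))
    (hxm : ∀ j, StronglyMeasurable[𝓐 j] (x j)) (hx : x ∈ lpBigO E μ r 0) :
    (fun j ω => ∑ a, ∑ b, (w' j ω a * w' j ω b - if a = b then c * r j ^ 2 else 0)
      • (milsteinCoeff σ a b (schemeStep f σ (c * r j ^ 2) (x j ω) (w j ω))
        - milsteinCoeff σ a b (x j ω))) ∈ martDiff E 𝓐 μ r 3 := by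
  refine fun_sum_mem fun a => fun_sum_mem fun b => ?_
  have hc := (linearGrowth_milsteinCoeff hσ a b).continuous
  have hy (j : J) := stronglyMeasurable_schemeStep hf hσ (c * r j ^ 2) (hxm j) (hwm j)
  have h := milsteinCoeff_sub_mem_lpBigO hσ hx (schemeStep_mem_lpBigO_zero hrR hw hf hσ hx)
    (schemeStep_sub_mem_lpBigO hrR hw hf hσ hx) a b
  exact (smul_mem_martDiff (hw'.mul_sub_mem_martDiff a b) h fun j =>
    (hc.comp_stronglyMeasurable (hy j)).sub (hc.comp_stronglyMeasurable (hxm j)) :)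

theorem schemeStep_schemeStep_sub_mem_localError (hrR : ∀ j, r j ≤ R)
    (h : IsIncrementPair 𝓕 μ r c w w') (hf : LipschitzC1 f) (hσ : ∀ k, LipschitzC1 (σ k))
    (hxm : ∀ j, StronglyMeasurable[𝓕 j] (x j)) (hx : x ∈ lpBigO E μ r 0) :
    (fun j ω => schemeStep f σ (c * r j ^ 2)
        (schemeStep f σ (c * r j ^ 2) (x j ω) (w j ω)) (w' j ω)
      - schemeStep f σ ((c + c) * r j ^ 2) (x j ω) ((w + w') j ω)
      - levyTerm σ (x j ω) (w j ω) (w' j ω)) ∈ localError E 𝓕 μ r 2 := by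
  have hwm (j : J) : Measurable[𝓕 j ⊔ MeasurableSpace.comap (w j) inferInstance] (w j) :=
    (comap_measurable (w j)).mono le_sup_right le_rfl
  have hxm' (j : J) := (hxm j).mono (le_sup_left (b := MeasurableSpace.comap (w j) inferInstance))
  have hlin := sum_smul_comp_schemeStep_sub_sub_mem_martDiff hrR h.left h.right hwm hf hσ hxm' hx
  have hquad :=
    sum_smul_milsteinCoeff_schemeStep_sub_mem_martDiff hrR h.left h.right hwm hf hσ hxm' hx
  refine (congrArg (· ∈ _) ?_).mp (add_mem
    (add_mem (drift_schemeStep_sub_mem_localError hrR h.left hf hσ hxm hx)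
      (Submodule.mem_sup_right (h.martDiff_le hlin)))
    (Submodule.mem_sup_right (h.martDiff_le hquad)))
  ext j ω
  rw [add_mul]
  exact (schemeStep_schemeStep_sub f σ _ _ (x j ω) (w j ω) (w' j ω)).symm

end TwoHalfStepsLp

section MidpointDefect

variable {J : Type*} {Ω : J → Type*} {𝓕 : ∀ j, MeasurableSpace (Ω j)}
  [mΩ : ∀ j, MeasurableSpace (Ω j)] {μ : ∀ j, Measure (Ω j)} {r : J → ℝ≥0} {c : ℝ}
  {E κ : Type*} [NormedAddCommGroup E] [NormedSpace ℝ E] [Fintype κ]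
  [DecidableEq κ] {w : ∀ j, Ω j → κ → ℝ} {σ : κ → E → E}
  {f : E → E} {x y : ∀ j, Ω j → E}

theorem midpoint_schemeStep_sub (f : E → E) (σ : κ → E → E) (dt : ℝ) (x y z : E) (w : κ → ℝ) :
    midpoint ℝ (schemeStep f σ dt x w) (schemeStep f σ dt y w) - schemeStep f σ dt z w
      = (midpoint ℝ x y - z) + dt • (midpoint ℝ (f x) (f y) - f z)
        + ∑ k, w k • (midpoint ℝ (σ k x) (σ k y) - σ k z)
        + ∑ j, ∑ k, (w j * w k - if j = k then dt else 0) •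
          (midpoint ℝ (milsteinCoeff σ j k x) (milsteinCoeff σ j k y) - milsteinCoeff σ j k z) := by
  simp only [schemeStep, noise, midpoint_eq_smul_add, smul_add, smul_sub, Finset.smul_sum,
    Finset.sum_add_distrib, Finset.sum_sub_distrib, smul_comm (⅟2 : ℝ)]
  abel

theorem stronglyMeasurable_midpoint {Ω : Type*} {m : MeasurableSpace Ω} {x y : Ω → E}
    (hx : StronglyMeasurable x) (hy : StronglyMeasurable y) :
    StronglyMeasurable fun ω => midpoint ℝ (x ω) (y ω) := by
  simp only [midpoint_eq_smul_add]
  exact (hx.add hy).const_smul (⅟2 : ℝ)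

theorem stronglyMeasurable_midpoint_comp_sub {Ω : Type*} {_ : MeasurableSpace Ω} {φ : E → E}
    (hφ : Continuous φ) {x y : Ω → E} (hx : StronglyMeasurable x) (hy : StronglyMeasurable y) :
    StronglyMeasurable fun ω => midpoint ℝ (φ (x ω)) (φ (y ω)) - φ (midpoint ℝ (x ω) (y ω)) :=
  (stronglyMeasurable_midpoint (hφ.comp_stronglyMeasurable hx)
    (hφ.comp_stronglyMeasurable hy)).sub
    (hφ.comp_stronglyMeasurable (stronglyMeasurable_midpoint hx hy))

variable [∀ j, IsProbabilityMeasure (μ j)] [CompleteSpace E]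

theorem midpoint_schemeStep_sub_mem_localError (hw : IsIncrement 𝓕 μ r c w) (hf : LipschitzC1 f)
    (hσ : ∀ k, LipschitzC1 (σ k)) (hxm : ∀ j, StronglyMeasurable[𝓕 j] (x j))
    (hym : ∀ j, StronglyMeasurable[𝓕 j] (y j)) (hx : x ∈ lpBigO E μ r 0)
    (hy : y ∈ lpBigO E μ r 0) (hxy : y - x ∈ lpBigO E μ r 1) :
    (fun j ω => midpoint ℝ (schemeStep f σ (c * r j ^ 2) (x j ω) (w j ω))
        (schemeStep f σ (c * r j ^ 2) (y j ω) (w j ω))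
      - schemeStep f σ (c * r j ^ 2) (midpoint ℝ (x j ω) (y j ω)) (w j ω))
      ∈ localError E 𝓕 μ r 2 := by
  have hdefect {φ : E → E} (hφ : Continuous φ) (j : J) :=
    stronglyMeasurable_midpoint_comp_sub hφ (hxm j) (hym j)
  have hlin : (fun j ω => ∑ k, w j ω k • (midpoint ℝ (σ k (x j ω)) (σ k (y j ω))
      - σ k (midpoint ℝ (x j ω) (y j ω)))) ∈ martDiff E 𝓕 μ r 3 := by
    refine fun_sum_mem fun k => ?_
    have h := (hσ k).midpoint_sub_mem_lpBigO hx hy hxy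
    exact (smul_mem_martDiff (hw.mem_martDiff k) h (hdefect (hσ k).continuous) :)
  have hquad : (fun j ω => ∑ a, ∑ b, (w j ω a * w j ω b - if a = b then c * r j ^ 2 else 0) •
      (midpoint ℝ (milsteinCoeff σ a b (x j ω)) (milsteinCoeff σ a b (y j ω))
        - milsteinCoeff σ a b (midpoint ℝ (x j ω) (y j ω)))) ∈ martDiff E 𝓕 μ r 3 := by
    refine fun_sum_mem fun a => fun_sum_mem fun b => ?_
    exact (smul_mem_martDiff (hw.mul_sub_mem_martDiff a b)
      (midpoint_milsteinCoeff_sub_mem_lpBigO hσ hx hy hxy a b)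
      (hdefect (linearGrowth_milsteinCoeff hσ a b).continuous) :)
  have hdrift := pow_two_mul_smul_mem_lpBigO (c := c) (hf.midpoint_sub_mem_lpBigO hx hy hxy :)
  refine (congrArg (· ∈ _) ?_).mp (Submodule.add_mem_sup hdrift (add_mem hlin hquad))
  ext j ω
  simp only [midpoint_schemeStep_sub, Pi.add_apply, sub_self, zero_add, add_assoc]

end MidpointDefect

section Antithetic

variable {J : Type*} {Ω : J → Type*} {N : J → ℕ}
  {𝓢 : ∀ s : Σ j, Fin (N j), MeasurableSpace (Ω s.1)}
  [mΩ : ∀ j, MeasurableSpace (Ω j)] {μ : ∀ j, Measure (Ω j)} {r : J → ℝ≥0} {T R : ℝ≥0} {c : ℝ}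
  {ι κ : Type*} [Fintype ι] [Fintype κ] [DecidableEq κ]
  {f : (ι → ℝ) → ι → ℝ} {σ : κ → (ι → ℝ) → ι → ℝ}
  {w w' : ∀ s : Σ j, Fin (N j), Ω s.1 → κ → ℝ} {X Y Z : ∀ j, ℕ → Ω j → ι → ℝ}

/-- The antithetic pair `X`, `Y` of fine paths and the coarse path `Z`, all recorded at the coarse
nodes `n ≤ N j` only. Over the step from the node `s.2`, which lasts `(c + c) * r s.1 ^ 2`, the path
`X` uses `w s` and then `w' s`, the path `Y` uses them in the opposite order, and `Z` uses their
sum; `𝓢 s` is the past of that step. -/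
structure IsAntitheticScheme (𝓢 : ∀ s : Σ j, Fin (N j), MeasurableSpace (Ω s.1))
    [mΩ : ∀ j, MeasurableSpace (Ω j)] (μ : ∀ j, Measure (Ω j)) (r : J → ℝ≥0) (c : ℝ)
    (f : (ι → ℝ) → ι → ℝ) (σ : κ → (ι → ℝ) → ι → ℝ)
    (w w' : ∀ s : Σ j, Fin (N j), Ω s.1 → κ → ℝ) (X Y Z : ∀ j, ℕ → Ω j → ι → ℝ) : Prop where
  pair : IsIncrementPair 𝓢 (fun s => μ s.1) (fun s => r s.1) c w w'
  pair_swap : IsIncrementPair 𝓢 (fun s => μ s.1) (fun s => r s.1) c w' w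
  coarse : IsIncrement 𝓢 (fun s => μ s.1) (fun s => r s.1) (c + c) (w + w')
  measurable_left : ∀ s, StronglyMeasurable[𝓢 s] (X s.1 s.2)
  measurable_right : ∀ s, StronglyMeasurable[𝓢 s] (Y s.1 s.2)
  measurable_coarse : ∀ s, StronglyMeasurable[𝓢 s] (Z s.1 s.2)
  left_mem : (fun s : Σ j, Fin (N j + 1) => X s.1 s.2) ∈
    lpBigO (ι → ℝ) (fun s => μ s.1) (fun s => r s.1) 0
  right_mem : (fun s : Σ j, Fin (N j + 1) => Y s.1 s.2) ∈
    lpBigO (ι → ℝ) (fun s => μ s.1) (fun s => r s.1) 0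
  coarse_mem : (fun s : Σ j, Fin (N j + 1) => Z s.1 s.2) ∈
    lpBigO (ι → ℝ) (fun s => μ s.1) (fun s => r s.1) 0
  left_zero : ∀ j, X j 0 = Z j 0
  right_zero : ∀ j, Y j 0 = Z j 0
  left_succ : ∀ s ω, X s.1 (s.2 + 1) ω = schemeStep f σ (c * r s.1 ^ 2)
    (schemeStep f σ (c * r s.1 ^ 2) (X s.1 s.2 ω) (w s ω)) (w' s ω)
  right_succ : ∀ s ω, Y s.1 (s.2 + 1) ω = schemeStep f σ (c * r s.1 ^ 2)
    (schemeStep f σ (c * r s.1 ^ 2) (Y s.1 s.2 ω) (w' s ω)) (w s ω)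
  coarse_succ : ∀ s ω, Z s.1 (s.2 + 1) ω
    = schemeStep f σ ((c + c) * r s.1 ^ 2) (Z s.1 s.2 ω) ((w + w') s ω)

theorem localError_anti {J : Type*} {Ω : J → Type*} {𝓕 : ∀ j, MeasurableSpace (Ω j)}
    [∀ j, MeasurableSpace (Ω j)] {μ : ∀ j, Measure (Ω j)} {r : J → ℝ≥0} (hr : ∀ j, r j ≤ R)
    {E : Type*} [NormedAddCommGroup E] [NormedSpace ℝ E] [CompleteSpace E] {k l : ℕ}
    (hkl : k ≤ l) : localError E 𝓕 μ r l ≤ localError E 𝓕 μ r k :=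
  sup_le_sup (lpBigO_anti hr (by omega)) (inf_le_inf_right _ (lpBigO_anti hr (by omega)))

theorem castSucc_mem_boundedInLp {E : Type*} [NormedAddCommGroup E] [NormedSpace ℝ E]
    {k : ℕ} {D : ∀ j, ℕ → Ω j → E} (hD : (fun s : Σ j, Fin (N j + 1) => D s.1 s.2) ∈
      lpBigO E (fun s => μ s.1) (fun s => r s.1) k) :
    (fun s : Σ j, Fin (N j) => D s.1 s.2) ∈ lpBigO E (fun s => μ s.1) (fun s => r s.1) k :=
  comp_mem_boundedInLp (fun s : Σ j, Fin (N j) => (⟨s.1, s.2.castSucc⟩ : Σ j, Fin (N j + 1))) hD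

namespace IsAntitheticScheme

theorem swap (h : IsAntitheticScheme 𝓢 μ r c f σ w w' X Y Z) :
    IsAntitheticScheme 𝓢 μ r c f σ w' w Y X Z where
  pair := h.pair_swap
  pair_swap := h.pair
  coarse := add_comm w w' ▸ h.coarse
  measurable_left := h.measurable_right
  measurable_right := h.measurable_left
  measurable_coarse := h.measurable_coarse
  left_mem := h.right_mem
  right_mem := h.left_mem
  coarse_mem := h.coarse_mem
  left_zero := h.right_zero
  right_zero := h.left_zero
  left_succ := h.right_succ
  right_succ := h.left_succ
  coarse_succ := add_comm w w' ▸ h.coarse_succ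

variable [∀ j, IsProbabilityMeasure (μ j)]

theorem left_succ_sub_mem_localError (h : IsAntitheticScheme 𝓢 μ r c f σ w w' X Y Z)
    (hrR : ∀ j, r j ≤ R) (hf : LipschitzC1 f) (hσ : ∀ k, LipschitzC1 (σ k)) :
    (fun s ω => X s.1 (s.2 + 1) ω
      - schemeStep f σ ((c + c) * r s.1 ^ 2) (X s.1 s.2 ω) ((w + w') s ω)
      - levyTerm σ (X s.1 s.2 ω) (w s ω) (w' s ω))
      ∈ localError (ι → ℝ) 𝓢 (fun s => μ s.1) (fun s => r s.1) 2 := by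
  simp only [h.left_succ]
  exact schemeStep_schemeStep_sub_mem_localError (fun s => hrR s.1) h.pair hf hσ h.measurable_left
    (castSucc_mem_boundedInLp h.left_mem)

theorem left_sub_coarse_mem (h : IsAntitheticScheme 𝓢 μ r c f σ w w' X Y Z) (hr : ∀ j, 0 < r j)
    (hrR : ∀ j, r j ≤ R) (hN : ∀ j, N j * r j ^ 2 ≤ T) (hf : LipschitzC1 f)
    (hσ : ∀ k, LipschitzC1 (σ k)) :
    (fun s : Σ j, Fin (N j + 1) => X s.1 s.2 - Z s.1 s.2) ∈
      lpBigO (ι → ℝ) (fun s => μ s.1) (fun s => r s.1) 1 := by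
  have hX := castSucc_mem_boundedInLp h.left_mem
  have hZ := castSucc_mem_boundedInLp h.coarse_mem
  have hlevy := levyTerm_mem_martDiff h.pair hσ h.measurable_left hX
  have hlocal := localError_anti (r := fun s : Σ j, Fin (N j) => r s.1) (fun s => hrR s.1)
    one_le_two (h.left_succ_sub_mem_localError hrR hf hσ)
  have hstep : (fun s ω => X s.1 (s.2 + 1) ω
      - schemeStep f σ ((c + c) * r s.1 ^ 2) (X s.1 s.2 ω) ((w + w') s ω))
      ∈ localError (ι → ℝ) 𝓢 (fun s => μ s.1) (fun s => r s.1) 1 := by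
    refine (congrArg (· ∈ _) ?_).mp (add_mem hlocal (Submodule.mem_sup_right hlevy))
    ext s ω : 2
    exact sub_add_cancel _ _
  exact sub_mem_lpBigO_succ_of_localError (k := 0) hr hrR hN h.pair.le h.coarse hf hσ
    h.measurable_coarse h.measurable_left hZ hX (sub_mem hX hZ) h.left_zero h.coarse_succ hstep

theorem right_sub_left_mem (h : IsAntitheticScheme 𝓢 μ r c f σ w w' X Y Z) (hr : ∀ j, 0 < r j)
    (hrR : ∀ j, r j ≤ R) (hN : ∀ j, N j * r j ^ 2 ≤ T) (hf : LipschitzC1 f)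
    (hσ : ∀ k, LipschitzC1 (σ k)) :
    (fun s : Σ j, Fin (N j + 1) => Y s.1 s.2 - X s.1 s.2) ∈
      lpBigO (ι → ℝ) (fun s => μ s.1) (fun s => r s.1) 1 := by
  refine (congrArg (· ∈ _) ?_).mp (sub_mem (h.swap.left_sub_coarse_mem hr hrR hN hf hσ)
    (h.left_sub_coarse_mem hr hrR hN hf hσ))
  ext s ω i
  simp

theorem midpoint_succ_sub_mem_localError (h : IsAntitheticScheme 𝓢 μ r c f σ w w' X Y Z)
    (hr : ∀ j, 0 < r j) (hrR : ∀ j, r j ≤ R) (hN : ∀ j, N j * r j ^ 2 ≤ T) (hf : LipschitzC1 f)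
    (hσ : ∀ k, LipschitzC1 (σ k)) :
    (fun s ω => midpoint ℝ (X s.1 (s.2 + 1) ω) (Y s.1 (s.2 + 1) ω)
      - schemeStep f σ ((c + c) * r s.1 ^ 2) (midpoint ℝ (X s.1 s.2 ω) (Y s.1 s.2 ω))
        ((w + w') s ω)) ∈ localError (ι → ℝ) 𝓢 (fun s => μ s.1) (fun s => r s.1) 2 := by
  have hX := castSucc_mem_boundedInLp h.left_mem
  have hY := castSucc_mem_boundedInLp h.right_mem
  have hYX := castSucc_mem_boundedInLp (D := fun j n => Y j n - X j n)
    (h.right_sub_left_mem hr hrR hN hf hσ)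
  have hlocal := fun_midpoint_mem (h.left_succ_sub_mem_localError hrR hf hσ)
    (h.swap.left_succ_sub_mem_localError hrR hf hσ)
  have hlevy := Submodule.smul_mem _ (-⅟2 : ℝ)
    (levyTerm_sub_mem_martDiff h.pair hσ h.measurable_left h.measurable_right hX hY hYX)
  have hdefect := midpoint_schemeStep_sub_mem_localError h.coarse hf hσ h.measurable_left
    h.measurable_right hX hY hYX
  refine (congrArg (· ∈ _) ?_).mp (add_mem (add_mem hlocal hdefect)
    (Submodule.mem_sup_right hlevy))
  ext s ω : 2
  simp only [Pi.add_apply, Pi.smul_apply, midpoint_eq_smul_add, add_comm (w' s ω),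
    levyTerm_swap σ (Y s.1 s.2 ω) (w s ω) (w' s ω)]
  module

theorem midpoint_sub_coarse_mem (h : IsAntitheticScheme 𝓢 μ r c f σ w w' X Y Z)
    (hr : ∀ j, 0 < r j) (hrR : ∀ j, r j ≤ R) (hN : ∀ j, N j * r j ^ 2 ≤ T) (hf : LipschitzC1 f)
    (hσ : ∀ k, LipschitzC1 (σ k)) :
    (fun (s : Σ j, Fin (N j + 1)) ω => midpoint ℝ (X s.1 s.2 ω) (Y s.1 s.2 ω) - Z s.1 s.2 ω) ∈
      lpBigO (ι → ℝ) (fun s => μ s.1) (fun s => r s.1) 2 := by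
  have hX := castSucc_mem_boundedInLp h.left_mem
  have hY := castSucc_mem_boundedInLp h.right_mem
  have hZ := castSucc_mem_boundedInLp h.coarse_mem
  have hMZ := fun_midpoint_mem (h.left_sub_coarse_mem hr hrR hN hf hσ)
    (h.swap.left_sub_coarse_mem hr hrR hN hf hσ)
  simp only [Pi.sub_apply, ← vsub_eq_sub, ← midpoint_vsub_midpoint, midpoint_self] at hMZ
  exact sub_mem_lpBigO_succ_of_localError (k := 1)
    (Y := fun j n ω => midpoint ℝ (X j n ω) (Y j n ω)) hr hrR hN h.pair.le h.coarse hf hσ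
    h.measurable_coarse
    (fun s => stronglyMeasurable_midpoint (h.measurable_left s) (h.measurable_right s)) hZ
    (fun_midpoint_mem hX hY) (castSucc_mem_boundedInLp
      (D := fun j n ω => midpoint ℝ (X j n ω) (Y j n ω) - Z j n ω) hMZ)
    (fun j => by ext ω; simp [h.left_zero, h.right_zero]) h.coarse_succ
    (h.midpoint_succ_sub_mem_localError hr hrR hN hf hσ)

theorem half_sub_half_mem (h : IsAntitheticScheme 𝓢 μ r c f σ w w' X Y Z) (hr : ∀ j, 0 < r j)
    (hrR : ∀ j, r j ≤ R) (hN : ∀ j, N j * r j ^ 2 ≤ T) (hf : LipschitzC1 f)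
    (hσ : ∀ k, LipschitzC1 (σ k)) :
    (fun s ω => schemeStep f σ (c * r s.1 ^ 2) (Y s.1 s.2 ω) (w' s ω)
      - schemeStep f σ (c * r s.1 ^ 2) (X s.1 s.2 ω) (w s ω)) ∈
      lpBigO (ι → ℝ) (fun s => μ s.1) (fun s => r s.1) 1 := by
  have hX := schemeStep_sub_mem_lpBigO (fun s => hrR s.1) h.pair.left hf hσ
    (castSucc_mem_boundedInLp h.left_mem)
  have hY := schemeStep_sub_mem_lpBigO (fun s => hrR s.1) h.pair_swap.left hf hσ
    (castSucc_mem_boundedInLp h.right_mem)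
  have hYX := castSucc_mem_boundedInLp (D := fun j n => Y j n - X j n)
    (h.right_sub_left_mem hr hrR hN hf hσ)
  refine (congrArg (· ∈ _) ?_).mp (add_mem (sub_mem hY hX) hYX)
  ext s ω : 2
  simp only [Pi.add_apply, Pi.sub_apply]
  abel

theorem half_sub_coarse_sub_sum_mem (h : IsAntitheticScheme 𝓢 μ r c f σ w w' X Y Z)
    (hr : ∀ j, 0 < r j) (hrR : ∀ j, r j ≤ R) (hN : ∀ j, N j * r j ^ 2 ≤ T) (hf : LipschitzC1 f)
    (hσ : ∀ k, LipschitzC1 (σ k)) :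
    (fun s ω => schemeStep f σ (c * r s.1 ^ 2) (X s.1 s.2 ω) (w s ω) - X s.1 s.2 ω
      - ∑ k, w s ω k • σ k (Z s.1 s.2 ω)) ∈
      lpBigO (ι → ℝ) (fun s => μ s.1) (fun s => r s.1) 2 := by
  have hX := castSucc_mem_boundedInLp h.left_mem
  have hXZ := castSucc_mem_boundedInLp (D := fun j n => X j n - Z j n)
    (h.left_sub_coarse_mem hr hrR hN hf hσ)
  have hσXZ := fun_sum_mem fun k => smul_mem_lpBigO (h.pair.left.mem_martDiff k).1
    ((hσ k).sub_mem_lpBigO (castSucc_mem_boundedInLp h.coarse_mem) hX hXZ)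
  refine (congrArg (· ∈ _) ?_).mp (add_mem
    (schemeStep_sub_sub_sum_mem_lpBigO h.pair.left hf hσ hX) hσXZ)
  ext s ω : 2
  simp only [Pi.add_apply, smul_sub, Finset.sum_sub_distrib]
  abel

theorem midpoint_half_sub_midpoint_coarse_mem (h : IsAntitheticScheme 𝓢 μ r c f σ w w' X Y Z)
    (hr : ∀ j, 0 < r j) (hrR : ∀ j, r j ≤ R) (hN : ∀ j, N j * r j ^ 2 ≤ T) (hf : LipschitzC1 f)
    (hσ : ∀ k, LipschitzC1 (σ k)) :
    (fun s ω => midpoint ℝ (schemeStep f σ (c * r s.1 ^ 2) (X s.1 s.2 ω) (w s ω))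
        (schemeStep f σ (c * r s.1 ^ 2) (Y s.1 s.2 ω) (w' s ω))
      - midpoint ℝ (Z s.1 s.2 ω) (Z s.1 (s.2 + 1) ω)) ∈
      lpBigO (ι → ℝ) (fun s => μ s.1) (fun s => r s.1) 2 := by
  have hMZ := castSucc_mem_boundedInLp
    (D := fun j n ω => midpoint ℝ (X j n ω) (Y j n ω) - Z j n ω)
    (h.midpoint_sub_coarse_mem hr hrR hN hf hσ)
  have hfine := fun_midpoint_mem (h.half_sub_coarse_sub_sum_mem hr hrR hN hf hσ)
    (h.swap.half_sub_coarse_sub_sum_mem hr hrR hN hf hσ)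
  have hcoarse := Submodule.smul_mem _ (⅟2 : ℝ) <| schemeStep_sub_sub_sum_mem_lpBigO h.coarse hf hσ
    (castSucc_mem_boundedInLp h.coarse_mem)
  refine (congrArg (· ∈ _) ?_).mp (sub_mem (add_mem hMZ hfine) hcoarse)
  ext s ω : 2
  simp only [h.coarse_succ, Pi.add_apply, Pi.sub_apply, Pi.smul_apply, midpoint_eq_smul_add,
    invOf_eq_inv, add_smul, Finset.sum_add_distrib]
  module

end IsAntitheticScheme

end Antithetic

section GaussianIncrements

variable {J : Type*} {Ω : J → Type*} {𝓕 : ∀ j, MeasurableSpace (Ω j)}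
  [mΩ : ∀ j, MeasurableSpace (Ω j)] {μ : ∀ j, Measure (Ω j)} {r : J → ℝ≥0} {c : ℝ}

theorem mem_lpBigO_of_map_eq_gaussianReal {ξ : ∀ j, Ω j → ℝ} (hc : 0 ≤ c)
    (hξ : ∀ j, Measurable (ξ j))
    (hlaw : ∀ j, (μ j).map (ξ j) = gaussianReal 0 (c * r j ^ 2).toNNReal) :
    ξ ∈ lpBigO ℝ μ r 1 := by
  refine ⟨fun j => (hξ j).aestronglyMeasurable, fun q => ⟨(√c).toNNReal
    * (eLpNorm id q (gaussianReal 0 1)).toNNReal, fun j => le_of_eq ?_⟩⟩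
  have hscale : gaussianReal 0 (c * r j ^ 2).toNNReal
      = (gaussianReal 0 1).map (√c * r j * ·) := by
    rw [gaussianReal_map_const_mul, mul_zero, mul_one]
    congr 1
    ext
    simp [mul_pow, Real.sq_sqrt hc, Real.coe_toNNReal _ (show 0 ≤ c * (r j : ℝ) ^ 2 by positivity)]
  calc eLpNorm (ξ j) q (μ j)
      = eLpNorm id q ((μ j).map (ξ j)) := by
        rw [eLpNorm_map_measure aestronglyMeasurable_id (hξ j).aemeasurable, Function.id_comp]
    _ = eLpNorm ((√c * r j) • id) q (gaussianReal 0 1) := by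
        rw [hlaw, hscale, eLpNorm_map_measure aestronglyMeasurable_id (by fun_prop)]
        rfl
    _ = _ := by
        rw [eLpNorm_const_smul, ENNReal.coe_mul, enorm_mul, mul_right_comm,
          ENNReal.coe_toNNReal (memLp_id_gaussianReal q).eLpNorm_ne_top,
          Real.enorm_of_nonneg (Real.sqrt_nonneg c)]
        simp [ENNReal.ofReal]

variable {κ : Type*} [DecidableEq κ] {w : ∀ j, Ω j → κ → ℝ}

theorem integral_eq_zero_of_map_eq_gaussianReal {Ω : Type*} [MeasurableSpace Ω] {μ : Measure Ω}
    {ξ : Ω → ℝ} {v : ℝ≥0} (hξ : Measurable ξ) (hlaw : μ.map ξ = gaussianReal 0 v) :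
    ∫ ω, ξ ω ∂μ = 0 := by
  rw [← integral_map hξ.aemeasurable (f := fun x : ℝ => x) aestronglyMeasurable_id, hlaw,
    integral_id_gaussianReal]

theorem integral_mul_self_of_map_eq_gaussianReal {Ω : Type*} [MeasurableSpace Ω] {μ : Measure Ω}
    {ξ : Ω → ℝ} {v : ℝ≥0} (hξ : Measurable ξ) (hlaw : μ.map ξ = gaussianReal 0 v) :
    ∫ ω, ξ ω * ξ ω ∂μ = v := by
  have hvar := variance_fun_id_gaussianReal (μ := 0) (v := v)
  rw [variance_eq_integral measurable_id'.aemeasurable, integral_id_gaussianReal] at hvar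
  rw [← integral_map hξ.aemeasurable (f := fun x : ℝ => x * x) (by fun_prop), hlaw, ← hvar]
  simp [pow_two]

theorem integral_mul_of_map_eq_gaussianReal {Ω : Type*} [MeasurableSpace Ω] {μ : Measure Ω}
    {w : Ω → κ → ℝ} {v : ℝ≥0} (hw : ∀ k, Measurable fun ω => w ω k)
    (hlaw : ∀ k, μ.map (fun ω => w ω k) = gaussianReal 0 v)
    (hind : Pairwise fun k l => (fun ω => w ω k) ⟂ᵢ[μ] fun ω => w ω l) (k l : κ) :
    ∫ ω, w ω k * w ω l ∂μ = if k = l then (v : ℝ) else 0 := by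
  split_ifs with h
  · exact h ▸ integral_mul_self_of_map_eq_gaussianReal (hw k) (hlaw k)
  · rw [(hind h).integral_fun_mul_eq_mul_integral (hw k).aestronglyMeasurable
      (hw l).aestronglyMeasurable, integral_eq_zero_of_map_eq_gaussianReal (hw k) (hlaw k),
      zero_mul]

theorem isIncrement_of_map_eq_gaussianReal [∀ j, IsProbabilityMeasure (μ j)] (hc : 0 ≤ c)
    (h𝓕 : ∀ j, 𝓕 j ≤ mΩ j) (hw : ∀ j k, Measurable fun ω => w j ω k)
    (hlaw : ∀ j k, (μ j).map (fun ω => w j ω k) = gaussianReal 0 (c * r j ^ 2).toNNReal)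
    (hind : ∀ j, Pairwise fun k l => (fun ω => w j ω k) ⟂ᵢ[μ j] fun ω => w j ω l)
    (hpast : ∀ j, Indep (MeasurableSpace.comap (w j) inferInstance) (𝓕 j) (μ j)) :
    IsIncrement 𝓕 μ r c w where
  indep := hpast
  mem_martDiff k := by
    have hk : (fun j ω => w j ω k) ∈ lpBigO ℝ μ r 1 :=
      mem_lpBigO_of_map_eq_gaussianReal hc (hw · k) (hlaw · k)
    exact ⟨hk, mem_centered_of_indep
      (fun j => (measurable_pi_lambda _ (hw j)).comap_le) h𝓕 hpast
      (fun j => ((measurable_pi_apply k).comp (comap_measurable (w j))).stronglyMeasurable)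
      (fun j => memLp_one_iff_integrable.1 (by exact_mod_cast memLp_of_mem_lpBigO hk 1 j))
      fun j => integral_eq_zero_of_map_eq_gaussianReal (hw j k) (hlaw j k)⟩
  mul_sub_mem_martDiff k l := by
    have hO (k : κ) : (fun j ω => w j ω k) ∈ lpBigO ℝ μ r 1 :=
      mem_lpBigO_of_map_eq_gaussianReal hc (hw · k) (hlaw · k)
    have hkl : (fun j ω => w j ω k * w j ω l) ∈ lpBigO ℝ μ r 2 := smul_mem_lpBigO (hO k) (hO l)
    have hconst : (fun j (_ : Ω j) => if k = l then c * (r j : ℝ) ^ 2 else 0) ∈ lpBigO ℝ μ r 2 := by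
      have := pow_two_mul_smul_mem_lpBigO (c := c)
        (const_mem_lpBigO_zero (μ := μ) (r := r) (if k = l then (1 : ℝ) else 0))
      simpa using this
    have hsub := sub_mem hkl hconst
    refine ⟨hsub, mem_centered_of_indep
      (fun j => (measurable_pi_lambda _ (hw j)).comap_le) h𝓕 hpast
      (fun j => ?_) (fun j => memLp_one_iff_integrable.1
        (by exact_mod_cast memLp_of_mem_lpBigO hsub 1 j)) fun j => ?_⟩
    · exact ((show Measurable fun v : κ → ℝ => v k * v l - if k = l then c * (r j : ℝ) ^ 2 else 0 by
        fun_prop).comp (comap_measurable _)).stronglyMeasurable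
    · rw [integral_sub (memLp_one_iff_integrable.1
          (by exact_mod_cast memLp_of_mem_lpBigO hkl 1 j)) (integrable_const _),
        integral_mul_of_map_eq_gaussianReal (hw j) (hlaw j) (hind j) k l,
        Real.coe_toNNReal _ (by positivity)]
      simp

end GaussianIncrements

section SigmaAlgebras

variable {Ω I : Type*} {G : I → Ω → ℝ} {s t : Set I}

/-- The σ-algebra generated by the real random variables `G i` with `i ∈ s`. -/
abbrev sigmaOf (G : I → Ω → ℝ) (s : Set I) : MeasurableSpace Ω :=
  ⨆ i ∈ s, MeasurableSpace.comap (G i) inferInstance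

theorem sigmaOf_mono (h : s ⊆ t) : sigmaOf G s ≤ sigmaOf G t :=
  biSup_mono h

theorem sigmaOf_union : sigmaOf G (s ∪ t) = sigmaOf G s ⊔ sigmaOf G t :=
  iSup_union

theorem sigmaOf_range {κ : Type*} (e : κ → I) :
    sigmaOf G (Set.range e) = MeasurableSpace.comap (fun ω k => G (e k) ω) inferInstance := by
  simp only [sigmaOf, iSup_range, MeasurableSpace.pi, MeasurableSpace.comap_iSup,
    MeasurableSpace.comap_comp]
  rfl

theorem sigmaOf_le [mΩ : MeasurableSpace Ω] (hG : ∀ i, Measurable (G i)) : sigmaOf G s ≤ mΩ :=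
  iSup₂_le fun i _ => (hG i).comap_le

theorem indep_sigmaOf [MeasurableSpace Ω] {μ : Measure Ω} (hG : ∀ i, Measurable (G i))
    (hind : iIndepFun G μ) (hst : Disjoint s t) : Indep (sigmaOf G s) (sigmaOf G t) μ :=
  indep_iSup_of_disjoint (fun i => (hG i).comap_le) hind.iIndep hst

end SigmaAlgebras

/-- One instance of the antithetic Milstein setting on `[0, T]`, with `N` coarse steps. `W n b` is
the Brownian increment over the first (`b = false`) or second (`b = true`) half of the step `n`, and
`fine b` is the path on the fine grid that uses `W n b` before `W n (!b)`: thus `fine false` is the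
fine path and `fine true` the antithetic one. -/
structure AntitheticSetting {ι κ : Type} [Fintype ι] [Fintype κ] [DecidableEq κ] (T : ℝ≥0)
    (f : (ι → ℝ) → ι → ℝ) (σ : κ → (ι → ℝ) → ι → ℝ) (x₀ : ι → ℝ) where
  N : ℕ
  N_pos : 0 < N
  Ω : Type
  mΩ : MeasurableSpace Ω
  μ : Measure Ω
  isProbabilityMeasure : IsProbabilityMeasure μ
  W : Fin N → Bool → Ω → κ → ℝ
  measurable_W : ∀ n b k, Measurable fun ω => W n b ω k
  map_W : ∀ n b k, μ.map (fun ω => W n b ω k) = gaussianReal 0 (T / N / 2 : ℝ).toNNReal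
  iIndepFun_W : iIndepFun (fun (i : Fin N × Bool × κ) ω => W i.1 i.2.1 ω i.2.2) μ
  fine : Bool → ℕ → Ω → ι → ℝ
  coarse : ℕ → Ω → ι → ℝ
  fine_zero : ∀ b, fine b 0 = fun _ => x₀
  coarse_zero : coarse 0 = fun _ => x₀
  fine_odd : ∀ b (n : Fin N) ω,
    fine b (2 * n + 1) ω = schemeStep f σ (T / N / 2) (fine b (2 * n) ω) (W n b ω)
  fine_even : ∀ b (n : Fin N) ω,
    fine b (2 * n + 2) ω = schemeStep f σ (T / N / 2) (fine b (2 * n + 1) ω) (W n (!b) ω)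
  coarse_succ : ∀ (n : Fin N) ω,
    coarse (n + 1) ω = schemeStep f σ (T / N) (coarse n ω) (W n false ω + W n true ω)

namespace AntitheticSetting

attribute [instance] mΩ isProbabilityMeasure

variable {ι κ : Type} [Fintype ι] [Fintype κ] [DecidableEq κ] {T : ℝ≥0} {f : (ι → ℝ) → ι → ℝ}
  {σ : κ → (ι → ℝ) → ι → ℝ} {x₀ : ι → ℝ}

section Single

variable (A : AntitheticSetting T f σ x₀)

/-- The square root of the coarse step length, the unit in which all orders are measured. -/
noncomputable def r : ℝ≥0 :=
  NNReal.sqrt (T / A.N)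

theorem r_pos (hT : 0 < T) : 0 < A.r :=
  NNReal.sqrt_pos.2 (div_pos hT (Nat.cast_pos.2 A.N_pos))

theorem r_le_sqrt : A.r ≤ NNReal.sqrt T :=
  NNReal.sqrt_le_sqrt.2 (div_le_self zero_le (by exact_mod_cast A.N_pos))

theorem N_mul_r_sq : A.N * A.r ^ 2 = T := by
  rw [r, NNReal.sq_sqrt, mul_div_cancel₀ _ (Nat.cast_ne_zero.2 A.N_pos.ne')]

theorem r_sq_eq : (A.r : ℝ) ^ 2 = T / A.N :=
  mod_cast NNReal.sq_sqrt (T / A.N)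

theorem half_step_eq : (T / A.N / 2 : ℝ) = 2⁻¹ * A.r ^ 2 := by
  rw [A.r_sq_eq, div_eq_inv_mul]

/-- The σ-algebra generated by a set of scalar Brownian increments, where `(n, b, k)` stands for the
`k`-th coordinate of `W n b`. -/
abbrev info (s : Set (Fin A.N × Bool × κ)) : MeasurableSpace A.Ω :=
  sigmaOf (fun i ω => A.W i.1 i.2.1 ω i.2.2) s

variable {A} {s t : Set (Fin A.N × Bool × κ)}

theorem info_mono (h : s ⊆ t) : A.info s ≤ A.info t :=
  sigmaOf_mono h

theorem info_le : A.info s ≤ A.mΩ :=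
  sigmaOf_le fun i => A.measurable_W i.1 i.2.1 i.2.2

theorem indep_info (h : Disjoint s t) : Indep (A.info s) (A.info t) A.μ :=
  indep_sigmaOf (fun i => A.measurable_W i.1 i.2.1 i.2.2) A.iIndepFun_W h

theorem info_range (n : Fin A.N) (b : Bool) :
    A.info (Set.range fun k => (n, b, k)) = MeasurableSpace.comap (A.W n b) inferInstance :=
  sigmaOf_range _

theorem measurable_W_info {n : Fin A.N} {b : Bool} (h : ∀ k, (n, b, k) ∈ s) :
    Measurable[A.info s] (A.W n b) :=
  (comap_measurable (A.W n b)).mono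
    (info_range n b ▸ info_mono (Set.range_subset_iff.2 h)) le_rfl

end Single

theorem isIncrement_W {J : Type*} {A : J → AntitheticSetting T f σ x₀}
    {s : ∀ j, Set (Fin (A j).N × Bool × κ)} {n : ∀ j, Fin (A j).N} {b : J → Bool}
    (hs : ∀ j k, (n j, b j, k) ∉ s j) :
    IsIncrement (fun j => (A j).info (s j)) (fun j => (A j).μ) (fun j => (A j).r) 2⁻¹
      fun j => (A j).W (n j) (b j) := by
  refine isIncrement_of_map_eq_gaussianReal (by norm_num) (fun j => info_le)
    (fun j => (A j).measurable_W _ _) (fun j k => ?_) (fun j k l hkl => ?_) fun j => ?_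
  · rw [← half_step_eq]
    exact (A j).map_W _ _ k
  · exact (A j).iIndepFun_W.indepFun (i := (n j, b j, k)) (j := (n j, b j, l)) (by simpa using hkl)
  · rw [← info_range]
    exact indep_info (Set.disjoint_left.2 (Set.forall_mem_range.2 (hs j)))

section Fine

variable (A : AntitheticSetting T f σ x₀)

/-- The time, in half-steps, at which the fine path `A.fine b` uses each increment. -/
def useTime (b : Bool) (i : Fin A.N × Bool × κ) : ℕ :=
  2 * i.1 + if i.2.1 = b then 0 else 1

/-- The half-step increment used by `A.fine b` between the nodes `k` and `k + 1`. -/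
def fineIncrement (b : Bool) (k : Fin (2 * A.N)) : A.Ω → κ → ℝ :=
  A.W ⟨k / 2, by omega⟩ (if (k : ℕ) % 2 = 0 then b else !b)

theorem fine_succ (b : Bool) (k : Fin (2 * A.N)) (ω : A.Ω) :
    A.fine b (k + 1) ω
      = schemeStep f σ (2⁻¹ * A.r ^ 2) (A.fine b k ω) (A.fineIncrement b k ω) := by
  obtain ⟨k, hk⟩ := k
  rcases Nat.even_or_odd' k with ⟨n, rfl | rfl⟩
  · simpa [fineIncrement, ← half_step_eq] using A.fine_odd b ⟨n, by omega⟩ ω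
  · have hn : (2 * n + 1) / 2 = n := by omega
    simpa [fineIncrement, ← half_step_eq, hn, Nat.add_mod] using A.fine_even b ⟨n, by omega⟩ ω

theorem useTime_fineIncrement (b : Bool) (k : Fin (2 * A.N)) (a : κ) :
    A.useTime b (⟨k / 2, by omega⟩, if (k : ℕ) % 2 = 0 then b else !b, a) = k := by
  unfold useTime
  rcases Nat.mod_two_eq_zero_or_one k with h | h <;> simp [h] <;> omega

variable {A}

theorem stronglyMeasurable_fine (hf : LipschitzC1 f) (hσ : ∀ k, LipschitzC1 (σ k))
    (b : Bool) {k : ℕ} (hk : k ≤ 2 * A.N) :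
    StronglyMeasurable[A.info {i | A.useTime b i < k}] (A.fine b k) := by
  induction k with
  | zero => exact A.fine_zero b ▸ stronglyMeasurable_const
  | succ k ih =>
    have hpast : StronglyMeasurable[A.info {i | A.useTime b i < k + 1}] (A.fine b k) :=
      (ih (by omega)).mono (info_mono fun i hi => Nat.lt_succ_of_lt hi)
    have hinc : Measurable[A.info {i | A.useTime b i < k + 1}] (A.fineIncrement b ⟨k, hk⟩) :=
      measurable_W_info fun a =>
        (A.useTime_fineIncrement b ⟨k, hk⟩ a).trans_lt (Nat.lt_succ_self k)
    rw [funext (A.fine_succ b ⟨k, hk⟩)]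
    exact stronglyMeasurable_schemeStep hf hσ _ hpast hinc

theorem stronglyMeasurable_fine_two_mul (hf : LipschitzC1 f) (hσ : ∀ k, LipschitzC1 (σ k))
    (b : Bool) (n : Fin A.N) : StronglyMeasurable[A.info {i | i.1 < n}] (A.fine b (2 * n)) :=
  (stronglyMeasurable_fine hf hσ b (by omega)).mono <| info_mono fun i hi => by
    simp only [useTime, Set.mem_ofPred_eq] at hi ⊢
    omega

theorem stronglyMeasurable_coarse (hf : LipschitzC1 f) (hσ : ∀ k, LipschitzC1 (σ k))
    {n : ℕ} (hn : n ≤ A.N) : StronglyMeasurable[A.info {i | i.1 < n}] (A.coarse n) := by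
  induction n with
  | zero => exact A.coarse_zero ▸ stronglyMeasurable_const
  | succ n ih =>
    have hpast : StronglyMeasurable[A.info {i | i.1 < n + 1}] (A.coarse n) :=
      (ih (by omega)).mono (info_mono fun i hi => Nat.lt_succ_of_lt hi)
    have hW (b : Bool) : Measurable[A.info {i | i.1 < n + 1}] (A.W ⟨n, hn⟩ b) :=
      measurable_W_info fun _ => Nat.lt_succ_self n
    rw [funext (A.coarse_succ ⟨n, hn⟩)]
    exact stronglyMeasurable_schemeStep hf hσ _ hpast ((hW false).add (hW true))

end Fine

section Family

theorem fine_mem (hT : 0 < T) (hf : LipschitzC1 f) (hσ : ∀ k, LipschitzC1 (σ k)) (b : Bool) :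
    (fun s : Σ A : AntitheticSetting T f σ x₀, Fin (2 * A.N + 1) => s.1.fine b s.2) ∈
      lpBigO (ι → ℝ) (fun s => s.1.μ) (fun s => s.1.r) 0 := by
  refine scheme_mem_lpBigO_zero (J := AntitheticSetting T f σ x₀) (N := fun A => 2 * A.N)
    (T := 2 * T) (X := fun A => A.fine b) (𝓢 := fun s => s.1.info {i | s.1.useTime b i < s.2})
    (w := fun s => s.1.fineIncrement b s.2) (fun A => A.r_pos hT) (fun A => A.r_le_sqrt)
    (fun A => ?_) (fun s => info_le) (isIncrement_W fun s a => ?_) hf hσ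
    (fun s => stronglyMeasurable_fine hf hσ b s.2.2.le) ?_ fun s => s.1.fine_succ b s.2
  · rw [Nat.cast_mul, mul_assoc, A.N_mul_r_sq, Nat.cast_two]
  · exact (s.1.useTime_fineIncrement b s.2 a).not_lt
  · simpa only [fine_zero] using const_mem_lpBigO_zero x₀

theorem fine_two_mul_mem (hT : 0 < T) (hf : LipschitzC1 f) (hσ : ∀ k, LipschitzC1 (σ k))
    (b : Bool) :
    (fun s : Σ A : AntitheticSetting T f σ x₀, Fin (A.N + 1) => s.1.fine b (2 * s.2)) ∈
      lpBigO (ι → ℝ) (fun s => s.1.μ) (fun s => s.1.r) 0 :=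
  comp_mem_boundedInLp (fun s : Σ A : AntitheticSetting T f σ x₀, Fin (A.N + 1) =>
      (⟨s.1, 2 * s.2, by omega⟩ : Σ A : AntitheticSetting T f σ x₀, Fin (2 * A.N + 1)))
    (fine_mem hT hf hσ b)

theorem coarse_mem (hT : 0 < T) (hf : LipschitzC1 f) (hσ : ∀ k, LipschitzC1 (σ k))
    (hW : IsIncrement
      (fun s : Σ A : AntitheticSetting T f σ x₀, Fin A.N => s.1.info {i | i.1 < s.2})
      (fun s => s.1.μ) (fun s => s.1.r) 1
      ((fun s => s.1.W s.2 false) + fun s => s.1.W s.2 true)) :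
    (fun s : Σ A : AntitheticSetting T f σ x₀, Fin (A.N + 1) => s.1.coarse s.2) ∈
      lpBigO (ι → ℝ) (fun s => s.1.μ) (fun s => s.1.r) 0 := by
  refine scheme_mem_lpBigO_zero (X := fun A => A.coarse) (fun A => A.r_pos hT)
    (fun A => A.r_le_sqrt) (fun A => A.N_mul_r_sq.le) (fun s => info_le) hW hf hσ
    (fun s => stronglyMeasurable_coarse hf hσ s.2.2.le) ?_ fun s ω => ?_
  · simpa only [coarse_zero] using const_mem_lpBigO_zero x₀
  · simpa [r_sq_eq] using s.1.coarse_succ s.2 ω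

theorem isIncrementPair_W (b : Bool) :
    IsIncrementPair
      (fun s : Σ A : AntitheticSetting T f σ x₀, Fin A.N => s.1.info {i | i.1 < s.2})
      (fun s => s.1.μ) (fun s => s.1.r) 2⁻¹ (fun s => s.1.W s.2 b) fun s => s.1.W s.2 (!b) where
  le _ := info_le
  measurable_left s := measurable_pi_lambda _ (s.1.measurable_W s.2 b)
  left := isIncrement_W fun s _ => lt_irrefl s.2
  right := by
    simp only [← info_range, ← sigmaOf_union]
    exact isIncrement_W fun s a => by simp

theorem isIncrement_add_W :
    IsIncrement
      (fun s : Σ A : AntitheticSetting T f σ x₀, Fin A.N => s.1.info {i | i.1 < s.2})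
      (fun s => s.1.μ) (fun s => s.1.r) (2⁻¹ + 2⁻¹)
      ((fun s => s.1.W s.2 false) + fun s => s.1.W s.2 true) := by
  refine (isIncrementPair_W false).add fun s => ?_
  have hW (b : Bool) : Measurable[s.1.info {i | i.1 = s.2}] (s.1.W s.2 b) :=
    measurable_W_info fun _ => rfl
  refine indep_of_indep_of_le_left (indep_info ?_) ((hW false).add (hW true)).comap_le
  exact Set.disjoint_left.2 fun i hi => hi.not_lt

theorem isAntitheticScheme (hT : 0 < T) (hf : LipschitzC1 f) (hσ : ∀ k, LipschitzC1 (σ k)) :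
    IsAntitheticScheme (J := AntitheticSetting T f σ x₀) (N := N)
      (fun s => s.1.info {i | i.1 < s.2}) μ r 2⁻¹ f σ (fun s => s.1.W s.2 false)
      (fun s => s.1.W s.2 true) (fun A n => A.fine false (2 * n)) (fun A n => A.fine true (2 * n))
      coarse where
  pair := isIncrementPair_W false
  pair_swap := isIncrementPair_W true
  coarse := isIncrement_add_W
  measurable_left s := stronglyMeasurable_fine_two_mul hf hσ false s.2
  measurable_right s := stronglyMeasurable_fine_two_mul hf hσ true s.2
  measurable_coarse s := stronglyMeasurable_coarse hf hσ s.2.2.le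
  left_mem := fine_two_mul_mem hT hf hσ false
  right_mem := fine_two_mul_mem hT hf hσ true
  coarse_mem := coarse_mem hT hf hσ (by simpa [← two_mul] using isIncrement_add_W)
  left_zero A := (A.fine_zero false).trans A.coarse_zero.symm
  right_zero A := (A.fine_zero true).trans A.coarse_zero.symm
  left_succ s ω := by rw [mul_add_one, fine_even, fine_odd, half_step_eq, Bool.not_false]
  right_succ s ω := by rw [mul_add_one, fine_even, fine_odd, half_step_eq, Bool.not_true]
  coarse_succ s ω := by
    rw [← two_mul, mul_inv_cancel₀ two_ne_zero, one_mul, r_sq_eq]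
    exact s.1.coarse_succ s.2 ω

end Family

end AntitheticSetting

section Interpolation

variable {d : ℕ} {s t : ℝ}

theorem plInterp_sub (X Y : ℕ → Fin d → ℝ) :
    plInterp s X t - plInterp s Y t = plInterp s (fun k => X k - Y k) t := by
  simp only [plInterp]
  module

theorem midpoint_plInterp (X Y : ℕ → Fin d → ℝ) :
    midpoint ℝ (plInterp s X t) (plInterp s Y t)
      = plInterp s (fun k => midpoint ℝ (X k) (Y k)) t := by
  simp only [plInterp, midpoint_eq_smul_add]
  module

theorem plInterp_two_mul (hs : s ≠ 0) (X : ℕ → Fin d → ℝ) :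
    plInterp (2 * s) X t = plInterp s (fun k => midpoint ℝ (X (k / 2)) (X ((k + 1) / 2))) t := by
  have hfloor : ⌊t / (2 * s)⌋.toNat = ⌊t / s⌋.toNat / 2 := by
    rw [Int.floor_toNat, Int.floor_toNat, ← Nat.floor_div_ofNat]
    congr 1
    field_simp
  simp only [plInterp, hfloor, midpoint_eq_smul_add, invOf_eq_inv]
  obtain ⟨n, hn | hn⟩ := Nat.even_or_odd' ⌊t / s⌋.toNat
  · have h0 : 2 * n / 2 = n := by omega
    have h1 : (2 * n + 1) / 2 = n := by omega
    have h2 : (2 * n + 1 + 1) / 2 = n + 1 := by omega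
    rw [hn, h0, h1, h2]
    push_cast
    match_scalars <;> field_simp
    ring
  · have h1 : (2 * n + 1) / 2 = n := by omega
    have h2 : (2 * n + 1 + 1) / 2 = n + 1 := by omega
    have h3 : (2 * n + 1 + 1 + 1) / 2 = n + 1 := by omega
    rw [hn, h1, h2, h3]
    push_cast
    match_scalars <;> (field_simp; ring)

theorem exists_plInterp_eq {M : ℕ} (hs : 0 < s) (ht : t ∈ Set.Icc 0 (M * s)) :
    ∃ k l : Fin (M + 1), ∃ c ∈ Set.Icc (0 : ℝ) 1, ∀ X : ℕ → Fin d → ℝ,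
      plInterp s X t = X k + c • (X l - X k) := by
  have hM : t / s ≤ M := (div_le_iff₀ hs).2 ht.2
  have hk : (⌊t / s⌋₊ : ℝ) ≤ t / s := Nat.floor_le (div_nonneg ht.1 hs.le)
  have hk' : t / s < ⌊t / s⌋₊ + 1 := Nat.lt_floor_add_one _
  have hweight : (t - ⌊t / s⌋₊ * s) / s = t / s - ⌊t / s⌋₊ := by field_simp
  simp only [plInterp, Int.floor_toNat, hweight]
  rcases (Nat.floor_le_of_le hM).lt_or_eq with h | h
  · exact ⟨⟨⌊t / s⌋₊, by omega⟩, ⟨⌊t / s⌋₊ + 1, by omega⟩, t / s - ⌊t / s⌋₊,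
      ⟨by linarith, by linarith⟩, fun X => rfl⟩
  · -- At the right end point the node `M + 1` is read, but with weight `0`.
    have h0 : t / s - (M : ℝ) = 0 := le_antisymm (by linarith) (by rw [← h]; linarith)
    exact ⟨Fin.last M, Fin.last M, 0, ⟨le_rfl, zero_le_one⟩, fun X => by simp [h, h0]⟩

variable {J : Type*} {Ω : J → Type*} [∀ j, MeasurableSpace (Ω j)] {μ : ∀ j, Measure (Ω j)}
  {r : J → ℝ≥0} {k : ℕ} {M : J → ℕ}

theorem plInterp_mem_lpBigO {δ : J → ℝ} (hδ : ∀ j, 0 < δ j) {X : ∀ j, ℕ → Ω j → Fin d → ℝ}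
    (hX : (fun s : Σ j, Fin (M j + 1) => X s.1 s.2) ∈
      lpBigO (Fin d → ℝ) (fun s => μ s.1) (fun s => r s.1) k) :
    (fun (s : Σ j, Set.Icc (0 : ℝ) (M j * δ j)) ω =>
      plInterp (δ s.1) (fun n => X s.1 n ω) s.2) ∈
      lpBigO (Fin d → ℝ) (fun s => μ s.1) (fun s => r s.1) k := by
  choose a b c hc hint using fun s : Σ j, Set.Icc (0 : ℝ) (M j * δ j) =>
    exists_plInterp_eq (d := d) (hδ s.1) s.2.2
  have ha := comp_mem_boundedInLp (fun s => (⟨s.1, a s⟩ : Σ j, Fin (M j + 1))) hX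
  have hb := comp_mem_boundedInLp (fun s => (⟨s.1, b s⟩ : Σ j, Fin (M j + 1))) hX
  have hba := sub_mem hb ha
  simp only [hint]
  refine add_mem ha (mem_boundedInLp_of_norm_le hba (fun s => (hba.1 s).const_smul (c s)) 1
    fun s ω => ?_)
  rw [norm_smul, Real.norm_of_nonneg (hc s).1]
  exact mul_le_mul_of_nonneg_right (hc s).2 (norm_nonneg _)

theorem mem_lpBigO_of_even_of_odd {E : Type*} [NormedAddCommGroup E] [NormedSpace ℝ E]
    {D : ∀ j, ℕ → Ω j → E}
    (heven : (fun s : Σ j, Fin (M j + 1) => D s.1 (2 * s.2)) ∈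
      lpBigO E (fun s => μ s.1) (fun s => r s.1) k)
    (hodd : (fun s : Σ j, Fin (M j) => D s.1 (2 * s.2 + 1)) ∈
      lpBigO E (fun s => μ s.1) (fun s => r s.1) k) :
    (fun s : Σ j, Fin (2 * M j + 1) => D s.1 s.2) ∈
      lpBigO E (fun s => μ s.1) (fun s => r s.1) k := by
  have hcases {P : (Σ j, Fin (2 * M j + 1)) → Prop}
      (h0 : ∀ (s : Σ j, Fin (M j + 1)), P ⟨s.1, 2 * s.2, by omega⟩)
      (h1 : ∀ (s : Σ j, Fin (M j)), P ⟨s.1, 2 * s.2 + 1, by omega⟩) (s) : P s := by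
    obtain ⟨j, i, hi⟩ := s
    rcases Nat.even_or_odd' i with ⟨n, rfl | rfl⟩
    exacts [h0 ⟨j, n, by omega⟩, h1 ⟨j, n, by omega⟩]
  refine ⟨hcases heven.1 hodd.1, fun q => ?_⟩
  obtain ⟨K₀, h0⟩ := heven.2 q
  obtain ⟨K₁, h1⟩ := hodd.2 q
  refine ⟨max K₀ K₁, hcases (fun s => (h0 s).trans ?_) fun s => (h1 s).trans ?_⟩
  · gcongr; exact le_max_left _ _
  · gcongr; exact le_max_right _ _

end Interpolation

namespace AntitheticSetting

section Bounds

variable {d : ℕ} {κ : Type} [Fintype κ] [DecidableEq κ] {T : ℝ≥0}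
  {f : (Fin d → ℝ) → Fin d → ℝ} {σ : κ → (Fin d → ℝ) → Fin d → ℝ} {x₀ : Fin d → ℝ} {p : ℝ≥0}

theorem fine_sub_antithetic_mem (hT : 0 < T) (hf : LipschitzC1 f) (hσ : ∀ k, LipschitzC1 (σ k)) :
    (fun s : Σ A : AntitheticSetting T f σ x₀, Fin (2 * A.N + 1) =>
      s.1.fine false s.2 - s.1.fine true s.2) ∈
      lpBigO (Fin d → ℝ) (fun s => s.1.μ) (fun s => s.1.r) 1 := by
  have h := (isAntitheticScheme (x₀ := x₀) hT hf hσ).swap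
  refine mem_lpBigO_of_even_of_odd (J := AntitheticSetting T f σ x₀) (M := N)
    (D := fun A n => A.fine false n - A.fine true n)
    (h.right_sub_left_mem (r_pos · hT) r_le_sqrt (fun A => A.N_mul_r_sq.le) hf hσ) ?_
  refine (congrArg (· ∈ _) ?_).mp
    (h.half_sub_half_mem (r_pos · hT) r_le_sqrt (fun A => A.N_mul_r_sq.le) hf hσ)
  ext s ω : 2
  simp only [Pi.sub_apply, fine_odd, half_step_eq]

theorem midpoint_fine_sub_coarse_mem (hT : 0 < T) (hf : LipschitzC1 f)
    (hσ : ∀ k, LipschitzC1 (σ k)) :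
    (fun (s : Σ A : AntitheticSetting T f σ x₀, Fin (2 * A.N + 1)) ω =>
      midpoint ℝ (s.1.fine false s.2 ω) (s.1.fine true s.2 ω)
        - midpoint ℝ (s.1.coarse (s.2 / 2) ω) (s.1.coarse ((s.2 + 1) / 2) ω)) ∈
      lpBigO (Fin d → ℝ) (fun s => s.1.μ) (fun s => s.1.r) 2 := by
  have h := isAntitheticScheme (x₀ := x₀) hT hf hσ
  have hdiv (n : ℕ) : (2 * n + 1) / 2 = n ∧ (2 * n + 1 + 1) / 2 = n + 1 := by omega
  refine mem_lpBigO_of_even_of_odd (J := AntitheticSetting T f σ x₀) (M := N)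
    (D := fun A n ω => midpoint ℝ (A.fine false n ω) (A.fine true n ω)
      - midpoint ℝ (A.coarse (n / 2) ω) (A.coarse ((n + 1) / 2) ω))
    ((congrArg (· ∈ _) ?_).mp (h.midpoint_sub_coarse_mem (r_pos · hT) r_le_sqrt
      (fun A => A.N_mul_r_sq.le) hf hσ))
    ((congrArg (· ∈ _) ?_).mp (h.midpoint_half_sub_midpoint_coarse_mem (r_pos · hT) r_le_sqrt
      (fun A => A.N_mul_r_sq.le) hf hσ))
  · ext s ω : 2
    simp only [Nat.mul_div_cancel_left _ two_pos, hdiv, midpoint_self]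
  · ext s ω : 2
    simp only [hdiv, fine_odd, half_step_eq]

theorem exists_integral_plInterp_le (hT : 0 < T) (hp : p ≠ 0) {k : ℕ}
    {X : ∀ A : AntitheticSetting T f σ x₀, ℕ → A.Ω → Fin d → ℝ}
    (hX : (fun s : Σ A : AntitheticSetting T f σ x₀, Fin (2 * A.N + 1) => X s.1 s.2) ∈
      lpBigO (Fin d → ℝ) (fun s => s.1.μ) (fun s => s.1.r) k) :
    ∃ K : ℝ≥0, ∀ A : AntitheticSetting T f σ x₀, ∀ t ∈ Set.Icc (0 : ℝ) T,
      ∫ ω, ‖plInterp (2⁻¹ * A.r ^ 2) (fun n => X A n ω) t‖ ^ (p : ℝ) ∂A.μ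
        ≤ K * ((A.r : ℝ) ^ k) ^ (p : ℝ) := by
  obtain ⟨K, hK⟩ := integral_norm_rpow_le_of_mem_lpBigO (plInterp_mem_lpBigO
    (δ := fun A => 2⁻¹ * (A.r : ℝ) ^ 2) (fun A => by have := A.r_pos hT; positivity) hX) hp
  refine ⟨K, fun A t ht => hK ⟨A, t, ht.1, ht.2.trans_eq ?_⟩⟩
  have h : (A.N : ℝ) * (A.r : ℝ) ^ 2 = T := by exact_mod_cast A.N_mul_r_sq
  push_cast
  linarith

theorem exists_integral_fine_sub_antithetic_le (hT : 0 < T) (hp : p ≠ 0) (hf : LipschitzC1 f)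
    (hσ : ∀ k, LipschitzC1 (σ k)) :
    ∃ K : ℝ≥0, ∀ A : AntitheticSetting T f σ x₀, ∀ t ∈ Set.Icc (0 : ℝ) T,
      ∫ ω, ‖plInterp (T / A.N / 2) (A.fine false · ω) t
          - plInterp (T / A.N / 2) (A.fine true · ω) t‖ ^ (p : ℝ) ∂A.μ
        ≤ K * (T / A.N : ℝ) ^ (p / 2 : ℝ) := by
  obtain ⟨K, hK⟩ := exists_integral_plInterp_le (x₀ := x₀) hT hp
    (X := fun A n => A.fine false n - A.fine true n) (fine_sub_antithetic_mem hT hf hσ)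
  refine ⟨K, fun A t ht => ?_⟩
  have hrate : ((A.r : ℝ) ^ 2) ^ (p / 2 : ℝ) = ((A.r : ℝ) ^ 1) ^ (p : ℝ) := by
    rw [← Real.rpow_natCast_mul A.r.coe_nonneg, pow_one, Nat.cast_two,
      mul_div_cancel₀ _ two_ne_zero]
  simpa only [plInterp_sub, ← A.r_sq_eq, hrate, div_eq_inv_mul (_ ^ 2) (2 : ℝ), Pi.sub_apply]
    using hK A t ht

theorem exists_integral_mean_fine_sub_coarse_le (hT : 0 < T) (hp : p ≠ 0) (hf : LipschitzC1 f)
    (hσ : ∀ k, LipschitzC1 (σ k)) :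
    ∃ K : ℝ≥0, ∀ A : AntitheticSetting T f σ x₀, ∀ t ∈ Set.Icc (0 : ℝ) T,
      ∫ ω, ‖(2⁻¹ : ℝ) • (plInterp (T / A.N / 2) (A.fine false · ω) t
            + plInterp (T / A.N / 2) (A.fine true · ω) t)
          - plInterp (T / A.N) (A.coarse · ω) t‖ ^ (p : ℝ) ∂A.μ
        ≤ K * (T / A.N : ℝ) ^ (p : ℝ) := by
  obtain ⟨K, hK⟩ := exists_integral_plInterp_le (x₀ := x₀) hT hp
    (X := fun A n ω => midpoint ℝ (A.fine false n ω) (A.fine true n ω)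
      - midpoint ℝ (A.coarse (n / 2) ω) (A.coarse ((n + 1) / 2) ω))
    (midpoint_fine_sub_coarse_mem hT hf hσ)
  refine ⟨K, fun A t ht => ?_⟩
  have hr : 2⁻¹ * (A.r : ℝ) ^ 2 ≠ 0 := by have := A.r_pos hT; positivity
  have hcoarse (ω) : plInterp (A.r ^ 2) (A.coarse · ω) t = plInterp (2⁻¹ * A.r ^ 2)
      (fun n => midpoint ℝ (A.coarse (n / 2) ω) (A.coarse ((n + 1) / 2) ω)) t := by
    rw [← plInterp_two_mul hr (A.coarse · ω), mul_inv_cancel_left₀ two_ne_zero]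
  simpa only [← A.r_sq_eq, hcoarse, div_eq_inv_mul _ (2 : ℝ), ← invOf_eq_inv (2 : ℝ),
    ← midpoint_eq_smul_add, midpoint_plInterp, plInterp_sub] using hK A t ht

end Bounds

end AntitheticSetting

section Columns

variable {d m : ℕ} {f : (Fin d → ℝ) → Fin d → ℝ} {g : (Fin d → ℝ) → Fin d → Fin m → ℝ}

/-- The columns of a matrix-valued function, that is, the vector fields driven by the single
noises. -/
def column (g : (Fin d → ℝ) → Fin d → Fin m → ℝ) (k : Fin m) (x : Fin d → ℝ) : Fin d → ℝ :=
  fun i => g x i k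

theorem lipschitzC1_column (hg : LipschitzC1 g) (k : Fin m) : LipschitzC1 (column g k) :=
  hg.clm_comp <| ContinuousLinearMap.pi fun i =>
    (ContinuousLinearMap.proj (R := ℝ) (φ := fun _ => ℝ) k).comp
      (ContinuousLinearMap.proj (φ := fun _ => Fin m → ℝ) i)

theorem milsteinH_eq_milsteinCoeff (hg : LipschitzC1 g) (x : Fin d → ℝ) (i : Fin d)
    (j k : Fin m) : milsteinH g x i j k = milsteinCoeff (column g) j k x i := by
  have hcoord : fderiv ℝ (fun y => g y i k) x
      = (ContinuousLinearMap.proj i).comp (fderiv ℝ (column g k) x) :=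
    ((ContinuousLinearMap.proj (R := ℝ) (φ := fun _ : Fin d => ℝ) i).hasFDerivAt.comp x
      ((lipschitzC1_column hg k).differentiable x).hasFDerivAt).fderiv
  simp only [milsteinH, milsteinCoeff, hcoord, one_div, Pi.smul_apply, smul_eq_mul]
  rw [pi_eq_sum_univ' (column g j x)]
  simp [column]

theorem milsteinStep_eq_schemeStep (hg : LipschitzC1 g) :
    milsteinStep f g = schemeStep f (column g) := by
  ext dt x w i
  simp [milsteinStep, schemeStep, noise, milsteinH_eq_milsteinCoeff hg, column, mul_comm, add_assoc]

end Columns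

end AntitheticMilstein

open AntitheticMilstein NNReal in
theorem antithetic_milstein_interpolant_bounds_general
    {d m : ℕ} {T : ℝ} (hT : 0 < T) {f : (Fin d → ℝ) → Fin d → ℝ}
    {g : (Fin d → ℝ) → Fin d → Fin m → ℝ} (hf : LipschitzC1 f) (hg : LipschitzC1 g)
    (x₀ : Fin d → ℝ) {p : ℝ} (hp : 0 < p) :
    ∃ K : ℝ, ∀ N : ℕ, 1 ≤ N →
      ∀ (Ω : Type) (_ : MeasurableSpace Ω) (μ : Measure Ω), IsProbabilityMeasure μ →
      ∀ (W : Fin N → Bool → Ω → Fin m → ℝ) (Xf Xa Xc : ℕ → Ω → Fin d → ℝ),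
        (∀ n b j, Measurable fun ω => W n b ω j) →
        (∀ n b j, μ.map (fun ω => W n b ω j) = gaussianReal 0 (Real.toNNReal (T / N / 2))) →
        iIndepFun
          (fun q : Fin N × Bool × Fin m => fun ω => W q.1 q.2.1 ω q.2.2) μ →
        (∀ ω, Xf 0 ω = x₀) → (∀ ω, Xa 0 ω = x₀) → (∀ ω, Xc 0 ω = x₀) →
        (∀ (n : Fin N) ω, Xf (2 * (n : ℕ) + 1) ω
            = milsteinStep f g (T / N / 2) (Xf (2 * (n : ℕ)) ω) (W n false ω)) →
        (∀ (n : Fin N) ω, Xf (2 * (n : ℕ) + 2) ω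
            = milsteinStep f g (T / N / 2) (Xf (2 * (n : ℕ) + 1) ω) (W n true ω)) →
        (∀ (n : Fin N) ω, Xa (2 * (n : ℕ) + 1) ω
            = milsteinStep f g (T / N / 2) (Xa (2 * (n : ℕ)) ω) (W n true ω)) →
        (∀ (n : Fin N) ω, Xa (2 * (n : ℕ) + 2) ω
            = milsteinStep f g (T / N / 2) (Xa (2 * (n : ℕ) + 1) ω) (W n false ω)) →
        (∀ (n : Fin N) ω, Xc ((n : ℕ) + 1) ω
            = milsteinStep f g (T / N) (Xc (n : ℕ) ω) (W n false ω + W n true ω)) →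
        ∀ t ∈ Set.Icc (0 : ℝ) T,
          (∫ ω, ‖plInterp (T / N / 2) (fun k => Xf k ω) t
              - plInterp (T / N / 2) (fun k => Xa k ω) t‖ ^ p ∂μ)
            ≤ K * (T / N) ^ (p / 2) ∧
          (∫ ω, ‖(2⁻¹ : ℝ) • (plInterp (T / N / 2) (fun k => Xf k ω) t
                + plInterp (T / N / 2) (fun k => Xa k ω) t)
              - plInterp (T / N) (fun k => Xc k ω) t‖ ^ p ∂μ)
            ≤ K * (T / N) ^ p := by
  lift T to ℝ≥0 using hT.le
  lift p to ℝ≥0 using hp.le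
  rw [NNReal.coe_pos] at hT hp
  obtain ⟨K₁, h₁⟩ := AntitheticSetting.exists_integral_fine_sub_antithetic_le (x₀ := x₀)
    hT hp.ne' hf (lipschitzC1_column hg)
  obtain ⟨K₂, h₂⟩ := AntitheticSetting.exists_integral_mean_fine_sub_coarse_le (x₀ := x₀)
    hT hp.ne' hf (lipschitzC1_column hg)
  rw [milsteinStep_eq_schemeStep hg]
  refine ⟨max K₁ K₂, fun N hN Ω mΩ μ hμ W Xf Xa Xc hW hlaw hind hf₀ ha₀ hc₀ hf₁ hf₂ ha₁ ha₂ hc₁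
    t ht => ?_⟩
  let A : AntitheticSetting T f (column g) x₀ :=
    { N, Ω, mΩ, μ, W
      N_pos := hN
      isProbabilityMeasure := hμ
      measurable_W := hW
      map_W := hlaw
      iIndepFun_W := hind
      fine := Bool.rec Xf Xa
      coarse := Xc
      fine_zero := Bool.rec (funext hf₀) (funext ha₀)
      coarse_zero := funext hc₀
      fine_odd := Bool.rec hf₁ ha₁
      fine_even := Bool.rec hf₂ ha₂
      coarse_succ := hc₁ }
  exact ⟨(h₁ A t ht).trans (by gcongr; exact le_max_left _ _),
    (h₂ A t ht).trans (by gcongr; exact le_max_right _ _)⟩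

/-- in the antithetic Milstein setting, with `Xf(t), Xa(t)` the piecewise
linear interpolants of the fine and antithetic paths on the fine grid of spacing `Δt/2`,
`Xc(t)` that of the coarse path on the coarse grid of spacing `Δt`, and
`X̄(t) = ½(Xf(t) + Xa(t))`, for every `p ≥ 2` there is a constant `K_p`, depending only on
`p, T, f, g`, such that for every `N ≥ 1` (`Δt = T/N`) and every `t ∈ [0,T]`:
`E[‖Xf(t) − Xa(t)‖^p] ≤ K_p Δt^{p/2}` and `E[‖X̄(t) − Xc(t)‖^p] ≤ K_p Δt^p`. -/
theorem antithetic_milstein_interpolant_bounds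
    {d m : ℕ} (hd : 0 < d) (hm : 0 < m) (T : ℝ) (hT : 0 < T)
    (f : (Fin d → ℝ) → Fin d → ℝ) (g : (Fin d → ℝ) → Fin d → Fin m → ℝ)
    (hf : ContDiff ℝ 2 f) (hg : ContDiff ℝ 2 g) (Cfg : ℝ)
    (hf1 : ∀ x, ‖fderiv ℝ f x‖ ≤ Cfg) (hf2 : ∀ x, ‖iteratedFDeriv ℝ 2 f x‖ ≤ Cfg)
    (hg1 : ∀ x, ‖fderiv ℝ g x‖ ≤ Cfg) (hg2 : ∀ x, ‖iteratedFDeriv ℝ 2 g x‖ ≤ Cfg)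
    (x₀ : Fin d → ℝ) (p : ℝ) (hp : 2 ≤ p) :
    ∃ K : ℝ, ∀ N : ℕ, 1 ≤ N →
      ∀ (Ω : Type) (_ : MeasurableSpace Ω) (μ : Measure Ω), IsProbabilityMeasure μ →
      ∀ (W : Fin N → Bool → Ω → Fin m → ℝ) (Xf Xa Xc : ℕ → Ω → Fin d → ℝ),
        (∀ n b j, Measurable fun ω => W n b ω j) →
        (∀ n b j, μ.map (fun ω => W n b ω j) = gaussianReal 0 (Real.toNNReal (T / N / 2))) →
        iIndepFun
          (fun q : Fin N × Bool × Fin m => fun ω => W q.1 q.2.1 ω q.2.2) μ →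
        (∀ ω, Xf 0 ω = x₀) → (∀ ω, Xa 0 ω = x₀) → (∀ ω, Xc 0 ω = x₀) →
        (∀ (n : Fin N) ω, Xf (2 * (n : ℕ) + 1) ω
            = milsteinStep f g (T / N / 2) (Xf (2 * (n : ℕ)) ω) (W n false ω)) →
        (∀ (n : Fin N) ω, Xf (2 * (n : ℕ) + 2) ω
            = milsteinStep f g (T / N / 2) (Xf (2 * (n : ℕ) + 1) ω) (W n true ω)) →
        (∀ (n : Fin N) ω, Xa (2 * (n : ℕ) + 1) ω
            = milsteinStep f g (T / N / 2) (Xa (2 * (n : ℕ)) ω) (W n true ω)) →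
        (∀ (n : Fin N) ω, Xa (2 * (n : ℕ) + 2) ω
            = milsteinStep f g (T / N / 2) (Xa (2 * (n : ℕ) + 1) ω) (W n false ω)) →
        (∀ (n : Fin N) ω, Xc ((n : ℕ) + 1) ω
            = milsteinStep f g (T / N) (Xc (n : ℕ) ω) (W n false ω + W n true ω)) →
        ∀ t ∈ Set.Icc (0 : ℝ) T,
          (∫ ω, ‖plInterp (T / N / 2) (fun k => Xf k ω) t
              - plInterp (T / N / 2) (fun k => Xa k ω) t‖ ^ p ∂μ)
            ≤ K * (T / N) ^ (p / 2) ∧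
          (∫ ω, ‖(2⁻¹ : ℝ) • (plInterp (T / N / 2) (fun k => Xf k ω) t
                + plInterp (T / N / 2) (fun k => Xa k ω) t)
              - plInterp (T / N) (fun k => Xc k ω) t‖ ^ p ∂μ)
            ≤ K * (T / N) ^ p := by
  have hf' := AntitheticMilstein.lipschitzC1_of_contDiff hf hf1 hf2
  have hg' := AntitheticMilstein.lipschitzC1_of_contDiff hg hg1 hg2
  exact antithetic_milstein_interpolant_bounds_general hT hf' hg' x₀ (by linarith)
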